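/- arXiv:1710.10838 — 2 statements merged into one kernel-verified Lean document; each statement's English description precedes it below -/
import Mathlib

section
/- Let k > 22 and let H be a nonsplit extension 1 → M → H → A_k → 1 with M ≠ 1 and gcd(2k, |M|) = 1. Then the minimal degree P(H) of a faithful permutation representation of H satisfies P(H) ≥ k(k-1)(k-2)/2. -/
/-!
Replacing `H` by a minimal supplement of `M` turns the extension into a Frattini cover `π` of `A_k`
with nontrivial nilpotent kernel of odd order. A faithful action of degree less than
`k (k - 1) (k - 2) / 2` has a point stabilizer `S` of small index not containing the kernel. A
subgroup of `A_k` of index less than `k.choose 3` contains the pointwise stabilizer of at most two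
points (Bochert), so `π '' S` does. Small modules of odd order are central and central extensions
of odd order of `A_n`, `n ≥ 9`, split (Carmichael's presentation), whence the preimage of a
two-point stabilizer has a character of prime order that is nontrivial on the kernel.

By Shapiro's lemma that character is a value of a crossed homomorphism into the permutation module
on ordered pairs. The values of its symmetric and antisymmetric parts on the kernel form an
`A_k`-invariant submodule. If the submodule is large, all values become values on the kernel after
subtracting a coboundary, and then the crossed homomorphism vanishes by the Frattini property.
Otherwise the values on the kernel have the form `r i + t j`, and they vanish by reduction to
one-point stabilizers. So the character is trivial on the kernel, a contradiction.
-/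

open Equiv Equiv.Perm MulAction
open scoped Pointwise commutatorElement

section ThreeCycle

variable {α : Type*} [DecidableEq α] {a b c d : α}

/-- The 3-cycle `a ↦ b ↦ c ↦ a`, meaningful when `a`, `b`, `c` are distinct. -/
def threeCycle (a b c : α) : Perm α := swap a b * swap b c

lemma threeCycle_apply_left (hab : a ≠ b) (hac : a ≠ c) : threeCycle a b c a = b := by
  simp [threeCycle, swap_apply_of_ne_of_ne hab hac]

lemma threeCycle_apply_right : threeCycle a b c c = a := by
  simp [threeCycle]

lemma threeCycle_apply_of_ne (ha : d ≠ a) (hb : d ≠ b) (hc : d ≠ c) : threeCycle a b c d = d := by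
  simp [threeCycle, swap_apply_of_ne_of_ne, ha, hb, hc]

lemma inv_threeCycle : (threeCycle a b c)⁻¹ = threeCycle c b a := by
  simp [threeCycle, swap_comm]

lemma threeCycle_rotate (hab : a ≠ b) (hbc : b ≠ c) (hac : a ≠ c) :
    threeCycle a b c = threeCycle b c a := by
  ext x
  grind [threeCycle, Perm.mul_apply]

lemma conj_threeCycle (g : Perm α) :
    g * threeCycle a b c * g⁻¹ = threeCycle (g a) (g b) (g c) := by
  simp only [threeCycle, swap_apply_apply]
  group

lemma threeCycle_pow_three (hab : a ≠ b) (hbc : b ≠ c) (hac : a ≠ c) :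
    threeCycle a b c ^ 3 = 1 := by
  ext x
  grind [threeCycle, pow_succ, pow_zero, Perm.mul_apply, Perm.one_apply]

lemma threeCycle_mul_threeCycle_sq (hab : a ≠ b) (hca : c ≠ a) (hcb : c ≠ b) (hda : d ≠ a)
    (hdb : d ≠ b) (hcd : c ≠ d) : (threeCycle a b c * threeCycle a b d) ^ 2 = 1 := by
  have hmul : threeCycle a b c * threeCycle a b d = swap a c * swap b d := by
    ext x
    grind [threeCycle, Perm.mul_apply]
  ext x
  rw [hmul, sq]
  grind [Perm.mul_apply, Perm.one_apply]

lemma exists_eq_threeCycle [Fintype α] {g : Perm α} (hg : g.IsThreeCycle) :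
    ∃ a b c : α, a ≠ b ∧ b ≠ c ∧ a ≠ c ∧ g = threeCycle a b c := by
  obtain ⟨a, ha⟩ : g.support.Nonempty := by simp [← Finset.card_pos, hg.card_support]
  have hnodup := hg.nodup_iff_mem_support.2 ha
  simp only [List.nodup_cons, List.mem_cons, List.not_mem_nil, or_false, not_or] at hnodup
  exact ⟨a, g a, g (g a), hnodup.1.1, hnodup.2.1, hnodup.1.2,
    (hg.eq_swap_mul_swap_iff_mem_support.2 ha)⟩

lemma ofSubtype_threeCycle {p : α → Prop} [DecidablePred p] (a b c : Subtype p) :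
    ofSubtype (threeCycle a b c) = threeCycle (a : α) b c := by
  simp [threeCycle, map_mul, ofSubtype_swap_eq]

variable [Fintype α]

lemma threeCycle_mem_alternatingGroup (hab : a ≠ b) (hbc : b ≠ c) :
    threeCycle a b c ∈ alternatingGroup α := by
  simp [threeCycle, mem_alternatingGroup, sign_swap hab, sign_swap hbc]

lemma mem_of_forall_threeCycle_mem {G : Subgroup (Perm α)} {D : Finset α}
    (hG : ∀ a ∈ D, ∀ b ∈ D, ∀ c ∈ D, a ≠ b → b ≠ c → a ≠ c → threeCycle a b c ∈ G) {g : Perm α}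
    (hg : g ∈ alternatingGroup α) (hfix : ∀ x ∉ D, g x = x) : g ∈ G := by
  have hle : alternatingGroup D ≤ G.comap ofSubtype := by
    rw [← closure_three_cycles_eq_alternating, Subgroup.closure_le]
    intro h hh
    obtain ⟨a, b, c, hab, hbc, hac, rfl⟩ := exists_eq_threeCycle hh
    rw [SetLike.mem_coe, Subgroup.mem_comap, ofSubtype_threeCycle]
    exact hG a a.2 b b.2 c c.2 (Subtype.coe_ne_coe.2 hab) (Subtype.coe_ne_coe.2 hbc)
      (Subtype.coe_ne_coe.2 hac)
  have hmem : (⟨g, hg⟩ : alternatingGroup α) ∈ (alternatingGroup.ofSubtype D).range := by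
    rw [alternatingGroup.mem_range_ofSubtype_iff]
    intro x hx
    by_contra hxD
    exact mem_support.1 hx (hfix x hxD)
  obtain ⟨h, hh⟩ := hmem
  have := hle h.2
  rwa [Subgroup.mem_comap, ← alternatingGroup.coe_ofSubtype, hh] at this

end ThreeCycle

section Bochert

variable {α : Type*} [DecidableEq α]

lemma commutator_eq_threeCycle {x y : Perm α} {d : α} (h : ∀ z, z ≠ d → x z = z ∨ y z = z)
    (hx : x d ≠ d) (hy : y d ≠ d) :
    x d ≠ y d ∧ x * y * x⁻¹ * y⁻¹ = threeCycle (y d) d (x d) := by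
  have hxy : x (y d) = y d := (h _ hy).resolve_right (y.injective.ne hy)
  have hyx : y (x d) = x d := (h _ hx).resolve_left (x.injective.ne hx)
  have hne : x d ≠ y d := fun e => hx (y.injective (hyx.trans e))
  refine ⟨hne, ?_⟩
  rw [mul_inv_eq_iff_eq_mul, mul_inv_eq_iff_eq_mul]
  ext z
  have hxinj (u : α) : x z = x u ↔ z = u := x.injective.eq_iff
  have hyinj (u : α) : y z = y u ↔ z = u := y.injective.eq_iff
  have := h (x z)
  by_cases hxd : x z = d <;> by_cases hxz : x z = z <;> grind [threeCycle, Perm.mul_apply]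

variable [Fintype α]

/-- A base of a permutation group: a set of points whose pointwise stabilizer in `G` is trivial. -/
def IsPermBase (G : Subgroup (Perm α)) (D : Finset α) : Prop :=
  ∀ g ∈ G, (∀ x ∈ D, g x = x) → g = 1

lemma IsPermBase.factorial_le_index {G : Subgroup (Perm α)} {D : Finset α} (hD : IsPermBase G D) :
    Dᶜ.card.factorial ≤ G.index := by
  rw [← Fintype.card_coe, ← Fintype.card_perm, ← Nat.card_eq_fintype_card, Subgroup.index_eq_card]
  refine Nat.card_le_card_of_injective
    (fun g : Perm (Dᶜ : Finset α) => (QuotientGroup.mk (ofSubtype g) : Perm α ⧸ G)) ?_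
  intro g h hgh
  have hmem := QuotientGroup.eq.1 hgh
  rw [← map_inv, ← map_mul] at hmem
  have hone := hD _ hmem fun x hx => ofSubtype_apply_of_not_mem _ (by simpa using hx)
  exact inv_mul_eq_one.1 (ofSubtype_injective (hone.trans (map_one _).symm))

/-- Bochert's argument: if `D` is a base of minimal size, then `D \ {d}` is not a base, and neither
is `Dᶜ` once `D` has more than half of the points. -/
lemma exists_threeCycle_mem_of_index_lt (G : Subgroup (Perm α))
    (hG : G.index < ((Fintype.card α + 1) / 2).factorial) :
    ∃ a b c : α, a ≠ b ∧ b ≠ c ∧ a ≠ c ∧ threeCycle a b c ∈ G := by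
  obtain ⟨D, hD, hmin⟩ := exists_minimalFor_of_wellFoundedLT (IsPermBase G) Finset.card
    ⟨Finset.univ, fun g _ h => Equiv.ext fun x => h x (Finset.mem_univ x)⟩
  have hnot {D' : Finset α} (h : D'.card < D.card) :
      ∃ g ∈ G, (∀ x ∈ D', g x = x) ∧ g ≠ 1 := by
    by_contra! hbase
    exact h.not_ge (hmin hbase h.le)
  have hcompl : Dᶜ.card = Fintype.card α - D.card := Finset.card_compl D
  have hlarge : Dᶜ.card < D.card := by
    by_contra! hle
    have := hD.factorial_le_index.trans_lt hG
    exact this.not_ge (Nat.factorial_le (by omega))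
  obtain ⟨x, hxG, hx, hx1⟩ := hnot hlarge
  obtain ⟨d, hd⟩ : ∃ d, x d ≠ d := by
    by_contra! hfix
    exact hx1 (Equiv.ext hfix)
  have hdD : d ∈ D := by
    by_contra hdD
    exact hd (hx d (Finset.mem_compl.2 hdD))
  obtain ⟨y, hyG, hy, hy1⟩ := hnot (Finset.card_erase_lt_of_mem hdD)
  have hyd : y d ≠ d := fun hyd => hy1 <| hD y hyG fun z hz => by
    by_cases hzd : z = d
    · rw [hzd, hyd]
    · exact hy z (Finset.mem_erase.2 ⟨hzd, hz⟩)
  obtain ⟨hne, hcomm⟩ := commutator_eq_threeCycle (fun z hz => by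
    by_cases hzD : z ∈ D
    · exact Or.inr (hy z (Finset.mem_erase.2 ⟨hz, hzD⟩))
    · exact Or.inl (hx z (Finset.mem_compl.2 hzD))) hd hyd
  refine ⟨y d, d, x d, hyd, hd.symm, hne.symm, hcomm ▸ ?_⟩
  exact mul_mem (mul_mem (mul_mem hxG hyG) (inv_mem hxG)) (inv_mem hyG)

end Bochert

section Link

variable {α : Type*} [DecidableEq α] {G : Subgroup (Perm α)} {a b c : α}

/-- Two points are linked if they are equal or some 3-cycle of `G` maps the first to the second.
This is an equivalence relation preserved by `G`. -/
def ThreeCycleLinked (G : Subgroup (Perm α)) (a b : α) : Prop :=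
  a = b ∨ ∃ c, a ≠ b ∧ b ≠ c ∧ a ≠ c ∧ threeCycle a b c ∈ G

lemma threeCycle_map_mem (h : threeCycle a b c ∈ G) {g : Perm α} (hg : g ∈ G) :
    threeCycle (g a) (g b) (g c) ∈ G := by
  rw [← conj_threeCycle]
  exact mul_mem (mul_mem hg h) (inv_mem hg)

lemma threeCycle_symm_mem (h : threeCycle a b c ∈ G) : threeCycle c b a ∈ G := by
  rw [← inv_threeCycle]
  exact inv_mem h

namespace ThreeCycleLinked

lemma refl (G : Subgroup (Perm α)) (a : α) : ThreeCycleLinked G a a := Or.inl rfl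

lemma map (h : ThreeCycleLinked G a b) {g : Perm α} (hg : g ∈ G) :
    ThreeCycleLinked G (g a) (g b) := by
  rcases h with rfl | ⟨c, hab, hbc, hac, h⟩
  · exact refl G _
  · exact Or.inr ⟨g c, g.injective.ne hab, g.injective.ne hbc, g.injective.ne hac,
      threeCycle_map_mem h hg⟩

lemma symm (h : ThreeCycleLinked G a b) : ThreeCycleLinked G b a := by
  rcases h with rfl | ⟨c, hab, hbc, hac, h⟩
  · exact refl G _
  · refine Or.inr ⟨c, hab.symm, hac, hbc, ?_⟩
    rw [threeCycle_rotate hab.symm hac hbc, threeCycle_rotate hac hbc.symm hab]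
    exact threeCycle_symm_mem h

lemma trans (h : ThreeCycleLinked G a b) (h' : ThreeCycleLinked G b c) :
    ThreeCycleLinked G a c := by
  rcases h with rfl | ⟨u, hab, hbu, hau, hu⟩
  · exact h'
  rcases h' with rfl | ⟨v, hbc, -, hbv, hv⟩
  · exact Or.inr ⟨u, hab, hbu, hau, hu⟩
  by_cases hac : a = c
  · exact Or.inl hac
  by_cases hav : a = v
  · exact Or.inr ⟨b, hac, hbc.symm, hab, hav ▸ threeCycle_symm_mem hv⟩
  have ha := threeCycle_apply_of_ne hab hac hav
  have hb := threeCycle_apply_left hbc hbv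
  have := threeCycle_map_mem hu hv
  rw [ha, hb] at this
  exact Or.inr ⟨_, hac, fun e => hbu ((threeCycle b c v).injective (hb.trans e)),
    fun e => hau ((threeCycle b c v).injective (ha.trans e)), this⟩

lemma threeCycle_mem (hab : a ≠ b) (hbc : b ≠ c) (hac : a ≠ c)
    (h1 : ThreeCycleLinked G a b) (h2 : ThreeCycleLinked G b c) : threeCycle a b c ∈ G := by
  obtain ⟨x, -, hbx, hax, hx⟩ := h1.resolve_left hab
  by_cases hxc : x = c
  · rwa [← hxc]
  have hxb : ThreeCycleLinked G x b :=
    Or.inr ⟨a, hbx.symm, hab.symm, hax.symm, threeCycle_symm_mem hx⟩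
  obtain ⟨z, -, -, hxz, hz⟩ := (hxb.trans h2).resolve_left hxc
  by_cases hza : z = a
  · subst hza
    have := threeCycle_map_mem hx (threeCycle_symm_mem hz)
    rw [threeCycle_apply_left hac hax, threeCycle_apply_right,
      threeCycle_apply_of_ne hab.symm hbc hbx] at this
    exact threeCycle_symm_mem this
  by_cases hzb : z = b
  · subst hzb
    have := threeCycle_map_mem hx (threeCycle_symm_mem hz)
    rw [threeCycle_apply_left hbc hbx, threeCycle_apply_right,
      threeCycle_apply_of_ne hab hac hax] at this
    rw [threeCycle_rotate hab hbc hac]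
    exact threeCycle_symm_mem this
  have := threeCycle_map_mem hx hz
  rwa [threeCycle_apply_of_ne hax hac (Ne.symm hza), threeCycle_apply_of_ne hbx hbc (Ne.symm hzb),
    threeCycle_apply_left hxc hxz] at this

end ThreeCycleLinked

lemma alternatingGroup_le_of_threeCycle_mem [Fintype α] (hcard : 3 ≤ Fintype.card α) (hab : a ≠ b)
    (h : ∀ x, x ≠ a → x ≠ b → threeCycle a b x ∈ G) : alternatingGroup α ≤ G := by
  have hlinked (x : α) : ThreeCycleLinked G a x := by
    by_cases hxa : x = a
    · exact Or.inl hxa.symm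
    by_cases hxb : x = b
    · obtain ⟨y, -, hy⟩ := Finset.exists_mem_notMem_of_card_lt_card (s := {a, b})
        (t := Finset.univ) (Finset.card_le_two.trans_lt hcard)
      obtain ⟨hya, hyb⟩ : y ≠ a ∧ y ≠ b := by simpa using hy
      exact Or.inr ⟨y, hxb ▸ hab, hxb ▸ hyb.symm, hya.symm, hxb ▸ h y hya hyb⟩
    · refine Or.inr ⟨b, Ne.symm hxa, hxb, hab, ?_⟩
      rw [threeCycle_rotate (Ne.symm hxa) hxb hab]
      exact threeCycle_symm_mem (h x hxa hxb)
  intro g hg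
  refine mem_of_forall_threeCycle_mem (D := Finset.univ)
    (fun u _ v _ w _ huv hvw huw => ?_) hg (by simp)
  exact ThreeCycleLinked.threeCycle_mem huv hvw huw ((hlinked u).symm.trans (hlinked v))
    ((hlinked v).symm.trans (hlinked w))

end Link

section Binomial

lemma six_mul_choose_three (k : ℕ) : 6 * (k + 2).choose 3 = (k + 2) * (k + 1) * k := by
  have h := Nat.descFactorial_eq_factorial_mul_choose (k + 2) 3
  simp only [Nat.descFactorial, Nat.factorial] at h
  grind

lemma twentyFour_mul_choose_four (k : ℕ) :
    24 * (k + 3).choose 4 = (k + 3) * (k + 2) * (k + 1) * k := by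
  have h := Nat.descFactorial_eq_factorial_mul_choose (k + 3) 4
  simp only [Nat.descFactorial, Nat.factorial] at h
  grind

lemma sixteen_mul_pow_three_le_factorial {c : ℕ} (hc : 11 ≤ c) : 16 * c ^ 3 ≤ c.factorial := by
  induction c, hc using Nat.le_induction with
  | base => decide
  | succ c hc ih =>
    have hsq : (c + 1) ^ 2 ≤ c ^ 3 := by nlinarith [Nat.mul_le_mul_right c (Nat.mul_le_mul hc hc)]
    calc 16 * (c + 1) ^ 3 = (c + 1) * (16 * (c + 1) ^ 2) := by ring
      _ ≤ (c + 1) * c.factorial := by gcongr; lia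
      _ = (c + 1).factorial := (Nat.factorial_succ c).symm

lemma two_mul_choose_three_le_factorial {k : ℕ} (hk : 21 ≤ k) :
    2 * k.choose 3 ≤ ((k + 1) / 2).factorial := by
  refine le_trans ?_ (sixteen_mul_pow_three_le_factorial (show 11 ≤ (k + 1) / 2 by omega))
  calc 2 * k.choose 3 ≤ 2 * k ^ 3 := by gcongr; exact Nat.choose_le_pow k 3
    _ ≤ 2 * (2 * ((k + 1) / 2)) ^ 3 := by gcongr; omega
    _ = 16 * ((k + 1) / 2) ^ 3 := by ring

lemma choose_le_choose_of_le_half {k r d : ℕ} (h : r ≤ d) (hd : 2 * d ≤ k) :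
    k.choose r ≤ k.choose d := by
  induction d, h using Nat.le_induction with
  | base => exact le_rfl
  | succ d _ ih => exact (ih (by omega)).trans (Nat.choose_le_succ_of_lt_half_left (by omega))

lemma choose_le_choose_of_add_le {k r d : ℕ} (h : r ≤ d) (hd : d + r ≤ k) :
    k.choose r ≤ k.choose d := by
  by_cases h2 : 2 * d ≤ k
  · exact choose_le_choose_of_le_half h h2
  · rw [← Nat.choose_symm (show d ≤ k by omega)]
    exact choose_le_choose_of_le_half (by omega) (by omega)

lemma choose_three_le_of_choose_le_mul {k d q i : ℕ} (hk : 11 ≤ k) (hd : 5 ≤ d) (hdk : 2 * d ≤ k)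
    (hq : q * d ≤ k) (h : k.choose d ≤ i * q) : k.choose 3 ≤ i := by
  obtain ⟨m, rfl⟩ : ∃ m, k = m + 4 := ⟨k - 4, by omega⟩
  obtain ⟨e, rfl⟩ : ∃ e, d = e + 1 := ⟨d - 1, by omega⟩
  have hmul : (m + 4) * (m + 3).choose e ≤ (m + 4) * i := by
    calc (m + 4) * (m + 3).choose e = (m + 4).choose (e + 1) * (e + 1) :=
          Nat.add_one_mul_choose_eq (m + 3) e
      _ ≤ i * q * (e + 1) := by gcongr
      _ = i * (q * (e + 1)) := by ring
      _ ≤ i * (m + 4) := by gcongr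
      _ = (m + 4) * i := mul_comm _ _
  have hfour : (m + 3).choose 4 ≤ i :=
    (choose_le_choose_of_add_le (by omega) (by omega)).trans
      (Nat.le_of_mul_le_mul_left hmul (by omega))
  have hquad : 4 * (m + 4) ≤ (m + 1) * m := by nlinarith
  have hscaled : 24 * (m + 4).choose 3 ≤ 24 * (m + 3).choose 4 := by
    calc 24 * (m + 4).choose 3 = (m + 3) * (m + 2) * (4 * (m + 4)) := by
          grind [six_mul_choose_three (m + 2)]
      _ ≤ (m + 3) * (m + 2) * ((m + 1) * m) := by gcongr
      _ = 24 * (m + 3).choose 4 := by rw [twentyFour_mul_choose_four]; ring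
  omega

lemma choose_three_le_of_choose_two_mul_le_mul {k d q i : ℕ} (hk : 15 ≤ k) (hd : 3 ≤ d)
    (hdk : 2 * d + 6 ≤ k) (hq : q * d ≤ k) (h : k.choose (2 * d) ≤ i * q.choose 2) :
    k.choose 3 ≤ i := by
  by_contra! hi
  obtain ⟨m, rfl⟩ : ∃ m, k = m + 5 := ⟨k - 5, by omega⟩
  have hq3 : 3 * q ≤ m + 5 := by nlinarith
  have hq2 : 9 * (2 * q.choose 2) ≤ (m + 5) * (m + 2) := by
    calc 9 * (2 * q.choose 2) ≤ 9 * (q * (q - 1)) := by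
          rw [Nat.choose_two_right]
          exact Nat.mul_le_mul_left _ (Nat.mul_div_le _ _)
      _ = 3 * q * (3 * (q - 1)) := by ring
      _ ≤ (m + 5) * (m + 2) := Nat.mul_le_mul hq3 (by omega)
  have hsix : (m + 5).choose 3 * (m + 2).choose 3 ≤ (m + 5).choose 3 * (20 * q.choose 2) := by
    calc (m + 5).choose 3 * (m + 2).choose 3 = (m + 5).choose 6 * 20 :=
          (Nat.choose_mul (n := m + 5) (k := 6) (s := 3) (by norm_num)).symm
      _ ≤ i * q.choose 2 * 20 := by
          gcongr
          exact (choose_le_choose_of_add_le (by omega) (by omega)).trans h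
      _ = i * (20 * q.choose 2) := by ring
      _ ≤ (m + 5).choose 3 * (20 * q.choose 2) := by gcongr
  have hthree : (m + 2).choose 3 ≤ 20 * q.choose 2 :=
    Nat.le_of_mul_le_mul_left hsix (Nat.choose_pos (by omega))
  have hcubic : (m + 2) * (9 * ((m + 1) * m)) ≤ (m + 2) * (60 * (m + 5)) := by
    grind [six_mul_choose_three m]
  have := Nat.le_of_mul_le_mul_left hcubic (by omega)
  nlinarith

end Binomial

section SmallIndex

lemma card_le_index_mul_ncard_orbit {G X : Type*} [Group G] [Finite G] [MulAction G X]
    [IsPretransitive G X] (L : Subgroup G) (x : X) : Nat.card X ≤ L.index * (orbit L x).ncard := by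
  have hrel : (stabilizer G x).relIndex L = (orbit L x).ncard := by
    rw [← index_stabilizer]
    rfl
  rw [← index_stabilizer_of_transitive G x, ← hrel, mul_comm, ← Subgroup.inf_relIndex_right,
    Subgroup.relIndex_mul_index inf_le_right]
  exact Nat.le_of_dvd (Nat.pos_of_ne_zero Subgroup.index_ne_zero_of_finite)
    (Subgroup.index_dvd_of_le inf_le_left)

lemma ncard_orbit_mul_card_le {G α : Type*} [Group G] [MulAction G α] [DecidableEq α] [Fintype α]
    (D : Finset α) (hD : (orbit G D).PairwiseDisjoint id) :
    (orbit G D).ncard * D.card ≤ Fintype.card α := by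
  classical
  have hcard : ((orbit G D).toFinset.biUnion id).card = ∑ s ∈ (orbit G D).toFinset, s.card :=
    Finset.card_biUnion (by rwa [Set.coe_toFinset])
  have hconst : ∀ s ∈ (orbit G D).toFinset, s.card = D.card := by
    intro s hs
    obtain ⟨g, rfl⟩ := Set.mem_toFinset.1 hs
    exact Finset.card_smul_finset g D
  rw [Finset.sum_const_nat hconst, ← Set.ncard_eq_toFinset_card'] at hcard
  exact hcard ▸ Finset.card_le_univ _

variable {α : Type*} [DecidableEq α] [Fintype α]

lemma choose_le_index_mul_ncard (hα : 3 ≤ Fintype.card α) (L : Subgroup (alternatingGroup α))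
    (D : Finset α) {O : Set (Finset α)} (hO : orbit L D ⊆ O) :
    (Fintype.card α).choose D.card ≤ L.index * O.ncard := by
  have := Set.powersetCard.isPretransitive_alternatingGroup (α := α) (n := D.card)
    (by rwa [Nat.card_eq_fintype_card])
  let x : Set.powersetCard α D.card := ⟨D, rfl⟩
  have hle : (orbit L x).ncard ≤ O.ncard := by
    refine Set.ncard_le_ncard_of_injOn Subtype.val ?_ Subtype.val_injective.injOn O.toFinite
    rintro _ ⟨g, rfl⟩
    exact hO ⟨g, rfl⟩
  rw [← Nat.card_eq_fintype_card, ← Set.powersetCard.card]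
  exact (card_le_index_mul_ncard_orbit L x).trans (Nat.mul_le_mul_left _ hle)

lemma choose_two_mul_card_le_index_mul (hα : 3 ≤ Fintype.card α)
    (L : Subgroup (alternatingGroup α)) {D : Finset α} (hD : (orbit L D).PairwiseDisjoint id)
    (hO : 1 < (orbit L D).ncard) :
    (Fintype.card α).choose (2 * D.card) ≤ L.index * (orbit L D).ncard.choose 2 := by
  obtain ⟨D', ⟨g', rfl⟩, hne⟩ := Set.exists_ne_of_one_lt_ncard hO D
  have hcard : (D ∪ g' • D).card = 2 * D.card := by
    have hdisj : Disjoint D (g' • D) := hD (mem_orbit_self D) (mem_orbit D g') hne.symm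
    rw [Finset.card_union_of_disjoint hdisj, Finset.card_smul_finset, two_mul]
  let pairs := ((orbit L D).toFinite.toFinset.powersetCard 2).image fun P => P.biUnion id
  have hsub : orbit L (D ∪ g' • D) ⊆ pairs := by
    rintro _ ⟨g, rfl⟩
    refine Finset.mem_image.2 ⟨{g • D, g • g' • D}, Finset.mem_powersetCard.2 ⟨?_, ?_⟩, ?_⟩
    · simp [smul_smul, Set.pair_subset_iff, mem_orbit]
    · exact Finset.card_pair fun e => hne (smul_left_cancel g e).symm
    · simp [Finset.smul_finset_union]
  rw [← hcard]
  refine (choose_le_index_mul_ncard hα L _ hsub).trans (Nat.mul_le_mul_left _ ?_)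
  rw [Set.ncard_coe_finset, Set.ncard_eq_toFinset_card _ (orbit L D).toFinite,
    ← Finset.card_powersetCard]
  exact Finset.card_image_le

open Classical in
/-- The class of `a` for the relation of being linked by a 3-cycle of `L`. -/
noncomputable def linkClass (L : Subgroup (alternatingGroup α)) (a : α) : Finset α :=
  Finset.univ.filter (ThreeCycleLinked (L.map (alternatingGroup α).subtype) a)

variable {L : Subgroup (alternatingGroup α)}

lemma mem_linkClass {a b : α} :
    b ∈ linkClass L a ↔ ThreeCycleLinked (L.map (alternatingGroup α).subtype) a b := by
  simp [linkClass]

lemma mem_smul_linkClass {a b : α} (g : L) :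
    b ∈ g • linkClass L a ↔
      ThreeCycleLinked (L.map (alternatingGroup α).subtype) ((g : alternatingGroup α) • a) b := by
  have hg (h : L) : ((h : alternatingGroup α) : Perm α) ∈ L.map (alternatingGroup α).subtype :=
    Subgroup.mem_map_of_mem _ h.2
  rw [← Finset.inv_smul_mem_iff, mem_linkClass]
  constructor
  · intro h
    have := h.map (hg g)
    rwa [← Perm.smul_def _ (g⁻¹ • b), show ((g : alternatingGroup α) : Perm α) • g⁻¹ • b = b from
      smul_inv_smul g b] at this
  · intro h
    have := h.map (hg g⁻¹)
    rwa [← Perm.smul_def _ ((g : alternatingGroup α) • a),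
      show (((g⁻¹ : L) : alternatingGroup α) : Perm α) • (g : alternatingGroup α) • a = a from
      inv_smul_smul g a] at this

lemma pairwiseDisjoint_orbit_linkClass (a : α) : (orbit L (linkClass L a)).PairwiseDisjoint id := by
  rintro _ ⟨g, rfl⟩ _ ⟨h, rfl⟩ hne
  rw [Function.onFun, Finset.disjoint_left]
  intro x hgx hhx
  simp only [id, mem_smul_linkClass] at hgx hhx
  refine hne (Finset.ext fun y => ?_)
  simp only [mem_smul_linkClass]
  exact ⟨fun hy => hhx.trans (hgx.symm.trans hy), fun hy => hgx.trans (hhx.symm.trans hy)⟩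

lemma fixingSubgroup_compl_linkClass_le (a : α) :
    fixingSubgroup (alternatingGroup α) (((linkClass L a)ᶜ : Finset α) : Set α) ≤ L := by
  intro g hg
  have hlink {x y : α} (hx : x ∈ linkClass L a) (hy : y ∈ linkClass L a) :=
    (mem_linkClass.1 hx).symm.trans (mem_linkClass.1 hy)
  have hmem : (g : Perm α) ∈ L.map (alternatingGroup α).subtype := by
    refine mem_of_forall_threeCycle_mem (D := linkClass L a)
      (fun u hu v hv w hw huv hvw huw => ?_) g.2 fun x hx => ?_
    · exact ThreeCycleLinked.threeCycle_mem huv hvw huw (hlink hu hv) (hlink hv hw)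
    · exact (mem_fixingSubgroup_iff _).1 hg x (by simpa using hx)
  obtain ⟨g', hg', h⟩ := hmem
  rwa [← Subtype.ext h]

lemma exists_three_le_card_linkClass (hk : 21 ≤ Fintype.card α)
    (hL : L.index < (Fintype.card α).choose 3) : ∃ a, 3 ≤ (linkClass L a).card := by
  have hindex : (L.map (alternatingGroup α).subtype).index <
      ((Fintype.card α + 1) / 2).factorial := by
    have : Nontrivial α := Fintype.one_lt_card_iff_nontrivial.1 (by omega)
    rw [Subgroup.index_map_subtype, alternatingGroup.index_eq_two]
    have := two_mul_choose_three_le_factorial hk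
    omega
  obtain ⟨a, b, c, hab, hbc, hac, h⟩ := exists_threeCycle_mem_of_index_lt _ hindex
  have hlink : ThreeCycleLinked (L.map (alternatingGroup α).subtype) a b :=
    Or.inr ⟨c, hab, hbc, hac, h⟩
  have hlink' : ThreeCycleLinked (L.map (alternatingGroup α).subtype) b c :=
    Or.inr ⟨a, hbc, hac.symm, hab.symm, threeCycle_rotate hab hbc hac ▸ h⟩
  have hsub : {a, b, c} ⊆ linkClass L a := by
    simp [Finset.insert_subset_iff, mem_linkClass, ThreeCycleLinked.refl, hlink,
      hlink.trans hlink']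
  exact ⟨a, (Finset.card_eq_three.2 ⟨a, b, c, hab, hac, hbc, rfl⟩).symm.le.trans
    (Finset.card_le_card hsub)⟩

lemma ncard_orbit_linkClass_le_one (hk : 21 ≤ Fintype.card α)
    (hL : L.index < (Fintype.card α).choose 3) {a : α} (ha : 3 ≤ (linkClass L a).card) :
    (orbit L (linkClass L a)).ncard ≤ 1 := by
  by_contra! hq
  have hdisj := pairwiseDisjoint_orbit_linkClass (L := L) a
  have hmul := ncard_orbit_mul_card_le _ hdisj
  have hdk : 2 * (linkClass L a).card ≤ Fintype.card α := (Nat.mul_le_mul_right _ hq).trans hmul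
  rcases Nat.lt_or_ge (linkClass L a).card 5 with h5 | h5
  · exact hL.not_ge (choose_three_le_of_choose_two_mul_le_mul (by omega) ha (by omega) hmul
      (choose_two_mul_card_le_index_mul (by omega) L hdisj hq))
  · exact hL.not_ge (choose_three_le_of_choose_le_mul (by omega) h5 hdk hmul
      (choose_le_index_mul_ncard (by omega) L _ subset_rfl))

lemma eq_top_or_exists_fixingSubgroup_le (hk : 21 ≤ Fintype.card α)
    (hL : L.index < (Fintype.card α).choose 3) :
    L = ⊤ ∨ Fintype.card α ≤ L.index ∧
      ∃ T : Finset α, T.card ≤ 2 ∧ fixingSubgroup (alternatingGroup α) (T : Set α) ≤ L := by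
  obtain ⟨a, ha⟩ := exists_three_le_card_linkClass hk hL
  have hindex : (Fintype.card α).choose (linkClass L a).card ≤ L.index :=
    (choose_le_index_mul_ncard (by omega) L _ subset_rfl).trans
      ((Nat.mul_le_mul_left _ (ncard_orbit_linkClass_le_one hk hL ha)).trans (mul_one _).le)
  have hfix := fixingSubgroup_compl_linkClass_le (L := L) a
  have hcompl := Finset.card_compl (linkClass L a)
  have hle : (linkClass L a).card ≤ Fintype.card α := Finset.card_le_univ _
  have hlarge : Fintype.card α < (linkClass L a).card + 3 := by
    by_contra! hcon
    have := choose_le_choose_of_add_le ha hcon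
    omega
  by_cases heq : (linkClass L a).card = Fintype.card α
  · left
    rw [eq_top_iff]
    simpa [Finset.card_eq_iff_eq_univ _ |>.1 heq] using hfix
  · refine Or.inr ⟨?_, _, by omega, hfix⟩
    have := choose_le_choose_of_add_le (k := Fintype.card α) (r := 1) (d := (linkClass L a).card)
      (by omega) (by omega)
    rw [Nat.choose_one_right] at this
    omega

end SmallIndex

section SupportedOn

variable {H α : Type*} [Group H] [DecidableEq α] [Fintype α] {π : H →* alternatingGroup α}

/-- The subgroup of the elements of `H` that, acting on `α` through `π`, move only points of `s`.
For surjective `π` it is an extension of the alternating group of `s` by `π.ker`. -/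
def supportedOn (π : H →* alternatingGroup α) (s : Finset α) : Subgroup H :=
  (fixingSubgroup (alternatingGroup α) ((s : Set α)ᶜ)).comap π

variable {s s' : Finset α} {h : H}

lemma mem_supportedOn : h ∈ supportedOn π s ↔ ∀ x ∉ s, (π h : Perm α) x = x := by
  simp [supportedOn, mem_fixingSubgroup_iff, Subgroup.smul_def]

lemma ker_le_supportedOn (π : H →* alternatingGroup α) (s : Finset α) :
    π.ker ≤ supportedOn π s := fun h hh => by
  simp [mem_supportedOn, MonoidHom.mem_ker.1 hh]

lemma supportedOn_mono (hs : s ⊆ s') : supportedOn π s ≤ supportedOn π s' := fun _ hh =>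
  mem_supportedOn.2 fun x hx => mem_supportedOn.1 hh x fun hxs => hx (hs hxs)

lemma conj_mem_supportedOn {t : H} (ht : ∀ x ∈ s, (π t : Perm α) x ∈ s')
    (hh : h ∈ supportedOn π s) : t * h * t⁻¹ ∈ supportedOn π s' := by
  refine mem_supportedOn.2 fun x hx => ?_
  have hfix := mem_supportedOn.1 hh ((π t : Perm α)⁻¹ x) fun hxs => hx (by simpa using ht _ hxs)
  calc (π (t * h * t⁻¹) : Perm α) x
      = (π t : Perm α) ((π h : Perm α) ((π t : Perm α)⁻¹ x)) := by simp [Perm.mul_apply]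
    _ = x := by rw [hfix]; simp

end SupportedOn

section CentralKernel

variable {Q α : Type*} [Group Q] [DecidableEq α] [Fintype α] {ρ : Q →* alternatingGroup α}

/-- The part of the kernel of `ρ` that commutes with every element moving only points of `X`. -/
def kerCentralizer (ρ : Q →* alternatingGroup α) (X : Finset α) : Subgroup Q :=
  ρ.ker ⊓ Subgroup.centralizer (supportedOn ρ X : Set Q)

variable {X Y : Finset α} {u : Q}

lemma kerCentralizer_le_ker : kerCentralizer ρ X ≤ ρ.ker := inf_le_left

lemma kerCentralizer_anti (hXY : X ⊆ Y) : kerCentralizer ρ Y ≤ kerCentralizer ρ X :=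
  inf_le_inf_left _ (Subgroup.centralizer_le (supportedOn_mono hXY))

lemma conj_mem_kerCentralizer {t : Q} (ht : ∀ x ∈ Y, (ρ t : Perm α)⁻¹ x ∈ X)
    (hu : u ∈ kerCentralizer ρ X) : t * u * t⁻¹ ∈ kerCentralizer ρ Y := by
  refine ⟨ρ.normal_ker.conj_mem _ hu.1 t, Subgroup.mem_centralizer_iff.2 fun g hg => ?_⟩
  have hcomm := Subgroup.mem_centralizer_iff.1 hu.2 (t⁻¹ * g * t⁻¹⁻¹)
    (conj_mem_supportedOn (by simpa using ht) hg)
  calc g * (t * u * t⁻¹) = t * (t⁻¹ * g * t⁻¹⁻¹ * u) * t⁻¹ := by group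
    _ = t * u * t⁻¹ * g := by rw [hcomm]; group

lemma kerCentralizer_le_kerCentralizer_insert (hρ : Function.Surjective ρ) (hX : 2 ≤ X.card)
    {x : α} (hx : x ∉ X) (heq : kerCentralizer ρ (insert x X) = kerCentralizer ρ X) (y : α) :
    kerCentralizer ρ X ≤ kerCentralizer ρ (insert y X) := by
  intro u hu
  by_cases hyX : y ∈ X
  · rwa [Finset.insert_eq_of_mem hyX]
  obtain rfl | hxy := eq_or_ne x y
  · rwa [heq]
  obtain ⟨d, hd, d', hd', hdd'⟩ := Finset.one_lt_card.1 hX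
  obtain ⟨t, ht⟩ := hρ ⟨swap x y * swap d d', by
    simp [mem_alternatingGroup, sign_swap hxy, sign_swap hdd']⟩
  have ht_inv : (ρ t : Perm α)⁻¹ = ρ t :=
    inv_eq_of_mul_eq_one_right (by ext z; grind [Perm.mul_apply, Perm.one_apply])
  have hX_maps : ∀ z ∈ X, (ρ t : Perm α) z ∈ X := by grind [Perm.mul_apply]
  have hinsert_maps : ∀ z ∈ insert y X, (ρ t : Perm α) z ∈ insert x X := by
    grind [Perm.mul_apply]
  have hu' : t⁻¹ * u * t⁻¹⁻¹ ∈ kerCentralizer ρ (insert x X) :=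
    heq ▸ conj_mem_kerCentralizer (by simpa using hX_maps) hu
  convert conj_mem_kerCentralizer (ht_inv ▸ hinsert_maps) hu' using 1
  group

variable [hcomm : IsMulCommutative ρ.ker]

lemma ker_le_centralizer_of_mem_ker (hu : u ∈ ρ.ker) : ρ.ker ≤ Subgroup.centralizer {u} :=
  fun x hx => Subgroup.mem_centralizer_singleton_iff.2
    (congrArg Subtype.val (hcomm.is_comm.comm ⟨x, hx⟩ ⟨u, hu⟩))

lemma mem_center_of_map_centralizer_eq_top (hu : u ∈ ρ.ker)
    (htop : (Subgroup.centralizer {u}).map ρ = ⊤) : u ∈ Subgroup.center Q := by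
  have hcentralizer : Subgroup.centralizer {u} = ⊤ := by
    rw [← sup_eq_left.2 (ker_le_centralizer_of_mem_ker hu), ← Subgroup.comap_map_eq, htop,
      Subgroup.comap_top]
  exact Subgroup.mem_center_iff.2 fun g =>
    Subgroup.mem_centralizer_singleton_iff.1 (hcentralizer ▸ Subgroup.mem_top g)

lemma kerCentralizer_le_center_of_insert_eq (hρ : Function.Surjective ρ) (hX : 2 ≤ X.card)
    {x : α} (hx : x ∉ X) (heq : kerCentralizer ρ (insert x X) = kerCentralizer ρ X) :
    kerCentralizer ρ X ≤ Subgroup.center Q := by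
  intro u hu
  obtain ⟨d, hd, d', hd', hdd'⟩ := Finset.one_lt_card.1 hX
  have hcard : 3 ≤ Fintype.card α :=
    (Nat.succ_le_succ hX).trans
      ((Finset.card_insert_of_notMem hx).symm.le.trans (Finset.card_le_univ _))
  have hle : alternatingGroup α ≤
      ((Subgroup.centralizer {u}).map ρ).map (alternatingGroup α).subtype := by
    refine alternatingGroup_le_of_threeCycle_mem hcard hdd' fun y _ hyd => ?_
    obtain ⟨g, hg⟩ := hρ ⟨_, threeCycle_mem_alternatingGroup hdd' hyd.symm⟩
    refine ⟨ρ g, Subgroup.mem_map_of_mem _ ?_, congrArg Subtype.val hg⟩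
    refine Subgroup.mem_centralizer_singleton_iff.2 (Subgroup.mem_centralizer_iff.1
      (kerCentralizer_le_kerCentralizer_insert hρ hX hx heq y hu).2 g
      (mem_supportedOn.2 fun z hz => ?_))
    rw [hg]
    exact threeCycle_apply_of_ne (by grind) (by grind) (by grind)
  refine mem_center_of_map_centralizer_eq_top hu.1 (top_unique fun g _ => ?_)
  obtain ⟨g', hg', heq'⟩ := hle g.2
  exact Subtype.ext heq' ▸ hg'

lemma three_mul_card_le_of_lt {G : Type*} [Group G] [Finite G] {A B : Subgroup G} (hAB : A < B)
    (hodd : Odd (Nat.card B)) : 3 * Nat.card A ≤ Nat.card B := by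
  have hrel : A.relIndex B * Nat.card A = Nat.card B := by
    simpa [Subgroup.relIndex_bot_left, mul_comm] using
      Subgroup.relIndex_mul_relIndex ⊥ A B bot_le hAB.le
  have hne_one : A.relIndex B ≠ 1 := fun h => hAB.not_ge (Subgroup.relIndex_eq_one.1 h)
  have hodd_rel : Odd (A.relIndex B) := Odd.of_dvd_nat hodd (Dvd.intro _ hrel)
  rw [← hrel]
  exact Nat.mul_le_mul_right _ (by grind)

lemma three_pow_mul_card_kerCentralizer_le [Finite Q] (hρ : Function.Surjective ρ)
    (hodd : Odd (Nat.card ρ.ker)) (hX : ¬ kerCentralizer ρ X ≤ Subgroup.center Q) :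
    3 ^ (X.card - 2) * Nat.card (kerCentralizer ρ X) ≤ Nat.card ρ.ker := by
  induction X using Finset.induction_on with
  | empty => simpa only [Finset.card_empty, Nat.zero_sub, pow_zero, one_mul] using
      Subgroup.card_le_of_le kerCentralizer_le_ker
  | insert x X hx ih =>
    rw [Finset.card_insert_of_notMem hx]
    obtain hX2 | hX2 := Nat.lt_or_ge X.card 2
    · rw [show X.card + 1 - 2 = 0 by omega]
      simpa only [pow_zero, one_mul] using Subgroup.card_le_of_le kerCentralizer_le_ker
    have hanti : kerCentralizer ρ (insert x X) ≤ kerCentralizer ρ X :=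
      kerCentralizer_anti (Finset.subset_insert x X)
    have hlt : kerCentralizer ρ (insert x X) < kerCentralizer ρ X :=
      lt_of_le_of_ne hanti fun heq =>
        hX (hanti.trans (kerCentralizer_le_center_of_insert_eq hρ hX2 hx heq))
    calc 3 ^ (X.card + 1 - 2) * Nat.card (kerCentralizer ρ (insert x X))
        = 3 ^ (X.card - 2) * (3 * Nat.card (kerCentralizer ρ (insert x X))) := by
          rw [show X.card + 1 - 2 = X.card - 2 + 1 by omega, pow_succ, mul_assoc]
      _ ≤ 3 ^ (X.card - 2) * Nat.card (kerCentralizer ρ X) := by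
          gcongr
          exact three_mul_card_le_of_lt hlt
            (hodd.of_dvd_nat (Subgroup.card_dvd_of_le kerCentralizer_le_ker))
      _ ≤ Nat.card ρ.ker := ih fun h => hX (hanti.trans h)

lemma index_centralizer_le_card {G : Type*} [Group G] [Finite G] {N : Subgroup G} [hN : N.Normal]
    {u : G} (hu : u ∈ N) : (Subgroup.centralizer {u}).index ≤ Nat.card N := by
  calc (Subgroup.centralizer {u}).index
      = (stabilizer (ConjAct G) u).index := by
        rw [Subgroup.centralizer_eq_comap_stabilizer]
        exact Subgroup.index_comap_of_surjective _ ConjAct.toConjAct.surjective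
    _ = (orbit (ConjAct G) u).ncard := index_stabilizer _ _
    _ ≤ (N : Set G).ncard :=
        Set.ncard_le_ncard (by rintro _ ⟨g, rfl⟩; exact hN.conj_mem u hu _) (Set.toFinite _)

lemma succ_mul_le_two_mul_three_pow {k : ℕ} (hk : 21 ≤ k) : (k + 1) * k ≤ 2 * 3 ^ (k - 4) := by
  induction k, hk using Nat.le_induction with
  | base => decide
  | succ k hk ih =>
    rw [show k + 1 - 4 = k - 4 + 1 by omega, pow_succ]
    nlinarith

lemma succ_mul_le_two_mul_choose_three {k : ℕ} (hk : 21 ≤ k) :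
    (k + 1) * k ≤ 2 * k.choose 3 := by
  obtain ⟨m, rfl⟩ := Nat.exists_eq_add_of_le' (show 2 ≤ k by omega)
  nlinarith [six_mul_choose_three m, Nat.mul_le_mul_right m (show 19 ≤ m by omega)]

theorem ker_le_center_of_card_lt [Finite Q] (hρ : Function.Surjective ρ)
    (hα : 21 ≤ Fintype.card α) (hodd : Odd (Nat.card ρ.ker))
    (hcard : 2 * Nat.card ρ.ker < (Fintype.card α + 1) * Fintype.card α) :
    ρ.ker ≤ Subgroup.center Q := by
  intro u hu
  by_contra hu_center
  have hindex : ((Subgroup.centralizer {u}).map ρ).index < (Fintype.card α).choose 3 := by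
    have := succ_mul_le_two_mul_choose_three hα
    have := index_centralizer_le_card hu
    rw [Subgroup.index_map_eq _ hρ (ker_le_centralizer_of_mem_ker hu)]
    omega
  obtain htop | ⟨-, T, hT, hTle⟩ := eq_top_or_exists_fixingSubgroup_le hα hindex
  · exact hu_center (mem_center_of_map_centralizer_eq_top hu htop)
  have hu_mem : u ∈ kerCentralizer ρ Tᶜ := by
    refine ⟨hu, Subgroup.mem_centralizer_iff.2 fun g hg => ?_⟩
    have hmem : ρ g ∈ (Subgroup.centralizer {u}).map ρ :=
      hTle (by simpa [supportedOn] using hg)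
    rw [← Subgroup.mem_comap, Subgroup.comap_map_eq,
      sup_eq_left.2 (ker_le_centralizer_of_mem_ker hu)] at hmem
    exact Subgroup.mem_centralizer_singleton_iff.1 hmem
  have hpow : 3 ^ (Fintype.card α - 4) ≤ Nat.card ρ.ker := by
    calc 3 ^ (Fintype.card α - 4) ≤ 3 ^ (Tᶜ.card - 2) :=
          Nat.pow_le_pow_right (by norm_num) (by rw [Finset.card_compl]; omega)
      _ ≤ 3 ^ (Tᶜ.card - 2) * Nat.card (kerCentralizer ρ Tᶜ) :=
          Nat.le_mul_of_pos_right _ Nat.card_pos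
      _ ≤ Nat.card ρ.ker :=
          three_pow_mul_card_kerCentralizer_le hρ hodd fun h => hu_center (h hu_mem)
  have := succ_mul_le_two_mul_three_pow hα
  omega

end CentralKernel

section Carmichael

variable {G ι : Type*} [Group G]

lemma card_closure_le_of_mul_mem [Finite G] {S : Set G} {Y : Subgroup G} {T : Finset G}
    (hone : 1 ∈ T) (hmul : ∀ t ∈ T, ∀ z ∈ S, t * z ∈ (Y : Set G) * (T : Set G)) :
    Nat.card (Subgroup.closure S) ≤ T.card * Nat.card Y := by
  have hsub : (Subgroup.closure S : Set G) ⊆ (Y : Set G) * (T : Set G) := by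
    intro g hg
    rw [SetLike.mem_coe, ← Subgroup.mem_toSubmonoid, Subgroup.closure_toSubmonoid_of_finite] at hg
    induction hg using Submonoid.closure_induction_right with
    | one => exact ⟨1, one_mem Y, 1, hone, mul_one 1⟩
    | mul_right g _ z hz ih =>
      obtain ⟨y, hy, t, ht, rfl⟩ := ih
      obtain ⟨y', hy', t', ht', heq⟩ := hmul t ht z hz
      exact ⟨y * y', mul_mem hy hy', t', ht', by simp only [mul_assoc, ← heq]⟩
  calc Nat.card (Subgroup.closure S) ≤ ((Y : Set G) * (T : Set G)).ncard :=
        Set.ncard_le_ncard hsub (Set.toFinite _)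
    _ ≤ Nat.card Y * Nat.card (T : Set G) := Set.natCard_mul_le
    _ = T.card * Nat.card Y := by rw [mul_comm]; simp

lemma sq_eq_inv_of_pow_three_eq_one {x : G} (hx : x ^ 3 = 1) : x ^ 2 = x⁻¹ :=
  eq_inv_of_mul_eq_one_left (by rw [← pow_succ, hx])

lemma mul_eq_inv_mul_inv_of_sq_eq_one {x y : G} (hxy : (x * y) ^ 2 = 1) :
    x * y = y⁻¹ * x⁻¹ := by
  rw [← mul_inv_rev]
  exact eq_inv_of_mul_eq_one_left (by rwa [← sq])

lemma mul_inv_eq_inv_mul_inv_mul {x y : G} (hx : x ^ 3 = 1) (hyx : (y * x) ^ 2 = 1) :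
    y * x⁻¹ = x⁻¹ * (y⁻¹ * x) := by
  rw [← mul_assoc, ← mul_eq_inv_mul_inv_of_sq_eq_one hyx, ← sq_eq_inv_of_pow_three_eq_one hx, sq,
    mul_assoc]

variable [DecidableEq G]

/-- Representatives for the cosets of `⟨x i : i ∈ s⟩` in the group generated by these elements and
`y`, when all the generators satisfy the relations of Carmichael's presentation. -/
def carmichaelTransversal (x : ι → G) (s : Finset ι) (y : G) : Finset G :=
  {1, y, y⁻¹} ∪ s.image fun j => y⁻¹ * x j

variable {x : ι → G} {s : Finset ι} {y : G}

lemma mem_carmichaelTransversal {t : G} :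
    t ∈ carmichaelTransversal x s y ↔
      t = 1 ∨ t = y ∨ t = y⁻¹ ∨ ∃ j ∈ s, t = y⁻¹ * x j := by
  simp [carmichaelTransversal, eq_comm]

lemma card_carmichaelTransversal_le : (carmichaelTransversal x s y).card ≤ s.card + 3 := by
  have h3 := Finset.card_le_three (a := (1 : G)) (b := y) (c := y⁻¹)
  have himage := Finset.card_image_le (s := s) (f := fun j => y⁻¹ * x j)
  exact (Finset.card_union_le _ _).trans (by omega)

lemma carmichaelTransversal_mul_left_mem (hx : ∀ i ∈ s, x i ^ 3 = 1) (hy : y ^ 3 = 1)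
    (hxy : ∀ i ∈ s, (x i * y) ^ 2 = 1 ∧ (y * x i) ^ 2 = 1) {t : G}
    (ht : t ∈ carmichaelTransversal x s y) :
    t * y ∈ (Subgroup.closure (x '' s) : Set G) * (carmichaelTransversal x s y : Set G) := by
  simp only [Set.mem_mul, SetLike.mem_coe, mem_carmichaelTransversal] at ht ⊢
  rcases ht with rfl | rfl | rfl | ⟨j, hj, rfl⟩
  · exact ⟨1, one_mem _, y, by simp⟩
  · exact ⟨1, one_mem _, t⁻¹, by simp [← sq_eq_inv_of_pow_three_eq_one hy, sq]⟩
  · exact ⟨1, one_mem _, 1, by simp⟩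
  · refine ⟨(x j)⁻¹, inv_mem (Subgroup.subset_closure ⟨j, hj, rfl⟩), y⁻¹ * x j,
      Or.inr (Or.inr (Or.inr ⟨j, hj, rfl⟩)), ?_⟩
    rw [← mul_inv_eq_inv_mul_inv_mul (hx j hj) (hxy j hj).2, mul_assoc,
      mul_eq_inv_mul_inv_of_sq_eq_one (hxy j hj).1, ← mul_assoc, ← sq, inv_pow,
      sq_eq_inv_of_pow_three_eq_one hy, inv_inv]

lemma carmichaelTransversal_mul_right_mem (hx : ∀ i ∈ s, x i ^ 3 = 1)
    (hxx : ∀ i ∈ s, ∀ j ∈ s, i ≠ j → (x i * x j) ^ 2 = 1)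
    (hxy : ∀ i ∈ s, (x i * y) ^ 2 = 1 ∧ (y * x i) ^ 2 = 1) {t : G}
    (ht : t ∈ carmichaelTransversal x s y) {i : ι} (hi : i ∈ s) :
    t * x i ∈ (Subgroup.closure (x '' s) : Set G) * (carmichaelTransversal x s y : Set G) := by
  have hxmem {j : ι} (hj : j ∈ s) : x j ∈ Subgroup.closure (x '' s) :=
    Subgroup.subset_closure ⟨j, hj, rfl⟩
  simp only [Set.mem_mul, SetLike.mem_coe, mem_carmichaelTransversal] at ht ⊢
  rcases ht with rfl | rfl | rfl | ⟨j, hj, rfl⟩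
  · exact ⟨x i, hxmem hi, 1, by simp⟩
  · exact ⟨(x i)⁻¹, inv_mem (hxmem hi), t⁻¹, by
      simp [mul_eq_inv_mul_inv_of_sq_eq_one (hxy i hi).2]⟩
  · exact ⟨1, one_mem _, y⁻¹ * x i, Or.inr (Or.inr (Or.inr ⟨i, hi, rfl⟩)), one_mul _⟩
  · obtain rfl | hji := eq_or_ne j i
    · refine ⟨x j, hxmem hj, y, by simp, ?_⟩
      rw [mul_eq_inv_mul_inv_of_sq_eq_one (hxy j hj).1, mul_assoc, ← sq,
        sq_eq_inv_of_pow_three_eq_one (hx j hj)]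
    · refine ⟨x i * (x j)⁻¹, mul_mem (hxmem hi) (inv_mem (hxmem hj)), y⁻¹ * x j,
        Or.inr (Or.inr (Or.inr ⟨j, hj, rfl⟩)), ?_⟩
      rw [mul_assoc, ← mul_inv_eq_inv_mul_inv_mul (hx j hj) (hxy j hj).2, ← mul_assoc,
        mul_eq_inv_mul_inv_of_sq_eq_one (hxy i hi).1, mul_assoc, mul_assoc,
        mul_eq_inv_mul_inv_of_sq_eq_one (hxx j hj i hi hji)]

omit [DecidableEq G] in
/-- Carmichael's presentation: the relations `x i ^ 3 = (x i * x j) ^ 2 = 1` define `Aₘ₊₂` on `m`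
generators. -/
theorem two_mul_card_closure_image_le_factorial [Finite G] (hx : ∀ i ∈ s, x i ^ 3 = 1)
    (hxx : ∀ i ∈ s, ∀ j ∈ s, i ≠ j → (x i * x j) ^ 2 = 1) :
    2 * Nat.card (Subgroup.closure (x '' s)) ≤ (s.card + 2).factorial := by
  classical
  induction s using Finset.induction_on with
  | empty => simp
  | insert a s ha ih =>
    simp only [Finset.forall_mem_insert] at hx hxx
    have hxs : ∀ i ∈ s, ∀ j ∈ s, i ≠ j → (x i * x j) ^ 2 = 1 := fun i hi => (hxx.2 i hi).2
    have hxa (i : ι) (hi : i ∈ s) : (x i * x a) ^ 2 = 1 ∧ (x a * x i) ^ 2 = 1 :=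
      have hia : i ≠ a := fun h => ha (h ▸ hi)
      ⟨(hxx.2 i hi).1 hia, hxx.1.2 i hi hia.symm⟩
    have hcard : Nat.card (Subgroup.closure (x '' (insert a s : Finset ι))) ≤
        (carmichaelTransversal x s (x a)).card * Nat.card (Subgroup.closure (x '' s)) := by
      refine card_closure_le_of_mul_mem (mem_carmichaelTransversal.2 (Or.inl rfl)) ?_
      rintro t ht _ ⟨i, hi, rfl⟩
      obtain rfl | hi := Finset.mem_insert.1 hi
      · exact carmichaelTransversal_mul_left_mem hx.2 hx.1 hxa ht
      · exact carmichaelTransversal_mul_right_mem hx.2 hxs hxa ht hi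
    rw [Finset.card_insert_of_notMem ha, add_right_comm, Nat.factorial_succ]
    calc 2 * Nat.card (Subgroup.closure (x '' (insert a s : Finset ι)))
        ≤ 2 * ((carmichaelTransversal x s (x a)).card * Nat.card (Subgroup.closure (x '' s))) := by
          gcongr
      _ = (carmichaelTransversal x s (x a)).card *
          (2 * Nat.card (Subgroup.closure (x '' s))) := Nat.mul_left_comm _ _ _
      _ ≤ (s.card + 2 + 1) * (s.card + 2).factorial :=
          Nat.mul_le_mul card_carmichaelTransversal_le (ih hx.2 hxs)

end Carmichael

section CentralExtension

variable {E A : Type*} [Group E] [Group A] {σ : E →* A}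

lemma eq_one_of_mem_of_sq_eq_one {Z : Subgroup E} (hodd : Odd (Nat.card Z)) {z : E} (hz : z ∈ Z)
    (hsq : z ^ 2 = 1) : z = 1 :=
  congrArg Subtype.val (hodd.coprime_two_right.pow_left_bijective.injective
    (show (⟨z, hz⟩ : Z) ^ 2 = 1 ^ 2 from Subtype.ext (by simpa using hsq)))

lemma commute_of_mem_ker (hcentral : σ.ker ≤ Subgroup.center E) {z : E} (hz : z ∈ σ.ker)
    (g : E) : Commute z g :=
  (Subgroup.mem_center_iff.1 (hcentral hz) g).symm

variable (hcentral : σ.ker ≤ Subgroup.center E) (hodd : Odd (Nat.card σ.ker))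

include hcentral hodd

lemma commute_of_commute_map {g h : E} (hg : σ g ^ 2 = 1) (hgh : Commute (σ g) (σ h)) :
    Commute g h := by
  have hz_mem : ⁅g, h⁆ ∈ σ.ker := by
    rw [MonoidHom.mem_ker, map_commutatorElement,
      commutatorElement_eq_one_iff_commute]
    exact hgh
  have hg_sq : Commute (g ^ 2) h := commute_of_mem_ker hcentral (by simp [hg]) h
  have hz := commute_of_mem_ker hcentral hz_mem g
  rw [← commutatorElement_eq_one_iff_commute]
  refine eq_one_of_mem_of_sq_eq_one hodd hz_mem (mul_right_cancel (b := h * g ^ 2) ?_)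
  have hgh_eq : g * h = ⁅g, h⁆ * h * g := by rw [commutatorElement_def]; group
  calc ⁅g, h⁆ ^ 2 * (h * g ^ 2) = ⁅g, h⁆ * (⁅g, h⁆ * h * g) * g := by simp only [sq, mul_assoc]
    _ = ⁅g, h⁆ * g * (h * g) := by rw [← hgh_eq]; simp only [mul_assoc]
    _ = g * (⁅g, h⁆ * h * g) := by rw [hz.eq]; simp only [mul_assoc]
    _ = g ^ 2 * h := by rw [← hgh_eq, sq, mul_assoc]
    _ = 1 * (h * g ^ 2) := by rw [hg_sq.eq, one_mul]

lemma exists_map_eq_conj_eq_inv {t y : E} (ht : σ t * σ y * (σ t)⁻¹ = (σ y)⁻¹) :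
    ∃ y', σ y' = σ y ∧ t * y' * t⁻¹ = y'⁻¹ := by
  have hz : t * y * t⁻¹ * y ∈ σ.ker := by simp [MonoidHom.mem_ker, ht]
  obtain ⟨⟨w, hw⟩, hwz⟩ :=
    hodd.coprime_two_right.pow_left_bijective.surjective (⟨_, hz⟩⁻¹ : σ.ker)
  have hwz : w ^ 2 = (t * y * t⁻¹ * y)⁻¹ := congrArg Subtype.val hwz
  have hwc := commute_of_mem_ker hcentral hw
  refine ⟨y * w, by simp [MonoidHom.mem_ker.1 hw], eq_inv_of_mul_eq_one_left ?_⟩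
  calc t * (y * w) * t⁻¹ * (y * w) = t * y * (w * (t⁻¹ * y)) * w := by group
    _ = t * y * t⁻¹ * y * w ^ 2 := by rw [(hwc _).eq, sq]; group
    _ = 1 := by rw [hwz, mul_inv_cancel]

lemma eq_one_of_conj_eq_inv {t z : E} (hz : z ∈ σ.ker) (ht : t * z * t⁻¹ = z⁻¹) : z = 1 := by
  refine eq_one_of_mem_of_sq_eq_one hodd hz ?_
  rw [← (commute_of_mem_ker hcentral hz t).eq, mul_inv_cancel_right] at ht
  rw [sq, ← mul_inv_cancel z, ← ht]

lemma conj_eq_inv_of_conj_eq_inv {t t' y : E} (hy : t * y * t⁻¹ = y⁻¹)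
    (hsq : σ (t' * t) ^ 2 = 1) (hcomm : Commute (σ (t' * t)) (σ y)) :
    t' * y * t'⁻¹ = y⁻¹ := by
  have := commute_of_commute_map hcentral hodd hsq hcomm
  calc t' * y * t'⁻¹ = t' * (t * y * t⁻¹)⁻¹ * t'⁻¹ := by rw [hy, inv_inv]
    _ = (t' * t) * y⁻¹ * (t' * t)⁻¹ := by group
    _ = y⁻¹ := by rw [this.inv_right.eq, mul_inv_cancel_right]

lemma pow_eq_one_of_conj_eq_inv {t y : E} {n : ℕ} (hy : t * y * t⁻¹ = y⁻¹) (hn : σ y ^ n = 1) :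
    y ^ n = 1 :=
  eq_one_of_conj_eq_inv hcentral hodd (t := t) (by simp [MonoidHom.mem_ker, hn])
    (by rw [← conj_pow, hy, inv_pow])

lemma mul_sq_eq_one_of_conj_eq_inv {t x y : E} (hx : t * x * t⁻¹ = x⁻¹) (hy : t * y * t⁻¹ = y⁻¹)
    (hxy : (σ x * σ y) ^ 2 = 1) : (x * y) ^ 2 = 1 := by
  have hker : (x * y) ^ 2 ∈ σ.ker := by simp [MonoidHom.mem_ker, hxy]
  refine eq_one_of_conj_eq_inv hcentral hodd (t := t) hker ?_
  calc t * (x * y) ^ 2 * t⁻¹ = (x⁻¹ * y⁻¹) ^ 2 := by rw [← conj_pow, ← hx, ← hy]; group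
    _ = (x⁻¹ * (x * y) ^ 2 * x)⁻¹ := by simp only [sq]; group
    _ = ((x * y) ^ 2)⁻¹ := by
      rw [← ((commute_of_mem_ker hcentral hker _).eq), inv_mul_cancel_right]

end CentralExtension

section CentralExtensionOfAlternating

variable {E α : Type*} [Group E] [DecidableEq α] [Fintype α] {σ : E →* alternatingGroup α}
  {p q a b : α}

/-- `t` maps to a double transposition `(p q)(u v)` with `u` and `v` outside `s`. -/
def IsDoubleSwapLift (σ : E →* alternatingGroup α) (p q : α) (s : Finset α) (t : E) : Prop :=
  ∃ u v, u ≠ v ∧ u ∉ s ∧ v ∉ s ∧ (σ t : Perm α) = swap p q * swap u v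

lemma IsDoubleSwapLift.mono {s s' : Finset α} {t : E} (hs : s ⊆ s')
    (ht : IsDoubleSwapLift σ p q s' t) : IsDoubleSwapLift σ p q s t := by
  obtain ⟨u, v, huv, hu, hv, ht⟩ := ht
  exact ⟨u, v, huv, fun h => hu (hs h), fun h => hv (hs h), ht⟩

lemma exists_isDoubleSwapLift (hσ : Function.Surjective σ) (hpq : p ≠ q) {s : Finset α}
    (hs : s.card + 2 ≤ Fintype.card α) : ∃ t, IsDoubleSwapLift σ p q s t := by
  obtain ⟨u, hu, v, hv, huv⟩ := Finset.one_lt_card.1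
    (show 1 < sᶜ.card by rw [Finset.card_compl]; omega)
  obtain ⟨t, ht⟩ := hσ ⟨swap p q * swap u v, by
    simp [mem_alternatingGroup, sign_swap hpq, sign_swap huv]⟩
  exact ⟨t, u, v, huv, Finset.mem_compl.1 hu, Finset.mem_compl.1 hv, by rw [ht]⟩

lemma IsDoubleSwapLift.conj_threeCycle (hpq : p ≠ q) (hap : a ≠ p) (haq : a ≠ q) {t y : E}
    (ht : IsDoubleSwapLift σ p q {p, q, a} t) (hy : (σ y : Perm α) = threeCycle p q a) :
    σ t * σ y * (σ t)⁻¹ = (σ y)⁻¹ := by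
  obtain ⟨u, v, -, hu, hv, ht⟩ := ht
  simp only [Finset.mem_insert, Finset.mem_singleton, not_or] at hu hv
  refine Subtype.ext ?_
  simp only [Subgroup.coe_mul, Subgroup.coe_inv, ht, hy, inv_threeCycle]
  rw [_root_.conj_threeCycle, threeCycle_rotate haq hpq.symm hap]
  congr 1 <;> grind [Perm.mul_apply]

omit [Fintype α] in
lemma swap_commute_swap {c d : α} (hac : a ≠ c) (had : a ≠ d) (hbc : b ≠ c) (hbd : b ≠ d) :
    Commute (swap a b) (swap c d) := by
  ext x
  grind [Perm.mul_apply]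

omit [Fintype α] in
lemma swap_mul_swap_sq {c d : α} (hac : a ≠ c) (had : a ≠ d) (hbc : b ≠ c) (hbd : b ≠ d) :
    (swap a b * swap c d) ^ 2 = 1 := by
  rw [(swap_commute_swap hac had hbc hbd).mul_pow]
  simp [sq]

lemma IsDoubleSwapLift.conj_eq_inv (hcentral : σ.ker ≤ Subgroup.center E)
    (hodd : Odd (Nat.card σ.ker)) {t t' y : E} {u v : α} (hu : u ∉ ({p, q, a} : Finset α))
    (hv : v ∉ ({p, q, a} : Finset α)) (ht : (σ t : Perm α) = swap p q * swap u v)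
    (ht' : IsDoubleSwapLift σ p q {p, q, a, u, v} t') (hy : (σ y : Perm α) = threeCycle p q a)
    (hty : t * y * t⁻¹ = y⁻¹) : t' * y * t'⁻¹ = y⁻¹ := by
  obtain ⟨u', v', -, hu', hv', ht'⟩ := ht'
  simp only [Finset.mem_insert, Finset.mem_singleton, not_or] at hu hv hu' hv'
  have hprod : (σ (t' * t) : Perm α) = swap u' v' * swap u v := by
    rw [map_mul, Subgroup.coe_mul, ht, ht', (swap_commute_swap (a := p) (b := q) (c := u') (d := v')
      (by grind) (by grind) (by grind) (by grind)).eq]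
    simp [mul_assoc]
  refine conj_eq_inv_of_conj_eq_inv hcentral hodd hty (Subtype.ext ?_) (Subtype.ext ?_)
  · rw [SubmonoidClass.coe_pow, hprod]
    exact swap_mul_swap_sq (by grind) (by grind) (by grind) (by grind)
  · rw [Subgroup.coe_mul, Subgroup.coe_mul, hprod, hy, ← mul_inv_eq_iff_eq_mul,
      _root_.conj_threeCycle]
    congr 1 <;> grind [Perm.mul_apply]

lemma exists_lift_threeCycle (hσ : Function.Surjective σ) (hα : 9 ≤ Fintype.card α)
    (hcentral : σ.ker ≤ Subgroup.center E) (hodd : Odd (Nat.card σ.ker)) (hpq : p ≠ q)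
    (hap : a ≠ p) (haq : a ≠ q) :
    ∃ y, (σ y : Perm α) = threeCycle p q a ∧
      ∀ t, IsDoubleSwapLift σ p q {p, q, a} t → t * y * t⁻¹ = y⁻¹ := by
  have hcard3 : ({p, q, a} : Finset α).card ≤ 3 := Finset.card_le_three
  obtain ⟨t, ht⟩ := exists_isDoubleSwapLift hσ hpq (s := {p, q, a}) (by omega)
  obtain ⟨y₀, hy₀⟩ := hσ ⟨_, threeCycle_mem_alternatingGroup hpq haq.symm⟩
  obtain ⟨y, hy, hty⟩ := exists_map_eq_conj_eq_inv hcentral hodd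
    (ht.conj_threeCycle hpq hap haq (congrArg Subtype.val hy₀))
  have hy : (σ y : Perm α) = threeCycle p q a := by rw [hy, hy₀]
  obtain ⟨u, v, -, hu, hv, ht⟩ := ht
  refine ⟨y, hy, fun t' ht' => ?_⟩
  obtain ⟨u', v', huv', hu', hv', ht'⟩ := ht'
  -- A third transposition, disjoint from both others, links `t` to `t'`.
  obtain ⟨r, hr⟩ := exists_isDoubleSwapLift hσ hpq (s := {p, q, a, u, v, u', v'})
    (by linarith [Finset.card_le_six (a := q) (b := a) (c := u) (d := v) (e := u') (f := v'),
      Finset.card_insert_le p {q, a, u, v, u', v'}])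
  have hry := (hr.mono (by grind)).conj_eq_inv hcentral hodd hu hv ht hy hty
  obtain ⟨u'', v'', -, hu'', hv'', hr⟩ := hr
  exact IsDoubleSwapLift.conj_eq_inv hcentral hodd (by grind) (by grind) hr
    ⟨u', v', huv', by grind, by grind, ht'⟩ hy hry

lemma exists_subgroup_map_eq_top_card_le [Finite E] (hσ : Function.Surjective σ)
    (hα : 9 ≤ Fintype.card α) (hcentral : σ.ker ≤ Subgroup.center E)
    (hodd : Odd (Nat.card σ.ker)) :
    ∃ X : Subgroup E, X.map σ = ⊤ ∧ 2 * Nat.card X ≤ (Fintype.card α).factorial := by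
  obtain ⟨p, q, hpq⟩ := Fintype.exists_pair_of_one_lt_card (show 1 < Fintype.card α by omega)
  have hmem {a : α} : a ∈ ({p, q}ᶜ : Finset α) ↔ a ≠ p ∧ a ≠ q := by simp
  have hlift (a : α) : ∃ y, a ∈ ({p, q}ᶜ : Finset α) → (σ y : Perm α) = threeCycle p q a ∧
      ∀ t, IsDoubleSwapLift σ p q {p, q, a} t → t * y * t⁻¹ = y⁻¹ := by
    by_cases ha : a ∈ ({p, q}ᶜ : Finset α)
    · obtain ⟨y, hy⟩ := exists_lift_threeCycle hσ hα hcentral hodd hpq (hmem.1 ha).1 (hmem.1 ha).2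
      exact ⟨y, fun _ => hy⟩
    · exact ⟨1, fun h => absurd h ha⟩
  choose y hy using hlift
  refine ⟨Subgroup.closure (y '' ({p, q}ᶜ : Finset α)), ?_, ?_⟩
  · have hle := alternatingGroup_le_of_threeCycle_mem (by omega) hpq
      (G := ((Subgroup.closure (y '' ({p, q}ᶜ : Finset α))).map σ).map (alternatingGroup α).subtype)
      fun x hxp hxq => ⟨σ (y x), Subgroup.mem_map_of_mem _
        (Subgroup.subset_closure ⟨x, hmem.2 ⟨hxp, hxq⟩, rfl⟩), (hy x (hmem.2 ⟨hxp, hxq⟩)).1⟩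
    refine top_unique fun g _ => ?_
    obtain ⟨g', hg', heq⟩ := hle g.2
    exact Subtype.ext heq ▸ hg'
  · have hcard : ({p, q}ᶜ : Finset α).card + 2 = Fintype.card α := by
      rw [Finset.card_compl, Finset.card_pair hpq]; omega
    rw [← hcard]
    refine two_mul_card_closure_image_le_factorial (fun a ha => ?_) fun a ha b hb hab => ?_
    · obtain ⟨t, ht⟩ := exists_isDoubleSwapLift hσ hpq (s := {p, q, a})
        (by have := Finset.card_le_three (a := p) (b := q) (c := a); omega)
      refine pow_eq_one_of_conj_eq_inv hcentral hodd ((hy a ha).2 t ht) (Subtype.ext ?_)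
      rw [SubmonoidClass.coe_pow, (hy a ha).1]
      exact threeCycle_pow_three hpq (hmem.1 ha).2.symm (hmem.1 ha).1.symm
    · obtain ⟨t, ht⟩ := exists_isDoubleSwapLift hσ hpq (s := {p, q, a, b})
        (by have := Finset.card_le_four (a := p) (b := q) (c := a) (d := b); omega)
      refine mul_sq_eq_one_of_conj_eq_inv hcentral hodd ((hy a ha).2 t (ht.mono (by grind)))
        ((hy b hb).2 t (ht.mono (by grind))) (Subtype.ext ?_)
      rw [SubmonoidClass.coe_pow, Subgroup.coe_mul, (hy a ha).1, (hy b hb).1]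
      exact threeCycle_mul_threeCycle_sq hpq (hmem.1 ha).1 (hmem.1 ha).2 (hmem.1 hb).1
        (hmem.1 hb).2 hab

theorem exists_normal_isCompl_ker [Finite E] (hσ : Function.Surjective σ)
    (hα : 9 ≤ Fintype.card α) (hcentral : σ.ker ≤ Subgroup.center E)
    (hodd : Odd (Nat.card σ.ker)) : ∃ X : Subgroup E, X.Normal ∧ IsCompl X σ.ker := by
  obtain ⟨X, htop, hcard⟩ := exists_subgroup_map_eq_top_card_le hσ hα hcentral hodd
  have hsup : X ⊔ σ.ker = ⊤ := by rw [← Subgroup.comap_map_eq, htop, Subgroup.comap_top]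
  refine ⟨X, ?_, disjoint_comm.1 ?_, codisjoint_iff.2 hsup⟩
  · rw [← Subgroup.normalizer_eq_top_iff, ← top_le_iff, ← hsup]
    exact sup_le Subgroup.le_normalizer (hcentral.trans (Subgroup.center_le_normalizer _))
  · have : Nontrivial α := Fintype.one_lt_card_iff_nontrivial.1 (by omega)
    have hcard_eq : Nat.card X = Nat.card (X.map σ) := by
      refine le_antisymm ?_ (Nat.card_le_card_of_surjective _ (σ.subgroupMap_surjective X))
      have := two_mul_nat_card_alternatingGroup (α := α)
      rw [Nat.card_perm, Nat.card_eq_fintype_card (α := α)] at this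
      rw [htop, Subgroup.card_top]
      omega
    have hbij := (Nat.bijective_iff_surjective_and_card _).2
      ⟨σ.subgroupMap_surjective X, hcard_eq⟩
    rw [← Subgroup.subgroupOf_eq_bot, ← Subgroup.ker_subgroupMap, MonoidHom.ker_eq_bot_iff]
    exact hbij.injective

end CentralExtensionOfAlternating

section Characters

lemma exists_monoidHom_zmod_ne_one_of_pow_eq_one {A : Type*} [CommGroup A] [Nontrivial A] {p : ℕ}
    (hp : p.Prime) (hA : ∀ a : A, a ^ p = 1) : ∃ χ : A →* Multiplicative (ZMod p), χ ≠ 1 := by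
  have : Fact p.Prime := ⟨hp⟩
  have : Module (ZMod p) (Additive A) := AddCommGroup.zmodModule hA
  obtain ⟨x, hx⟩ := exists_ne (0 : Additive A)
  obtain ⟨f, hf⟩ := Module.Projective.exists_dual_ne_zero (ZMod p) hx
  exact ⟨AddMonoidHom.toMultiplicativeRight f.toAddMonoidHom, fun h => hf (DFunLike.congr_fun h x)⟩

lemma exists_monoidHom_zmod_ne_one {A : Type*} [CommGroup A] [Finite A] [Nontrivial A] :
    ∃ p : ℕ, p.Prime ∧ p ∣ Nat.card A ∧ ∃ χ : A →* Multiplicative (ZMod p), χ ≠ 1 := by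
  obtain ⟨p, hp, hpA⟩ := Nat.exists_prime_and_dvd (Finite.one_lt_card (α := A)).ne'
  have : Fact p.Prime := ⟨hp⟩
  obtain ⟨a, ha⟩ := exists_prime_orderOf_dvd_card' p hpA
  have not_injective : ¬ Function.Injective (powMonoidHom p : A →* A) := fun hinj =>
    hp.one_lt.ne' <| ha ▸ orderOf_eq_one_iff.2 (hinj (by simp [← ha, pow_orderOf_eq_one]))
  set P : Subgroup A := (powMonoidHom p).range
  have : Nontrivial (A ⧸ P) := QuotientGroup.nontrivial_iff.2 fun htop =>
    not_injective (Finite.injective_iff_surjective.2 (MonoidHom.range_eq_top.1 htop))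
  obtain ⟨χ, hχ⟩ := exists_monoidHom_zmod_ne_one_of_pow_eq_one (A := A ⧸ P) hp fun x => by
    induction x using QuotientGroup.induction_on with | _ x
    exact (QuotientGroup.eq_one_iff _).2 ⟨x, rfl⟩
  exact ⟨p, hp, hpA, χ.comp (QuotientGroup.mk' P), fun h =>
    hχ (QuotientGroup.monoidHom_ext P (h.trans (MonoidHom.one_comp _).symm))⟩

lemma exists_monoidHom_zmod_le_ker {G : Type*} [Group G] [Finite G] {Y : Subgroup G} [Y.Normal]
    (hcomm : commutator G ≤ Y) (hY : Y ≠ ⊤) : ∃ p : ℕ, p.Prime ∧ p ∣ Nat.card G ∧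
      ∃ χ : G →* Multiplicative (ZMod p), Y ≤ χ.ker ∧ χ ≠ 1 := by
  have hmul := Subgroup.Normal.quotient_commutative_iff_commutator_le.2 hcomm
  let _ : CommGroup (G ⧸ Y) := { mul_comm := hmul.is_comm.comm }
  have : Nontrivial (G ⧸ Y) := QuotientGroup.nontrivial_iff.2 hY
  obtain ⟨p, hp, hpY, χ, hχ⟩ := exists_monoidHom_zmod_ne_one (A := G ⧸ Y)
  refine ⟨p, hp, hpY.trans (Subgroup.card_quotient_dvd_card Y), χ.comp (QuotientGroup.mk' Y),
    fun y hy => ?_, fun h => hχ ?_⟩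
  · rw [MonoidHom.mem_ker, MonoidHom.comp_apply, QuotientGroup.mk'_apply,
    (QuotientGroup.eq_one_iff y).2 hy, map_one]
  · exact QuotientGroup.monoidHom_ext Y (h.trans (MonoidHom.one_comp _).symm)

lemma eq_top_of_sup_commutator_eq_top {P : Type*} [Group P] [Finite P] [Group.IsNilpotent P]
    {J : Subgroup P} (h : J ⊔ commutator P = ⊤) : J = ⊤ := by
  by_contra hJ
  obtain ⟨K, hK, hJK⟩ := (eq_top_or_exists_le_coatom J).resolve_left hJ
  have : K.Normal := Subgroup.NormalizerCondition.normal_of_coatom K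
    Group.normalizerCondition_of_isNilpotent hK
  obtain ⟨x, -, hx⟩ := SetLike.exists_of_lt hK.lt_top
  have hsup : K ⊔ Subgroup.zpowers x = ⊤ := hK.2 _ <| left_lt_sup.2 fun hle =>
    hx (hle (Subgroup.mem_zpowers x))
  have hcomm := Subgroup.Normal.commutator_le_of_self_sup_commutative_eq_top hsup inferInstance
  exact hK.1 (top_le_iff.1 (h ▸ sup_le hJK hcomm))

lemma normal_inf_sup_commutator {G : Type*} [Group G] {S N : Subgroup G} [N.Normal]
    (hS : S ⊔ N = ⊤) : ((S ⊓ N) ⊔ ⁅N, N⁆).Normal := by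
  rw [← Subgroup.normalizer_eq_top_iff, eq_top_iff, ← hS, sup_le_iff]
  constructor
  · calc S ≤ Subgroup.normalizer S ⊓ Subgroup.normalizer N :=
          le_inf Subgroup.le_normalizer Subgroup.le_normalizer_of_normal
      _ ≤ Subgroup.normalizer (S ⊓ N : Subgroup G) := Subgroup.inf_normalizer_le_normalizer_inf
      _ ≤ _ := Subgroup.normalizer_le_normalizer_sup_normal
  · rw [Subgroup.le_normalizer_iff_commutator_le_right]
    exact (Subgroup.commutator_mono le_rfl
      (sup_le inf_le_right (Subgroup.commutator_le_left N N))).trans le_sup_right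

lemma map_mk'_le_center {G : Type*} [Group G] {K N : Subgroup G} [K.Normal] (h : ⁅N, ⊤⁆ ≤ K) :
    N.map (QuotientGroup.mk' K) ≤ Subgroup.center (G ⧸ K) := by
  rw [← Subgroup.commutator_top_right_eq_bot_iff_le_center,
    ← Subgroup.map_top_of_surjective _ (QuotientGroup.mk'_surjective K),
    ← Subgroup.map_commutator, Subgroup.map_eq_bot_iff, QuotientGroup.ker_mk']
  exact h

lemma le_of_le_inf_sup_commutator {G : Type*} [Group G] {S N : Subgroup G} [N.Normal]
    [Finite N] [Group.IsNilpotent N] (h : N ≤ (S ⊓ N) ⊔ ⁅N, N⁆) : N ≤ S := by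
  refine Subgroup.subgroupOf_eq_top.1 (eq_top_of_sup_commutator_eq_top ?_)
  apply Subgroup.map_injective N.subtype_injective
  rw [Subgroup.map_sup, Subgroup.subgroupOf_map_subtype, Subgroup.map_subtype_commutator,
    ← MonoidHom.range_eq_map, Subgroup.range_subtype]
  exact le_antisymm (sup_le inf_le_right (Subgroup.commutator_le_left N N)) h

variable {G α : Type*} [Group G] [Finite G] [DecidableEq α] [Fintype α]
  {σ : G →* alternatingGroup α}

/-- The quotient by the kernel of `χ` is a central extension, hence splits. -/
theorem exists_extend_ker_character (hσ : Function.Surjective σ) (hα : 9 ≤ Fintype.card α)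
    (hodd : Odd (Nat.card σ.ker)) {A : Type*} [Group A] (χ : σ.ker →* A)
    (hχ : ∀ (g : G) (n : σ.ker), χ (MulAut.conjNormal g n) = χ n) :
    ∃ ψ : G →* A, ∀ n : σ.ker, ψ n = χ n := by
  set K : Subgroup G := χ.ker.map σ.ker.subtype
  have hKσ : K ≤ σ.ker := Subgroup.map_subtype_le _
  have mem_K (n : σ.ker) : (n : G) ∈ K ↔ χ n = 1 :=
    Subgroup.mem_map_iff_mem σ.ker.subtype_injective
  have : K.Normal := ⟨fun n hn g => by
    lift n to σ.ker using hKσ hn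
    rw [← MulAut.conjNormal_apply, mem_K, hχ]
    exact (mem_K n).1 hn⟩
  set q := QuotientGroup.mk' K
  set σ' : G ⧸ K →* alternatingGroup α := QuotientGroup.lift K σ hKσ
  have hσ' : Function.Surjective σ' := QuotientGroup.lift_surjective_of_surjective K σ hσ hKσ
  have ker_σ' : σ'.ker = σ.ker.map q := QuotientGroup.ker_lift ..
  obtain ⟨X, _, hX⟩ := exists_normal_isCompl_ker hσ' hα (by
      rw [ker_σ']
      refine map_mk'_le_center (Subgroup.commutator_le.2 fun n hn g _ => ?_)
      lift n to σ.ker using hn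
      have : ⁅(n : G), g⁆ = (n * MulAut.conjNormal g n⁻¹ : σ.ker) := by
        simp [commutatorElement_def, mul_assoc]
      rw [this, mem_K, map_mul, hχ, map_inv, mul_inv_cancel])
    (by rw [ker_σ']; exact hodd.of_dvd_nat (Subgroup.card_map_dvd _ _))
  set r := (QuotientGroup.mk' X).comp (q.comp σ.ker.subtype) with hr
  have r_surjective : Function.Surjective r := by
    rw [← MonoidHom.range_eq_top, hr, MonoidHom.range_comp, MonoidHom.range_comp,
      Subgroup.range_subtype, ← ker_σ', ← QuotientGroup.range_mk' X, Subgroup.map_eq_range_iff,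
      QuotientGroup.ker_mk']
    exact hX.symm.codisjoint
  have r_ker : r.ker ≤ χ.ker := fun n hn => by
    have hqn : q n ∈ X := (QuotientGroup.eq_one_iff _).1 hn
    have hqn' : q n ∈ σ'.ker := ker_σ' ▸ Subgroup.mem_map_of_mem q n.2
    exact (mem_K n).1 ((QuotientGroup.eq_one_iff _).1 (Subgroup.disjoint_def.1 hX.disjoint hqn
      hqn'))
  refine ⟨(r.liftOfSurjective r_surjective ⟨χ, r_ker⟩).comp ((QuotientGroup.mk' X).comp q),
    fun n => ?_⟩
  exact DFunLike.congr_fun (MonoidHom.liftOfRightInverse_comp r _ _ ⟨χ, r_ker⟩) n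

lemma commutator_ker_top_le_of_relIndex_lt (hσ : Function.Surjective σ)
    (hα : 21 ≤ Fintype.card α) (hodd : Odd (Nat.card σ.ker)) {W : Subgroup G} [W.Normal]
    (hW : W ≤ σ.ker) (hcomm : ⁅σ.ker, σ.ker⁆ ≤ W)
    (hcard : 2 * W.relIndex σ.ker < (Fintype.card α + 1) * Fintype.card α) :
    ⁅σ.ker, ⊤⁆ ≤ W := by
  set q := QuotientGroup.mk' W
  set σ' : G ⧸ W →* alternatingGroup α := QuotientGroup.lift W σ hW
  have hσ' : Function.Surjective σ' := QuotientGroup.lift_surjective_of_surjective W σ hσ hW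
  have ker_σ' : σ'.ker = σ.ker.map q := QuotientGroup.ker_lift ..
  have card_ker : Nat.card σ'.ker = W.relIndex σ.ker := by
    rw [ker_σ', ← Subgroup.relIndex_ker, QuotientGroup.ker_mk']
  have : IsMulCommutative σ'.ker := by
    rw [ker_σ', ← Subgroup.commutator_self_eq_bot_iff, ← Subgroup.map_commutator,
      Subgroup.map_eq_bot_iff, QuotientGroup.ker_mk']
    exact hcomm
  have hcentral : σ'.ker ≤ Subgroup.center (G ⧸ W) :=
    ker_le_center_of_card_lt hσ' hα (card_ker ▸ hodd.of_dvd_nat (Subgroup.relIndex_dvd_card ..))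
      (card_ker ▸ hcard)
  rwa [ker_σ', ← Subgroup.commutator_top_right_eq_bot_iff_le_center,
    ← Subgroup.map_top_of_surjective q (QuotientGroup.mk'_surjective W),
    ← Subgroup.map_commutator, Subgroup.map_eq_bot_iff, QuotientGroup.ker_mk'] at hcentral

theorem exists_character_of_relIndex_lt [Group.IsNilpotent σ.ker] (hσ : Function.Surjective σ)
    (hα : 21 ≤ Fintype.card α) (hodd : Odd (Nat.card σ.ker)) {S : Subgroup G}
    (hS : S ⊔ σ.ker = ⊤) (hker : ¬ σ.ker ≤ S)
    (hcard : 2 * S.relIndex σ.ker < (Fintype.card α + 1) * Fintype.card α) :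
    ∃ p : ℕ, p.Prime ∧ p ∣ Nat.card σ.ker ∧ ∃ ψ : G →* Multiplicative (ZMod p),
      ∃ n ∈ σ.ker, ψ n ≠ 1 := by
  set W : Subgroup G := (S ⊓ σ.ker) ⊔ ⁅σ.ker, σ.ker⁆
  have : W.Normal := normal_inf_sup_commutator hS
  have hW : W ≤ σ.ker := sup_le inf_le_right (Subgroup.commutator_le_left _ _)
  have relIndex_le : W.relIndex σ.ker ≤ S.relIndex σ.ker := by
    rw [← Subgroup.inf_relIndex_right S]
    exact Nat.le_of_dvd (Nat.pos_of_dvd_of_pos (Subgroup.relIndex_dvd_card ..) Nat.card_pos)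
      (Subgroup.relIndex_dvd_of_le_left _ le_sup_left)
  have hcomm : ⁅σ.ker, (⊤ : Subgroup G)⁆ ≤ W :=
    commutator_ker_top_le_of_relIndex_lt hσ hα hodd hW le_sup_right (by omega)
  obtain ⟨p, hp, hpker, χ, hχW, hχ⟩ := exists_monoidHom_zmod_le_ker (Y := W.subgroupOf σ.ker)
    (by
      rw [Subgroup.subgroupOf, ← Subgroup.map_le_iff_le_comap, Subgroup.map_subtype_commutator]
      exact le_sup_right)
    fun htop => hker (le_of_le_inf_sup_commutator (Subgroup.subgroupOf_eq_top.1 htop))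
  obtain ⟨ψ, hψ⟩ := exists_extend_ker_character hσ (by omega) hodd χ fun g n => by
    have : MulAut.conjNormal g n * n⁻¹ ∈ W.subgroupOf σ.ker := by
      rw [Subgroup.commutator_comm, Subgroup.commutator_le] at hcomm
      simpa [Subgroup.mem_subgroupOf, commutatorElement_def] using hcomm g trivial n n.2
    simpa [mul_inv_eq_one] using hχW this
  obtain ⟨n, hn⟩ := DFunLike.ne_iff.1 hχ
  exact ⟨p, hp, hpker, ψ, n, n.2, (hψ n).trans_ne hn⟩

end Characters

section PointStabilizer

variable {H α : Type*} [Group H] [DecidableEq α] [Fintype α] {π : H →* alternatingGroup α}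

lemma fixingSubgroup_compl_eq_range_ofSubtype (s : Finset α) :
    fixingSubgroup (alternatingGroup α) ((s : Set α)ᶜ) = (alternatingGroup.ofSubtype s).range := by
  ext g
  rw [alternatingGroup.mem_range_ofSubtype_iff, mem_fixingSubgroup_iff]
  simp [Finset.subset_iff, not_imp_comm, Subgroup.smul_def]

lemma exists_restriction (hπ : Function.Surjective π) (s : Finset α) :
    ∃ ρ : supportedOn π s →* alternatingGroup s, Function.Surjective ρ ∧
      ρ.ker = π.ker.subgroupOf (supportedOn π s) := by
  set F := fixingSubgroup (alternatingGroup α) ((s : Set α)ᶜ)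
  let e : F ≃* alternatingGroup s :=
    (MulEquiv.subgroupCongr (fixingSubgroup_compl_eq_range_ofSubtype s)).trans
      (MonoidHom.ofInjective alternatingGroup.ofSubtype_injective).symm
  refine ⟨e.toMonoidHom.comp (π.subgroupComap F), e.surjective.comp
    (MonoidHom.subgroupComap_surjective_of_surjective π F hπ), ?_⟩
  ext h
  rw [MonoidHom.mem_ker, Subgroup.mem_subgroupOf, MonoidHom.mem_ker]
  exact (MulEquiv.map_eq_one_iff e).trans Subtype.ext_iff

lemma index_eq_relIndex_ker_mul_index_map [Finite H] (hπ : Function.Surjective π)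
    (S : Subgroup H) : S.index = S.relIndex π.ker * (S.map π).index := by
  have inf_left := Subgroup.relIndex_mul_relIndex (S ⊓ π.ker) S (S ⊔ π.ker) inf_le_left le_sup_left
  have inf_right :=
    Subgroup.relIndex_mul_relIndex (S ⊓ π.ker) π.ker (S ⊔ π.ker) inf_le_right le_sup_right
  rw [Subgroup.inf_relIndex_left] at inf_left
  rw [Subgroup.inf_relIndex_right, Subgroup.relIndex_sup_right, ← inf_left, mul_comm] at inf_right
  have hpos : 0 < π.ker.relIndex S :=
    Nat.pos_of_dvd_of_pos (Subgroup.relIndex_dvd_card ..) Nat.card_pos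
  rw [Subgroup.index_map, MonoidHom.range_eq_top.2 hπ, Subgroup.index_top, mul_one,
    ← Subgroup.relIndex_mul_index (le_sup_left : S ≤ S ⊔ π.ker),
    Nat.eq_of_mul_eq_mul_left hpos inf_right]

/-- The quotient map `π` is surjective and its kernel cannot be supplemented by a proper subgroup:
for finite `G`, the kernel lies in the Frattini subgroup. -/
structure IsFrattiniCover {G Q : Type*} [Group G] [Group Q] (π : G →* Q) : Prop where
  surjective : Function.Surjective π
  eq_top_of_map_eq_top : ∀ K : Subgroup G, K.map π = ⊤ → K = ⊤

lemma exists_supportedOn_le_sup_ker [Finite H] (hπ : IsFrattiniCover π)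
    (hα : 23 ≤ Fintype.card α) (hodd : Odd (Nat.card π.ker)) {S : Subgroup H} (hS : ¬ π.ker ≤ S)
    (hindex : 2 * S.index < Fintype.card α * (Fintype.card α - 1) * (Fintype.card α - 2)) :
    2 * S.relIndex π.ker < (Fintype.card α - 1) * (Fintype.card α - 2) ∧
      ∃ a b : α, a ≠ b ∧ supportedOn π {a, b}ᶜ ≤ S ⊔ π.ker := by
  rw [index_eq_relIndex_ker_mul_index_map hπ.surjective S] at hindex
  obtain ⟨r, hr⟩ : Odd (S.relIndex π.ker) := hodd.of_dvd_nat (Subgroup.relIndex_dvd_card ..)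
  have three_le : 3 ≤ S.relIndex π.ker := by
    have := mt Subgroup.relIndex_eq_one.1 hS
    omega
  have index_lt : (S.map π).index < (Fintype.card α).choose 3 := by
    obtain ⟨j, hj⟩ := Nat.exists_eq_add_of_le' (show 2 ≤ Fintype.card α by omega)
    have := six_mul_choose_three j
    simp only [hj, Nat.add_sub_cancel, show j + 2 - 1 = j + 1 from rfl] at hindex ⊢
    nlinarith
  obtain htop | ⟨card_le, T, hT, hTS⟩ := eq_top_or_exists_fixingSubgroup_le (by omega) index_lt
  · exact absurd (hπ.eq_top_of_map_eq_top S htop ▸ le_top) hS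
  refine ⟨?_, ?_⟩
  · by_contra! hle
    nlinarith [Nat.mul_le_mul card_le hle]
  · obtain ⟨P, hTP, hP⟩ := Finset.exists_superset_card_eq hT (by omega)
    obtain ⟨a, b, hab, rfl⟩ := Finset.card_eq_two.1 hP
    refine ⟨a, b, hab, ?_⟩
    rw [← Subgroup.comap_map_eq]
    refine Subgroup.comap_mono (le_trans (fixingSubgroup_antitone _ _ ?_) hTS)
    rw [Finset.coe_compl, compl_compl]
    exact Finset.coe_subset.2 hTP

theorem exists_pair_character [Finite H] (hπ : IsFrattiniCover π) [Group.IsNilpotent π.ker]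
    (hα : 23 ≤ Fintype.card α) (hodd : Odd (Nat.card π.ker)) {S : Subgroup H} (hS : ¬ π.ker ≤ S)
    (hindex : 2 * S.index < Fintype.card α * (Fintype.card α - 1) * (Fintype.card α - 2)) :
    ∃ a b : α, a ≠ b ∧ ∃ p : ℕ, p.Prime ∧ p ∣ Nat.card π.ker ∧
      ∃ φ : supportedOn π {a, b}ᶜ →* Multiplicative (ZMod p),
        ∃ m : supportedOn π {a, b}ᶜ, (m : H) ∈ π.ker ∧ φ m ≠ 1 := by
  obtain ⟨hrel, a, b, hab, hD⟩ := exists_supportedOn_le_sup_ker hπ hα hodd hS hindex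
  set D := supportedOn π {a, b}ᶜ
  have hker : π.ker ≤ D := ker_le_supportedOn π _
  obtain ⟨ρ, hρ, ker_ρ⟩ := exists_restriction hπ.surjective {a, b}ᶜ
  let e : ρ.ker ≃* π.ker :=
    (MulEquiv.subgroupCongr ker_ρ).trans (Subgroup.subgroupOfEquivOfLe hker)
  have card_ker : Nat.card ρ.ker = Nat.card π.ker := Nat.card_congr e.toEquiv
  have : Group.IsNilpotent ρ.ker := Group.nilpotent_of_mulEquiv e.symm
  have card_compl : Fintype.card ({a, b}ᶜ : Finset α) = Fintype.card α - 2 := by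
    rw [Fintype.card_coe, Finset.card_compl, Finset.card_pair hab]
  have hsup : S.subgroupOf D ⊔ ρ.ker = ⊤ := by
    rw [ker_ρ, eq_top_iff]
    rintro ⟨h, hh⟩ -
    obtain ⟨s, hs, m, hm, rfl⟩ := Subgroup.mem_sup_of_normal_right.1 (hD hh)
    have hsD : s ∈ D := (Subgroup.mul_mem_cancel_right D (hker hm)).1 hh
    exact Subgroup.mul_mem_sup (show (⟨s, hsD⟩ : D) ∈ S.subgroupOf D from hs)
      (show (⟨m, hker hm⟩ : D) ∈ π.ker.subgroupOf D from hm)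
  obtain ⟨p, hp, hpker, ψ, m, hm, hψ⟩ := exists_character_of_relIndex_lt hρ (by omega)
    (card_ker ▸ hodd) hsup
    (by
      rw [ker_ρ]
      exact fun h => hS fun m hm => h (show (⟨m, hker hm⟩ : D) ∈ π.ker.subgroupOf D from hm))
    (by
      rw [ker_ρ, Subgroup.relIndex_subgroupOf hker, card_compl,
        show Fintype.card α - 2 + 1 = Fintype.card α - 1 by omega]
      exact hrel)
  rw [ker_ρ] at hm
  exact ⟨a, b, hab, p, hp, card_ker ▸ hpker, ψ, m, hm, hψ⟩

end PointStabilizer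

section PermutationModule

lemma exists_embedding_extending {α : Type*} [Fintype α] {m n : ℕ} (hmn : m ≤ n)
    (hα : n ≤ Fintype.card α) (s : Fin m ↪ α) :
    ∃ e : Fin n ↪ α, ∀ i, e (Fin.castLE hmn i) = s i := by
  obtain ⟨e, he⟩ := Fin.Embedding.restrictSurjective_of_le_natCard hmn
    (hα.trans_eq Nat.card_eq_fintype_card.symm) s
  exact ⟨e, fun i => DFunLike.congr_fun he i⟩

variable {α R : Type*} [DecidableEq α] [Field R]

/-- The difference of two basis vectors of the permutation module `α → R`; these differences span
its sum-zero submodule. -/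
def basisDiff (R : Type*) [Field R] (a b : α) : α → R := Pi.single a 1 - Pi.single b 1

lemma basisDiff_apply (a b x : α) :
    basisDiff R a b x = (if x = a then 1 else 0) - (if x = b then 1 else 0) := by
  simp [basisDiff, Pi.single_apply]

lemma basisDiff_perm_apply (σ : Perm α) (a b x : α) :
    basisDiff R (σ a) (σ b) (σ x) = basisDiff R a b x := by
  simp [basisDiff_apply]

lemma sum_basisDiff_mul [Fintype α] (a b : α) (f : α → R) :
    ∑ x, basisDiff R a b x * f x = f a - f b := by
  simp [basisDiff_apply, sub_mul, Finset.sum_sub_distrib]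

lemma sum_basisDiff [Fintype α] (a b : α) : ∑ x, basisDiff R a b x = 0 := by
  simp [basisDiff_apply, Finset.sum_sub_distrib]

lemma sub_apply_swap_mul_swap {a b u v : α} (hau : a ≠ u) (hav : a ≠ v) (hbu : b ≠ u)
    (hbv : b ≠ v) (f : α → R) (x : α) :
    f x - f ((swap a b * swap u v) x)
      = (f a - f b) * basisDiff R a b x + (f u - f v) * basisDiff R u v x := by
  simp only [basisDiff_apply, Perm.mul_apply, swap_apply_def]
  grind

variable [Fintype α] {B : Submodule R (α → R)}

lemma mem_of_sum_eq_zero (hB : ∀ a b : α, a ≠ b → basisDiff R a b ∈ B) {v : α → R}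
    (hv : ∑ x, v x = 0) : v ∈ B := by
  obtain hα | ⟨⟨o⟩⟩ := isEmpty_or_nonempty α
  · exact Subsingleton.elim 0 v ▸ B.zero_mem
  have hsum : v = ∑ x, v x • basisDiff R x o := by
    simp only [basisDiff, smul_sub, Finset.sum_sub_distrib, ← Finset.sum_smul, hv, zero_smul,
      sub_zero]
    exact pi_eq_sum_univ' v
  rw [hsum]
  refine Submodule.sum_mem _ fun x _ => Submodule.smul_mem _ _ ?_
  obtain rfl | hx := eq_or_ne x o
  · simp [basisDiff]
  · exact hB x o hx

lemma exists_alternatingGroup_map_embedding {n : ℕ} (hα : n + 2 ≤ Fintype.card α)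
    (s t : Fin n ↪ α) : ∃ σ ∈ alternatingGroup α, ∀ i, σ (s i) = t i := by
  have := alternatingGroup.isMultiplyPretransitive α
  have : IsMultiplyPretransitive (alternatingGroup α) α n :=
    isMultiplyPretransitive_of_le (n := Nat.card α - 2)
      (by rw [Nat.card_eq_fintype_card]; omega) (Nat.sub_le _ _)
  obtain ⟨σ, hσ⟩ := exists_smul_eq (alternatingGroup α) s t
  exact ⟨σ, σ.2, fun i => DFunLike.congr_fun hσ i⟩

lemma swap_mul_swap_mem_alternatingGroup {a b c d : α} (hab : a ≠ b) (hcd : c ≠ d) :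
    swap a b * swap c d ∈ alternatingGroup α := by
  simp [mem_alternatingGroup, sign_swap hab, sign_swap hcd]

/-- Subtracting from `f` its translate by a double transposition twice, with a common
transposition, isolates the coordinates it moves. -/
lemma basisDiff_mem (h2 : (2 : R) ≠ 0) (hα : 6 ≤ Fintype.card α)
    (hB : ∀ σ ∈ alternatingGroup α, ∀ v ∈ B, v ∘ σ ∈ B) {f : α → R} (hf : f ∈ B)
    {a b : α} (hne : f a ≠ f b) : basisDiff R a b ∈ B := by
  have hab : a ≠ b := fun h => hne (h ▸ rfl)
  obtain ⟨e, he⟩ := exists_embedding_extending (show 2 ≤ 6 by omega) hα ⟨![a, b], by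
    simpa [Function.Injective, Fin.forall_fin_two] using ⟨hab, hab.symm⟩⟩
  obtain rfl : e 0 = a := he 0
  obtain rfl : e 1 = b := he 1
  have hmem (i j : Fin 6) (hij : i ≠ j) {v : α → R} (hv : v ∈ B) :
      v - v ∘ (swap (e 0) (e 1) * swap (e i) (e j)) ∈ B :=
    B.sub_mem hv (hB _ (swap_mul_swap_mem_alternatingGroup hab (e.injective.ne hij)) v hv)
  have h4 : (2 * (f (e 0) - f (e 1))) ≠ 0 := mul_ne_zero h2 (sub_ne_zero.2 hne)
  refine (B.smul_mem_iff h4).1 ?_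
  convert hmem 4 5 (by decide) (hmem 2 3 (by decide) hf) using 1
  ext x
  rw [Pi.sub_apply, Function.comp_apply, sub_apply_swap_mul_swap (by simp) (by simp) (by simp)
    (by simp)]
  simp only [Pi.sub_apply, Function.comp_apply]
  simp only [sub_apply_swap_mul_swap (e.injective.ne (show (0 : Fin 6) ≠ 2 by decide))
    (e.injective.ne (show (0 : Fin 6) ≠ 3 by decide))
    (e.injective.ne (show (1 : Fin 6) ≠ 2 by decide))
    (e.injective.ne (show (1 : Fin 6) ≠ 3 by decide))]
  simp only [Fin.isValue, Pi.smul_apply, basisDiff_apply, smul_eq_mul, ↓reduceIte,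
    e.injective.eq_iff, zero_ne_one, sub_zero, mul_one, Fin.reduceEq, sub_self, mul_zero, add_zero,
    one_ne_zero, zero_sub, mul_neg, neg_sub, zero_mul]
  ring

/-- A submodule invariant under the alternating group either consists of constant functions or
contains all sum-zero functions. -/
lemma mem_of_sum_eq_zero_of_invariant (h2 : (2 : R) ≠ 0) (hα : 6 ≤ Fintype.card α)
    (hB : ∀ σ ∈ alternatingGroup α, ∀ v ∈ B, v ∘ σ ∈ B) {f : α → R} (hf : f ∈ B)
    {a b : α} (hne : f a ≠ f b) {v : α → R} (hv : ∑ x, v x = 0) : v ∈ B := by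
  refine mem_of_sum_eq_zero (fun c d hcd => ?_) hv
  have inj_pair {x y : α} (hxy : x ≠ y) : Function.Injective ![x, y] := by
    simpa [Function.Injective, Fin.forall_fin_two] using ⟨hxy, hxy.symm⟩
  obtain ⟨σ, hσ, hσs⟩ := exists_alternatingGroup_map_embedding (by omega)
    ⟨![c, d], inj_pair hcd⟩ ⟨![a, b], inj_pair fun h => hne (h ▸ rfl)⟩
  obtain rfl : σ c = a := hσs 0
  obtain rfl : σ d = b := hσs 1
  convert hB σ hσ _ (basisDiff_mem h2 hα hB hf hne) using 1
  exact funext fun x => (basisDiff_perm_apply σ c d x).symm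

end PermutationModule

section PairModule

variable {α R : Type*} [Field R]

/-- The mixed second difference of `f` along `a`, `b` in the first variable and `c`, `d` in the
second. -/
def mixedDiff (f : α × α → R) (a b c d : α) : R :=
  f (a, c) - f (b, c) - f (a, d) + f (b, d)

lemma exists_add_of_mixedDiff_eq_zero [Fintype α] (hα : 4 ≤ Fintype.card α) {f : α × α → R}
    (hf : ∀ s : Fin 4 ↪ α, mixedDiff f (s 0) (s 1) (s 2) (s 3) = 0) :
    ∃ r t : α → R, ∀ i j, i ≠ j → f (i, j) = r i + t j := by
  classical
  have exchange {i j c d : α} (hic : i ≠ c) (hid : i ≠ d) (hjc : j ≠ c) (hjd : j ≠ d) :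
      f (i, c) - f (i, d) = f (j, c) - f (j, d) := by
    obtain rfl | hij := eq_or_ne i j
    · rfl
    obtain rfl | hcd := eq_or_ne c d
    · simp
    have : f (i, c) - f (j, c) - f (i, d) + f (j, d) = 0 := hf ⟨![i, j, c, d], by
      simp [Function.Injective, Fin.forall_fin_succ, hic, hid, hjc, hjd, hij, hcd, hic.symm,
        hid.symm, hjc.symm, hjd.symm, hij.symm, hcd.symm]⟩
    linear_combination this
  have avoid (c d e : α) : ∃ l, l ≠ c ∧ l ≠ d ∧ l ≠ e := by
    obtain ⟨l, -, hl⟩ := Finset.exists_mem_notMem_of_card_lt_card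
      (s := {c, d, e}) (t := (Finset.univ : Finset α))
      (Finset.card_le_three.trans_lt (by rw [Finset.card_univ]; omega))
    exact ⟨l, by simpa using hl⟩
  obtain ⟨o⟩ : Nonempty α := Fintype.card_pos_iff.1 (by omega)
  choose l l_ne l_ne_o _ using fun c => avoid c o o
  refine ⟨fun i => f (i, l i) - (f (l (l i), l i) - f (l (l i), o)),
    fun j => f (l j, j) - f (l j, o), fun i j hij => ?_⟩
  obtain ⟨m, hmj, hml, hmo⟩ := avoid j (l i) o
  linear_combination exchange hij (l_ne i).symm hmj hml - exchange (l_ne j) (l_ne_o j) hmj hmo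
    + exchange (l_ne (l i)) (l_ne_o (l i)) hml hmo

/-- The functions on `α × α` vanishing on the diagonal that are multiplied by `ε` when the
variables are exchanged: symmetric for `ε = 1`, antisymmetric for `ε = -1`. -/
def hollowSymm (α : Type*) (ε : R) : Submodule R (α × α → R) where
  carrier := {f | (∀ i j, f (j, i) = ε * f (i, j)) ∧ ∀ i, f (i, i) = 0}
  zero_mem' := by simp
  add_mem' := fun {f g} hf hg =>
    ⟨fun i j => by simp [hf.1 i j, hg.1 i j, mul_add], fun i => by simp [hf.2 i, hg.2 i]⟩
  smul_mem' := fun r f hf =>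
    ⟨fun i j => by simp [hf.1 i j, mul_left_comm], fun i => by simp [hf.2 i]⟩

variable {ε : R}

lemma comp_mem_hollowSymm {f : α × α → R} (hf : f ∈ hollowSymm α ε) (σ : Perm α) :
    f ∘ Prod.map σ σ ∈ hollowSymm α ε :=
  ⟨fun i j => hf.1 (σ i) (σ j), fun i => hf.2 (σ i)⟩

/-- The analogue of `basisDiff` for `ε`-symmetric functions of two variables. -/
def quad [DecidableEq α] (ε : R) (a b c d : α) (x : α × α) : R :=
  basisDiff R a b x.1 * basisDiff R c d x.2 + ε * (basisDiff R c d x.1 * basisDiff R a b x.2)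

lemma quad_comp [DecidableEq α] (σ : Perm α) (a b c d : α) :
    quad ε (σ a) (σ b) (σ c) (σ d) ∘ Prod.map σ σ = quad ε a b c d := by
  ext x
  simp only [quad, Function.comp_apply, Prod.map_fst, Prod.map_snd, basisDiff_perm_apply]

lemma sub_translates_eq_of_disjoint {g h : Perm α} (hgh : g.Disjoint h) (f : α × α → R)
    (i j : α) :
    f (i, j) - f (g i, g j) - f (h i, h j) + f ((g * h) i, (g * h) j)
      = (f (i, j) - f (g i, j) - f (i, h j) + f (g i, h j))
        + (f (i, j) - f (h i, j) - f (i, g j) + f (h i, g j)) := by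
  have comm (x : α) : g (h x) = h (g x) := DFunLike.congr_fun hgh.commute x
  simp only [Perm.mul_apply]
  obtain hi | hi := hgh i <;> obtain hj | hj := hgh j <;> simp only [hi, hj, comm] <;> ring

/-- The row sums of a square matrix. -/
def rowSum (α R : Type*) [Field R] [Fintype α] : (α × α → R) →ₗ[R] α → R where
  toFun f i := ∑ j, f (i, j)
  map_add' f g := by ext; simp [Finset.sum_add_distrib]
  map_smul' r f := by ext; simp [Finset.mul_sum]

variable [Fintype α]

lemma rowSum_apply (f : α × α → R) (i : α) : rowSum α R f i = ∑ j, f (i, j) := rfl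

lemma rowSum_comp (f : α × α → R) (σ : Perm α) :
    rowSum α R (f ∘ Prod.map σ σ) = rowSum α R f ∘ σ := by
  ext i
  exact Equiv.sum_comp σ fun j => f (σ i, j)

/-- The matrix with rows `basisDiff R a b` concentrated in column `c`, made `ε`-symmetric, has row
sums `basisDiff R a b`. -/
lemma exists_rowSum_eq (hα : 3 ≤ Fintype.card α) (hε : ε * ε = 1) {v : α → R}
    (hv : ∑ x, v x = 0) : ∃ f ∈ hollowSymm α ε, rowSum α R f = v := by
  classical
  refine Submodule.mem_map.1 (mem_of_sum_eq_zero (fun a b _ => ?_) hv)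
  obtain ⟨c, -, hc⟩ := Finset.exists_mem_notMem_of_card_lt_card
    (s := {a, b}) (t := (Finset.univ : Finset α))
    (Finset.card_le_two.trans_lt (by rw [Finset.card_univ]; omega))
  obtain ⟨hca, hcb⟩ : c ≠ a ∧ c ≠ b := by simpa using hc
  let e : α → R := Pi.single c 1
  have hdiag (i : α) : basisDiff R a b i * e i = 0 := by
    obtain rfl | hi := eq_or_ne i c
    · simp [basisDiff_apply, hca, hcb]
    · simp [e, hi]
  refine Submodule.mem_map.2 ⟨fun x => basisDiff R a b x.1 * e x.2
    + ε * (e x.1 * basisDiff R a b x.2), ⟨fun i j => ?_, fun i => ?_⟩, ?_⟩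
  · linear_combination (-(basisDiff R a b j * e i)) * hε
  · linear_combination (1 + ε) * hdiag i
  · ext i
    simp [rowSum_apply, Finset.sum_add_distrib, ← Finset.mul_sum, sum_basisDiff, e]

variable [DecidableEq α]

variable {B : Submodule R (α × α → R)}

/-- A functional vanishing on the quads is of the form `r i + t j` after symmetrization, hence
orthogonal to the functions whose row and column sums vanish. -/
lemma mem_of_rowSum_eq_zero (h2 : (2 : R) ≠ 0) (hα : 4 ≤ Fintype.card α)
    (hB : ∀ s : Fin 4 ↪ α, quad ε (s 0) (s 1) (s 2) (s 3) ∈ B) {f : α × α → R}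
    (hf : f ∈ hollowSymm α ε) (hrow : rowSum α R f = 0) : f ∈ B := by
  by_contra hfB
  obtain ⟨l, hlf, hl⟩ := Submodule.exists_le_ker_of_notMem hfB
  let w : α × α → R := fun x => l fun y => if x = y then 1 else 0
  have l_apply (g : α × α → R) : l g = ∑ i, ∑ j, g (i, j) * w (i, j) := by
    rw [LinearMap.pi_apply_eq_sum_univ l g, Fintype.sum_prod_type]
    rfl
  obtain ⟨r, t, hrt⟩ := exists_add_of_mixedDiff_eq_zero hα
    (f := fun x => w x + ε * w (x.2, x.1)) fun s => by
      have hs : l (quad ε (s 0) (s 1) (s 2) (s 3)) = 0 := hl (hB s)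
      simp only [l_apply, quad, add_mul, mul_assoc, Finset.sum_add_distrib, ← Finset.mul_sum,
        sum_basisDiff_mul] at hs
      simp only [mixedDiff]
      linear_combination hs
  have hsymm (i j : α) : f (i, j) * w (i, j) + f (j, i) * w (j, i)
      = f (i, j) * r i + f (i, j) * t j := by
    obtain rfl | hij := eq_or_ne i j
    · simp [hf.2 i]
    · linear_combination f (i, j) * hrt i j hij + w (j, i) * hf.1 i j
  have hrow' (i : α) : ∑ j, f (i, j) = 0 := congrFun hrow i
  have hcol (j : α) : ∑ i, f (i, j) = 0 := by
    simp only [hf.1 j, ← Finset.mul_sum, hrow', mul_zero]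
  have : 2 * l f = 0 := by
    calc 2 * l f = ∑ i, ∑ j, (f (i, j) * w (i, j) + f (j, i) * w (j, i)) := by
          simp only [two_mul, Finset.sum_add_distrib]
          rw [Finset.sum_comm (f := fun i j => f (j, i) * w (j, i)), l_apply]
      _ = ∑ i, ∑ j, f (i, j) * r i + ∑ i, ∑ j, f (i, j) * t j := by
          simp only [hsymm, Finset.sum_add_distrib]
      _ = 0 := by
          rw [Finset.sum_comm (f := fun i j => f (i, j) * t j)]
          simp [← Finset.sum_mul, hrow', hcol]
  exact hlf ((mul_eq_zero.1 this).resolve_left h2)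

end PairModule

section Quad

variable {α R : Type*} [DecidableEq α] [Field R] {ε : R}

lemma sub_apply_translates {a b c d u v y z : α} (hau : a ≠ u) (hav : a ≠ v) (hbu : b ≠ u)
    (hbv : b ≠ v) (hcy : c ≠ y) (hcz : c ≠ z) (hdy : d ≠ y) (hdz : d ≠ z) (f : α × α → R)
    (i j : α) :
    f (i, j) - f ((swap a b * swap u v) i, j) - f (i, (swap c d * swap y z) j)
        + f ((swap a b * swap u v) i, (swap c d * swap y z) j)
      = mixedDiff f a b c d * (basisDiff R a b i * basisDiff R c d j)
        + mixedDiff f a b y z * (basisDiff R a b i * basisDiff R y z j)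
        + mixedDiff f u v c d * (basisDiff R u v i * basisDiff R c d j)
        + mixedDiff f u v y z * (basisDiff R u v i * basisDiff R y z j) := by
  have first (j) := sub_apply_swap_mul_swap hau hav hbu hbv (fun i => f (i, j)) i
  have second (p) := sub_apply_swap_mul_swap hcy hcz hdy hdz (fun j => f (p, j)) j
  simp only [mixedDiff]
  linear_combination first j - first ((swap c d * swap y z) j)
    + basisDiff R a b i * (second a - second b) + basisDiff R u v i * (second u - second v)

/-- An alternating sum of translates of `f` which depends only on four mixed differences of `f`. -/
def alternatingTranslate (e : Fin 8 ↪ α) (f : α × α → R) : α × α → R :=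
  let g := swap (e 0) (e 1) * swap (e 4) (e 5)
  let h := swap (e 2) (e 3) * swap (e 6) (e 7)
  f - f ∘ Prod.map g g - f ∘ Prod.map h h + f ∘ Prod.map (g * h) (g * h)

lemma alternatingTranslate_apply (e : Fin 8 ↪ α) {f : α × α → R}
    (hf : ∀ i j, f (j, i) = ε * f (i, j)) (x : α × α) :
    alternatingTranslate e f x
      = mixedDiff f (e 0) (e 1) (e 2) (e 3) * quad ε (e 0) (e 1) (e 2) (e 3) x
        + mixedDiff f (e 0) (e 1) (e 6) (e 7) * quad ε (e 0) (e 1) (e 6) (e 7) x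
        + mixedDiff f (e 4) (e 5) (e 2) (e 3) * quad ε (e 4) (e 5) (e 2) (e 3) x
        + mixedDiff f (e 4) (e 5) (e 6) (e 7) * quad ε (e 4) (e 5) (e 6) (e 7) x := by
  have ne (i j : Fin 8) (hij : i ≠ j := by decide) : e i ≠ e j := e.injective.ne hij
  have disj : (swap (e 0) (e 1) * swap (e 4) (e 5)).Disjoint
      (swap (e 2) (e 3) * swap (e 6) (e 7)) := fun x => by
    simp only [Perm.mul_apply, swap_apply_def]
    grind
  have along (i j : α) := sub_apply_translates (ne 0 4) (ne 0 5) (ne 1 4) (ne 1 5) (ne 2 6)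
    (ne 2 7) (ne 3 6) (ne 3 7) f i j
  obtain ⟨i, j⟩ := x
  simp only [alternatingTranslate, Pi.add_apply, Pi.sub_apply, Function.comp_apply, Prod.map_apply,
    sub_translates_eq_of_disjoint disj, quad]
  linear_combination along i j + ε * along j i + hf j i
    - hf j ((swap (e 2) (e 3) * swap (e 6) (e 7)) i)
    - hf ((swap (e 0) (e 1) * swap (e 4) (e 5)) j) i
    + hf ((swap (e 0) (e 1) * swap (e 4) (e 5)) j) ((swap (e 2) (e 3) * swap (e 6) (e 7)) i)

variable [Fintype α] {B : Submodule R (α × α → R)}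

lemma alternatingTranslate_mem (hB : ∀ σ ∈ alternatingGroup α, ∀ v ∈ B, v ∘ Prod.map σ σ ∈ B)
    {f : α × α → R} (hf : f ∈ B) (e : Fin 8 ↪ α) : alternatingTranslate e f ∈ B := by
  have hσ (i j k l : Fin 8) (hij : i ≠ j := by decide) (hkl : k ≠ l := by decide) :=
    swap_mul_swap_mem_alternatingGroup (e.injective.ne hij) (e.injective.ne hkl)
  exact B.add_mem (B.sub_mem (B.sub_mem hf (hB _ (hσ 0 1 4 5) f hf)) (hB _ (hσ 2 3 6 7) f hf))
    (hB _ (mul_mem (hσ 0 1 4 5) (hσ 2 3 6 7)) f hf)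

/-- Two alternating translates sharing only the points of `s` isolate the quad along `s`. -/
lemma quad_mem (h2 : (2 : R) ≠ 0) (hα : 12 ≤ Fintype.card α)
    (hB : ∀ σ ∈ alternatingGroup α, ∀ v ∈ B, v ∘ Prod.map σ σ ∈ B) {f : α × α → R} (hf : f ∈ B)
    (hsymm : f ∈ hollowSymm α ε) {s : Fin 4 ↪ α}
    (hne : mixedDiff f (s 0) (s 1) (s 2) (s 3) ≠ 0) : quad ε (s 0) (s 1) (s 2) (s 3) ∈ B := by
  obtain ⟨e, he⟩ := exists_embedding_extending (show 4 ≤ 12 by omega) hα s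
  rw [← he 0, ← he 1, ← he 2, ← he 3] at hne ⊢
  let e₁ : Fin 8 ↪ α := (Fin.castLEEmb (by omega)).trans e
  let e₂ : Fin 8 ↪ α := .trans ⟨![0, 1, 2, 3, 8, 9, 10, 11], by decide⟩ e
  have hsymm' := alternatingTranslate_mem (fun σ _ v hv => comp_mem_hollowSymm hv σ) hsymm e₁
  have hmem := alternatingTranslate_mem hB (alternatingTranslate_mem hB hf e₁) e₂
  refine (B.smul_mem_iff (mul_ne_zero (mul_ne_zero h2 h2) hne)).1 ?_
  convert hmem using 1
  ext x
  rw [alternatingTranslate_apply e₂ hsymm'.1]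
  simp only [mixedDiff, alternatingTranslate_apply e₁ hsymm.1]
  simp only [Fin.isValue, Fin.castLE_zero, Fin.reduceCastLE, Pi.smul_apply, quad, basisDiff_apply,
    smul_eq_mul, Function.Embedding.trans_apply, Fin.castLEEmb_apply,
    Function.Embedding.coeFn_mk, Matrix.cons_val_zero, ↓reduceIte, e.injective.eq_iff, zero_ne_one,
    sub_zero, Matrix.cons_val, Fin.reduceEq, mul_one, sub_self, mul_zero, add_zero,
    Matrix.cons_val_one, one_ne_zero, zero_sub, mul_neg, neg_add_rev, neg_sub, neg_zero, neg_neg,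
    zero_mul, e₁, e₂]
  ring

end Quad

section CrossedHom

variable {H X A : Type*} [Group H] [AddCommGroup A]

/-- Crossed homomorphisms (1-cocycles) from `H` to the permutation module `X → A`, on which `H`
acts through `θ`. -/
def IsCrossedHom (θ : H →* Perm X) (c : H → X → A) : Prop :=
  ∀ g h x, c (g * h) x = c g x + c h ((θ g)⁻¹ x)

variable {θ : H →* Perm X} {c : H → X → A}

namespace IsCrossedHom

lemma map_one (hc : IsCrossedHom θ c) : c 1 = 0 :=
  funext fun x => by simpa using hc 1 1 x

lemma map_inv (hc : IsCrossedHom θ c) (g : H) (x : X) : c g⁻¹ x = -c g (θ g x) := by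
  have h := hc g⁻¹ g x
  rw [inv_mul_cancel, hc.map_one, MonoidHom.map_inv, inv_inv] at h
  exact eq_neg_of_add_eq_zero_left h.symm

lemma map_mul_of_mem_ker (hc : IsCrossedHom θ c) {m : H} (hm : m ∈ θ.ker) (h : H) :
    c (m * h) = c m + c h :=
  funext fun x => by simp [hc m h x, MonoidHom.mem_ker.1 hm]

lemma map_conj_of_mem_ker (hc : IsCrossedHom θ c) {m : H} (hm : m ∈ θ.ker) (g : H) (x : X) :
    c (g * m * g⁻¹) x = c m ((θ g)⁻¹ x) := by
  rw [hc, hc, hc.map_inv, map_mul, MonoidHom.mem_ker.1 hm]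
  simp

/-- The values of a crossed homomorphism on the kernel of the action. -/
def kerValues (hc : IsCrossedHom θ c) : AddSubgroup (X → A) where
  carrier := {v | ∃ m ∈ θ.ker, c m = v}
  zero_mem' := ⟨1, one_mem _, hc.map_one⟩
  add_mem' := by
    rintro _ _ ⟨m, hm, rfl⟩ ⟨n, hn, rfl⟩
    exact ⟨m * n, mul_mem hm hn, hc.map_mul_of_mem_ker hm n⟩
  neg_mem' := by
    rintro _ ⟨m, hm, rfl⟩
    exact ⟨m⁻¹, inv_mem hm, funext fun x => by simp [hc.map_inv, MonoidHom.mem_ker.1 hm]⟩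

lemma comp_mem_kerValues (hc : IsCrossedHom θ c) {v : X → A} (hv : v ∈ hc.kerValues) (g : H) :
    v ∘ θ g ∈ hc.kerValues := by
  obtain ⟨m, hm, rfl⟩ := hv
  refine ⟨g⁻¹ * m * g⁻¹⁻¹, θ.normal_ker.conj_mem m hm g⁻¹, funext fun x => ?_⟩
  rw [hc.map_conj_of_mem_ker hm, MonoidHom.map_inv, inv_inv, Function.comp_apply]

/-- If every value is attained on the kernel, then the elements at which `c` vanishes form a
supplement to it. -/
lemma eq_zero_of_forall_mem_kerValues (hc : IsCrossedHom θ c) {Q : Type*} [Group Q] {π : H →* Q}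
    (hπ : IsFrattiniCover π) (hker : θ.ker ≤ π.ker) (hmem : ∀ h, c h ∈ hc.kerValues) (h : H) :
    c h = 0 := by
  let K : Subgroup H :=
    { carrier := {h | c h = 0}
      one_mem' := hc.map_one
      mul_mem' := fun {g h} (hg : c g = 0) (hh : c h = 0) =>
        funext fun x => by simp [hc g h x, hg, hh]
      inv_mem' := fun {g} (hg : c g = 0) => funext fun x => by simp [hc.map_inv, hg] }
  have hK : K = ⊤ := by
    refine hπ.eq_top_of_map_eq_top K (eq_top_iff.2 fun q _ => ?_)
    obtain ⟨g, rfl⟩ := hπ.surjective q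
    obtain ⟨m, hm, hmg⟩ := hmem g
    refine ⟨m⁻¹ * g, funext fun x => ?_, by simp [MonoidHom.mem_ker.1 (hker hm)]⟩
    simp [hc.map_mul_of_mem_ker (inv_mem hm), hc.map_inv, hmg, MonoidHom.mem_ker.1 hm]
  exact (hK ▸ Subgroup.mem_top h : h ∈ K)

lemma sub_coboundary (hc : IsCrossedHom θ c) (f : X → A) :
    IsCrossedHom θ fun h => c h - (f - f ∘ ⇑(θ h)⁻¹) := fun g h x => by
  simp only [Pi.sub_apply, Function.comp_apply, hc g h, map_mul, mul_inv_rev, Perm.mul_apply]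
  abel

lemma exists_eq_sub (hc : IsCrossedHom θ c) {x₀ : X} (hθ : ∀ x, ∃ g, θ g x₀ = x)
    (hstab : ∀ g, θ g x₀ = x₀ → c g x₀ = 0) :
    ∃ y : X → A, ∀ h x, c h x = y x - y ((θ h)⁻¹ x) := by
  choose t ht using hθ
  have value_eq {g : H} {x : X} (hg : θ g x₀ = x) : c g x = c (t x) x := by
    have ht' : (θ (t x))⁻¹ x = x₀ := by rw [Perm.inv_eq_iff_eq, ht]
    have hsplit := hc (t x) ((t x)⁻¹ * g) x
    rwa [mul_inv_cancel_left, ht', hstab _ ?_, add_zero] at hsplit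
    rw [map_mul, Perm.mul_apply, hg, MonoidHom.map_inv, ht']
  refine ⟨fun x => c (t x) x, fun h x => ?_⟩
  have hsplit : c (h * t ((θ h)⁻¹ x)) x = c (t x) x := value_eq (by simp [ht])
  rw [hc] at hsplit
  exact eq_sub_of_add_eq hsplit

end IsCrossedHom

open Classical in
/-- Shapiro's lemma: a character of the stabilizer of `x₀` is the value at `x₀` of a crossed
homomorphism, supported on the orbit of `x₀`. -/
lemma exists_isCrossedHom_of_stabilizer_character (θ : H →* Perm X) {x₀ : X} {S : Subgroup H}
    (hS : ∀ h, h ∈ S ↔ θ h x₀ = x₀) (φ : S →* Multiplicative A) :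
    ∃ c : H → X → A, IsCrossedHom θ c ∧ ∀ h : S, c h x₀ = (φ h).toAdd := by
  let orbit : Set X := {x | ∃ g, θ g x₀ = x}
  have transversal (x : X) : ∃ t, (x ∈ orbit → θ t x₀ = x) ∧ (x = x₀ → t = 1) := by
    obtain rfl | hx := eq_or_ne x x₀
    · exact ⟨1, by simp⟩
    · by_cases horb : x ∈ orbit
      · exact ⟨horb.choose, fun _ => horb.choose_spec, fun h => absurd h hx⟩
      · exact ⟨1, fun h => absurd h horb, fun _ => rfl⟩
  choose t ht t_base using transversal
  have mem_orbit (h : H) (x : X) : (θ h)⁻¹ x ∈ orbit ↔ x ∈ orbit :=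
    ⟨fun ⟨g, hg⟩ => ⟨h * g, by simp [hg]⟩, fun ⟨g, hg⟩ => ⟨h⁻¹ * g, by simp [hg]⟩⟩
  let s (h : H) (x : X) : H := (t x)⁻¹ * h * t ((θ h)⁻¹ x)
  have s_mem (h : H) {x : X} (hx : x ∈ orbit) : s h x ∈ S := by
    rw [hS, map_mul, map_mul, MonoidHom.map_inv, Perm.mul_apply, Perm.mul_apply,
      ht _ ((mem_orbit h x).2 hx), Perm.inv_eq_iff_eq, ht x hx]
    simp
  refine ⟨fun h x => if hx : x ∈ orbit then (φ ⟨s h x, s_mem h hx⟩).toAdd else 0,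
    fun g h x => ?_, fun h => ?_⟩
  · by_cases hx : x ∈ orbit
    · have hx' := (mem_orbit g x).2 hx
      simp only [dif_pos hx, dif_pos hx', ← toAdd_mul, ← map_mul]
      congr 3
      simp only [s, map_mul, mul_inv_rev, Perm.mul_apply]
      group
    · simp only [dif_neg hx, dif_neg (mt (mem_orbit g x).1 hx), add_zero]
  · have hx₀ : x₀ ∈ orbit := ⟨1, by simp⟩
    have hh : (θ h)⁻¹ x₀ = x₀ := Perm.inv_eq_iff_eq.2 ((hS h).1 h.2).symm
    simp only [dif_pos hx₀, s, hh, t_base x₀ rfl, inv_one, one_mul, mul_one]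

end CrossedHom

section PerfectGroup

variable {G A : Type*} [Group G] [CommGroup A]

lemma map_eq_one_of_commutator_eq_top (hG : commutator G = ⊤) (φ : G →* A) (g : G) : φ g = 1 :=
  Abelianization.commutator_subset_ker φ (hG ▸ Subgroup.mem_top g)

lemma map_eq_one_of_ker_le_ker {P : Type*} [Group P] {ρ : G →* P} (hρ : Function.Surjective ρ)
    (hP : commutator P = ⊤) {φ : G →* A} (hφ : ρ.ker ≤ φ.ker) (g : G) : φ g = 1 := by
  rw [← MonoidHom.liftOfRightInverse_comp_apply ρ _ (Function.rightInverse_surjInv hρ) ⟨φ, hφ⟩ g]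
  exact map_eq_one_of_commutator_eq_top hP _ (ρ g)

lemma IsFrattiniCover.commutator_eq_top {Q : Type*} [Group Q] {π : G →* Q}
    (hπ : IsFrattiniCover π) (hQ : commutator Q = ⊤) : commutator G = ⊤ := by
  refine hπ.eq_top_of_map_eq_top _ ?_
  rw [commutator_def, Subgroup.map_commutator, ← MonoidHom.range_eq_map,
    MonoidHom.range_eq_top.2 hπ.surjective, ← commutator_def, hQ]

end PerfectGroup

section MixedDiff

variable {α R : Type*} [Fintype α] [Field R] {f : α × α → R}

/-- Here `f (i, j) = r i - r j` off the diagonal. -/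
lemma eq_zero_of_mixedDiff_eq_zero_of_neg (h2 : (2 : R) ≠ 0) (hα : 4 ≤ Fintype.card α)
    (hcard : (Fintype.card α : R) ≠ 0) (hf : f ∈ hollowSymm α (-1)) (hrow : rowSum α R f = 0)
    (hmixed : ∀ s : Fin 4 ↪ α, mixedDiff f (s 0) (s 1) (s 2) (s 3) = 0) : f = 0 := by
  obtain ⟨r, t, hrt⟩ := exists_add_of_mixedDiff_eq_zero hα hmixed
  have hneg (i j : α) (hij : i ≠ j) : (r i + t i) + (r j + t j) = 0 := by
    linear_combination hf.1 i j - hrt i j hij - hrt j i hij.symm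
  have ht (i : α) : t i = -r i := by
    obtain ⟨e, he⟩ := exists_embedding_extending (show 1 ≤ 3 by omega) (by omega : 3 ≤ _)
      ⟨![i], Function.injective_of_subsingleton _⟩
    obtain rfl : e 0 = i := he 0
    refine eq_neg_of_add_eq_zero_left ((mul_eq_zero.1 ?_).resolve_left h2)
    linear_combination hneg _ _ (e.injective.ne (show (0 : Fin 3) ≠ 1 by decide))
      + hneg _ _ (e.injective.ne (show (0 : Fin 3) ≠ 2 by decide))
      - hneg _ _ (e.injective.ne (show (1 : Fin 3) ≠ 2 by decide))
  have hf_eq (i j : α) : f (i, j) = r i - r j := by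
    obtain rfl | hij := eq_or_ne i j
    · rw [hf.2, sub_self]
    · rw [hrt i j hij, ht, sub_eq_add_neg]
  have hr (i : α) : Fintype.card α * r i = ∑ j, r j := by
    have hi : ∑ j, f (i, j) = 0 := congrFun hrow i
    simpa [hf_eq, Finset.sum_sub_distrib, sub_eq_zero] using hi
  ext ⟨i, j⟩
  rw [hf_eq, mul_left_cancel₀ hcard ((hr i).trans (hr j).symm), sub_self, Pi.zero_apply]

lemma exists_triangle_eq_of_mixedDiff_eq_zero (hα : 4 ≤ Fintype.card α) (hf : f ∈ hollowSymm α 1)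
    (hmixed : ∀ s : Fin 4 ↪ α, mixedDiff f (s 0) (s 1) (s 2) (s 3) = 0) :
    ∃ u : α → R, ∀ s : Fin 3 ↪ α, f (s 0, s 1) + f (s 0, s 2) - f (s 1, s 2) = u (s 0) := by
  obtain ⟨r, t, hrt⟩ := exists_add_of_mixedDiff_eq_zero hα hmixed
  refine ⟨r + t, fun s => ?_⟩
  have ne (i j : Fin 3) (hij : i ≠ j := by decide) : s i ≠ s j := s.injective.ne hij
  rw [Pi.add_apply]
  linear_combination hrt _ _ (ne 0 2) - hrt _ _ (ne 1 2) + hrt _ _ (ne 1 0) - hf.1 (s 0) (s 1)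

lemma eq_zero_of_triangle_eq_zero (h2 : (2 : R) ≠ 0) (hα : 3 ≤ Fintype.card α)
    (hf : f ∈ hollowSymm α 1)
    (htri : ∀ s : Fin 3 ↪ α, f (s 0, s 1) + f (s 0, s 2) - f (s 1, s 2) = 0) : f = 0 := by
  ext ⟨i, j⟩
  obtain rfl | hij := eq_or_ne i j
  · exact hf.2 i
  obtain ⟨e, he⟩ := exists_embedding_extending (show 2 ≤ 3 by omega) hα ⟨![i, j], by
    simpa [Function.Injective, Fin.forall_fin_two] using ⟨hij, hij.symm⟩⟩
  obtain rfl : e 0 = i := he 0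
  obtain rfl : e 1 = j := he 1
  have h₁ := htri (.trans ⟨![1, 0, 2], by decide⟩ e)
  refine (mul_eq_zero.1 ?_).resolve_left h2
  linear_combination htri e + (by simpa using h₁ : f (e 1, e 0) + f (e 1, e 2) - f (e 0, e 2) = 0)
    + hf.1 (e 1) (e 0)

end MixedDiff

section AlternatingExtension

variable {H α : Type*} [Group H] [Fintype α] [DecidableEq α]

/-- The action on points of an extension of the alternating group. -/
def pointAction (π : H →* alternatingGroup α) : H →* Perm α :=
  (alternatingGroup α).subtype.comp π

/-- The action on ordered pairs of an extension of the alternating group. -/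
def pairAction (π : H →* alternatingGroup α) : H →* Perm (α × α) where
  toFun h := prodCongr (pointAction π h) (pointAction π h)
  map_one' := by rw [map_one]; rfl
  map_mul' g h := by rw [map_mul]; rfl

variable {π : H →* alternatingGroup α}

lemma ker_pointAction : (pointAction π).ker = π.ker :=
  MonoidHom.ker_comp_of_injective _ _ (alternatingGroup α).subtype_injective

lemma pairAction_apply (h : H) (x : α × α) :
    pairAction π h x = (pointAction π h x.1, pointAction π h x.2) := rfl

lemma pairAction_inv_apply (h : H) (x : α × α) :
    (pairAction π h)⁻¹ x = ((pointAction π h)⁻¹ x.1, (pointAction π h)⁻¹ x.2) := rfl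

lemma ker_pairAction : (pairAction π).ker = π.ker := by
  rw [← ker_pointAction]
  ext h
  simp only [MonoidHom.mem_ker, Perm.ext_iff, Prod.forall, pairAction_apply, Perm.one_apply,
    Prod.mk.injEq]
  exact ⟨fun hh x => (hh x x).1, fun hh x y => ⟨hh x, hh y⟩⟩

lemma mem_supportedOn_compl_singleton {o : α} {h : H} :
    h ∈ supportedOn π {o}ᶜ ↔ pointAction π h o = o := by
  simp [mem_supportedOn, pointAction]

lemma mem_supportedOn_compl_pair {a b : α} {h : H} :
    h ∈ supportedOn π {a, b}ᶜ ↔ pairAction π h (a, b) = (a, b) := by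
  simp [mem_supportedOn, pointAction, pairAction_apply, or_iff_not_imp_left.symm, or_imp,
    forall_and]

lemma exists_pointAction_eq (hπ : Function.Surjective π) {σ : Perm α}
    (hσ : σ ∈ alternatingGroup α) : ∃ g, pointAction π g = σ := by
  obtain ⟨g, hg⟩ := hπ ⟨σ, hσ⟩
  exact ⟨g, by simp [pointAction, hg]⟩

variable {p : ℕ} [Fact p.Prime]

/-- Point sums of a crossed homomorphism are characters of the perfect group `H`, hence zero. -/
lemma eq_zero_of_isCrossedHom_pointAction (hπ : IsFrattiniCover π) (hα : 6 ≤ Fintype.card α)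
    (h2 : (2 : ZMod p) ≠ 0) (hcard : (Fintype.card α : ZMod p) ≠ 0) {c : H → α → ZMod p}
    (hc : IsCrossedHom (pointAction π) c) {m : H} (hm : m ∈ π.ker) : c m = 0 := by
  have hperf : commutator H = ⊤ := hπ.commutator_eq_top
    (commutator_alternatingGroup_eq_top (by rw [Nat.card_eq_fintype_card]; omega))
  let total : H →* Multiplicative (ZMod p) := MonoidHom.mk' (fun h => .ofAdd (∑ x, c h x))
    fun g h => by
      rw [← ofAdd_add]
      simp only [hc g h, Finset.sum_add_distrib]
      rw [Equiv.sum_comp (pointAction π g)⁻¹ (c h)]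
  have sum_eq_zero (h : H) : ∑ x, c h x = 0 :=
    congrArg Multiplicative.toAdd (map_eq_one_of_commutator_eq_top hperf total h)
  by_cases hconst : ∀ n ∈ π.ker, ∀ a b, c n a = c n b
  · ext x
    refine (mul_eq_zero.1 ?_).resolve_left hcard
    rw [← sum_eq_zero m, Finset.sum_congr rfl fun y _ => hconst m hm y x]
    simp
  · push Not at hconst
    obtain ⟨n, hn, a, b, hne⟩ := hconst
    refine hc.eq_zero_of_forall_mem_kerValues hπ ker_pointAction.le (fun h => ?_) m
    refine mem_of_sum_eq_zero_of_invariant (B := AddSubgroup.toZModSubmodule p hc.kerValues) h2 hα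
      (fun σ hσ v hv => ?_) ⟨n, ker_pointAction.ge hn, rfl⟩ hne (sum_eq_zero h)
    obtain ⟨g, rfl⟩ := exists_pointAction_eq hπ.surjective hσ
    exact hc.comp_mem_kerValues hv g

lemma character_eq_one_of_stabilizer_invariant [Finite H] (hπ : IsFrattiniCover π)
    (hα : 10 ≤ Fintype.card α) (hodd : Odd (Nat.card π.ker)) (h2 : (2 : ZMod p) ≠ 0)
    (hcard : (Fintype.card α : ZMod p) ≠ 0) {χ : π.ker →* Multiplicative (ZMod p)} {o : α}
    (hχ : ∀ g, pointAction π g o = o → ∀ m, χ (MulAut.conjNormal g m) = χ m) (m : π.ker) :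
    χ m = 1 := by
  obtain ⟨ρ, hρ, ker_ρ⟩ := exists_restriction hπ.surjective ({o}ᶜ : Finset α)
  have mem_ker (n : ρ.ker) : ((n : supportedOn π {o}ᶜ) : H) ∈ π.ker := ker_ρ.le n.2
  let ι : ρ.ker →* π.ker := ((supportedOn π {o}ᶜ).subtype.comp ρ.ker.subtype).codRestrict π.ker
    mem_ker
  have card_ker : Nat.card ρ.ker = Nat.card π.ker := by
    rw [ker_ρ]
    exact Nat.card_congr (Subgroup.subgroupOfEquivOfLe (ker_le_supportedOn π _)).toEquiv
  obtain ⟨ψ, hψ⟩ := exists_extend_ker_character hρ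
    (by rw [Fintype.card_coe, Finset.card_compl, Finset.card_singleton]; omega)
    (card_ker ▸ hodd) (χ.comp ι)
    fun g n => hχ g (mem_supportedOn_compl_singleton.1 g.2) (ι n)
  obtain ⟨c, hc, c_apply⟩ := exists_isCrossedHom_of_stabilizer_character (pointAction π)
    (fun _ => mem_supportedOn_compl_singleton) ψ
  let n : ρ.ker := ⟨⟨m, ker_le_supportedOn π _ m.2⟩, ker_ρ.ge m.2⟩
  have hzero : c m o = 0 :=
    congrFun (eq_zero_of_isCrossedHom_pointAction hπ (by omega) h2 hcard hc m.2) o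
  exact (hψ n).symm.trans (Multiplicative.toAdd.injective ((c_apply n).symm.trans hzero))

lemma IsCrossedHom.exists_eq_sub_pointAction {A : Type*} [AddCommGroup A]
    (hπ : Function.Surjective π) (hα : 6 ≤ Fintype.card α) {u : H → α → A}
    (hu : IsCrossedHom (pointAction π) u) (hker : ∀ m ∈ π.ker, u m = 0) :
    ∃ y : α → A, ∀ h x, u h x = y x - y ((pointAction π h)⁻¹ x) := by
  obtain ⟨o⟩ : Nonempty α := Fintype.card_pos_iff.1 (by omega)
  obtain ⟨ρ, hρ, ker_ρ⟩ := exists_restriction hπ ({o}ᶜ : Finset α)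
  refine hu.exists_eq_sub (x₀ := o) (fun x => ?_) fun g hg => ?_
  · obtain ⟨σ, hσ, hσx⟩ := exists_alternatingGroup_map_embedding (n := 1) (by omega)
      ⟨![o], Function.injective_of_subsingleton _⟩ ⟨![x], Function.injective_of_subsingleton _⟩
    obtain ⟨g, rfl⟩ := exists_pointAction_eq hπ hσ
    exact ⟨g, hσx 0⟩
  · let φ : supportedOn π {o}ᶜ →* Multiplicative A := MonoidHom.mk' (fun d => .ofAdd (u d o))
      fun d e => by
        rw [← ofAdd_add, Subgroup.coe_mul, hu,
          Perm.inv_eq_iff_eq.2 (mem_supportedOn_compl_singleton.1 d.2).symm]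
    have hperf : commutator (alternatingGroup ({o}ᶜ : Finset α)) = ⊤ :=
      commutator_alternatingGroup_eq_top (by
        rw [Nat.card_eq_fintype_card, Fintype.card_coe, Finset.card_compl, Finset.card_singleton]
        omega)
    exact congrArg Multiplicative.toAdd (map_eq_one_of_ker_le_ker (φ := φ) hρ hperf
      (fun d hd => congrArg Multiplicative.ofAdd (congrFun (hker d (ker_ρ.le hd)) o))
      ⟨g, mem_supportedOn_compl_singleton.2 hg⟩)

variable {ε : ZMod p} {c : H → α × α → ZMod p}

lemma isCrossedHom_rowSum (hc : IsCrossedHom (pairAction π) c) :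
    IsCrossedHom (pointAction π) fun h => rowSum α (ZMod p) (c h) := fun g h i => by
  simp only [rowSum_apply, hc g h, pairAction_inv_apply, Finset.sum_add_distrib]
  rw [Equiv.sum_comp (pointAction π g)⁻¹ fun j => c h ((pointAction π g)⁻¹ i, j)]

/-- The sum along a triangle with vertex `o` depends only on `o`, so it is a character of the
kernel invariant under the stabilizer of `o`. -/
lemma IsCrossedHom.triangle_eq_zero [Finite H] (hπ : IsFrattiniCover π)
    (hα : 10 ≤ Fintype.card α) (hodd : Odd (Nat.card π.ker)) (h2 : (2 : ZMod p) ≠ 0)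
    (hcard : (Fintype.card α : ZMod p) ≠ 0) (hc : IsCrossedHom (pairAction π) c)
    (hsymm : ∀ h, c h ∈ hollowSymm α 1)
    (hmixed : ∀ m ∈ π.ker, ∀ s : Fin 4 ↪ α, mixedDiff (c m) (s 0) (s 1) (s 2) (s 3) = 0)
    {m : H} (hm : m ∈ π.ker) (s : Fin 3 ↪ α) :
    c m (s 0, s 1) + c m (s 0, s 2) - c m (s 1, s 2) = 0 := by
  let χ : π.ker →* Multiplicative (ZMod p) :=
    MonoidHom.mk' (fun n => .ofAdd (c n (s 0, s 1) + c n (s 0, s 2) - c n (s 1, s 2)))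
      fun n n' => by
        rw [← ofAdd_add, Subgroup.coe_mul, hc.map_mul_of_mem_ker (ker_pairAction.ge n.2)]
        congr 1
        simp only [Pi.add_apply]
        ring
  refine congrArg Multiplicative.toAdd (character_eq_one_of_stabilizer_invariant (χ := χ) (o := s 0)
    hπ hα hodd h2 hcard (fun g hg n => congrArg Multiplicative.ofAdd ?_) ⟨m, hm⟩)
  obtain ⟨u, hu⟩ := exists_triangle_eq_of_mixedDiff_eq_zero (by omega) (hsymm n) (hmixed n n.2)
  have hs := hu (s.trans (pointAction π g)⁻¹.toEmbedding)
  simp only [Function.Embedding.trans_apply, Equiv.coe_toEmbedding,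
    Perm.inv_eq_iff_eq.2 hg.symm] at hs
  simp only [MulAut.conjNormal_apply, hc.map_conj_of_mem_ker (ker_pairAction.ge n.2),
    pairAction_inv_apply, Perm.inv_eq_iff_eq.2 hg.symm]
  rw [hs, hu s]

/-- After subtracting a coboundary, all row sums of `c` vanish, so that its values are combinations
of quads. -/
lemma IsCrossedHom.eq_zero_of_quad_mem (hπ : IsFrattiniCover π) (hα : 6 ≤ Fintype.card α)
    (h2 : (2 : ZMod p) ≠ 0) (hcard : (Fintype.card α : ZMod p) ≠ 0) (hε : ε * ε = 1)
    (hc : IsCrossedHom (pairAction π) c) (hsymm : ∀ h, c h ∈ hollowSymm α ε)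
    (hquad : ∀ s : Fin 4 ↪ α, quad ε (s 0) (s 1) (s 2) (s 3) ∈ hc.kerValues)
    {m : H} (hm : m ∈ π.ker) : c m = 0 := by
  obtain ⟨y, hy⟩ := (isCrossedHom_rowSum hc).exists_eq_sub_pointAction hπ.surjective hα fun n hn =>
    eq_zero_of_isCrossedHom_pointAction hπ hα h2 hcard (isCrossedHom_rowSum hc) hn
  let mean : ZMod p := (∑ j, y j) / Fintype.card α
  obtain ⟨f, hf, hfy⟩ := exists_rowSum_eq (α := α) (v := fun i => y i - mean) (by omega) hε (by
    rw [Finset.sum_sub_distrib, Finset.sum_const, Finset.card_univ, nsmul_eq_mul,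
      mul_div_cancel₀ _ hcard, sub_self])
  let c' (h : H) : α × α → ZMod p := c h - (f - f ∘ ⇑(pairAction π h)⁻¹)
  have hc' : IsCrossedHom (pairAction π) c' := hc.sub_coboundary f
  have c'_eq {n : H} (hn : n ∈ (pairAction π).ker) : c' n = c n := by
    simp only [c', MonoidHom.mem_ker.1 hn, inv_one, Perm.coe_one, Function.comp_id, sub_self,
      sub_zero]
  rw [← c'_eq (ker_pairAction.ge hm)]
  refine hc'.eq_zero_of_forall_mem_kerValues hπ ker_pairAction.le (fun h => ?_) m
  have hrow : rowSum α (ZMod p) (c' h) = 0 := by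
    ext i
    have hcomp : rowSum α (ZMod p) (f ∘ ⇑(pairAction π h)⁻¹)
        = rowSum α (ZMod p) f ∘ ⇑(pointAction π h)⁻¹ := rowSum_comp f _
    simp only [c', map_sub, hcomp, hfy, Pi.sub_apply, hy, Function.comp_apply, Pi.zero_apply]
    ring
  have hsymm' : c' h ∈ hollowSymm α ε :=
    Submodule.sub_mem _ (hsymm h) (Submodule.sub_mem _ hf (comp_mem_hollowSymm hf _))
  obtain ⟨n, hn, hnh⟩ : c' h ∈ AddSubgroup.toZModSubmodule p hc.kerValues :=
    mem_of_rowSum_eq_zero h2 (by omega) hquad hsymm' hrow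
  exact ⟨n, hn, (c'_eq hn).trans hnh⟩

lemma IsCrossedHom.quad_mem_kerValues (hπ : Function.Surjective π) (hα : 12 ≤ Fintype.card α)
    (h2 : (2 : ZMod p) ≠ 0) (hc : IsCrossedHom (pairAction π) c)
    {m : H} (hm : m ∈ π.ker) (hsymm : c m ∈ hollowSymm α ε) {s : Fin 4 ↪ α}
    (hne : mixedDiff (c m) (s 0) (s 1) (s 2) (s 3) ≠ 0) (t : Fin 4 ↪ α) :
    quad ε (t 0) (t 1) (t 2) (t 3) ∈ hc.kerValues := by
  have hinv : ∀ σ ∈ alternatingGroup α, ∀ v ∈ AddSubgroup.toZModSubmodule p hc.kerValues,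
      v ∘ Prod.map σ σ ∈ AddSubgroup.toZModSubmodule p hc.kerValues := fun σ hσ v hv => by
    obtain ⟨g, rfl⟩ := exists_pointAction_eq hπ hσ
    exact hc.comp_mem_kerValues hv g
  obtain ⟨σ, hσ, hσs⟩ := exists_alternatingGroup_map_embedding (by omega) t s
  rw [← quad_comp σ, hσs, hσs, hσs, hσs]
  exact hinv σ hσ _ (quad_mem h2 hα hinv ⟨m, ker_pairAction.ge hm, rfl⟩ hsymm hne)

lemma IsCrossedHom.eq_zero_of_mem_hollowSymm [Finite H] (hπ : IsFrattiniCover π)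
    (hα : 12 ≤ Fintype.card α) (hodd : Odd (Nat.card π.ker)) (h2 : (2 : ZMod p) ≠ 0)
    (hcard : (Fintype.card α : ZMod p) ≠ 0) (hε : ε = 1 ∨ ε = -1)
    (hc : IsCrossedHom (pairAction π) c) (hsymm : ∀ h, c h ∈ hollowSymm α ε) {m : H}
    (hm : m ∈ π.ker) : c m = 0 := by
  by_cases hmixed : ∀ n ∈ π.ker, ∀ s : Fin 4 ↪ α, mixedDiff (c n) (s 0) (s 1) (s 2) (s 3) = 0
  · obtain rfl | rfl := hε
    · exact eq_zero_of_triangle_eq_zero h2 (by omega) (hsymm m)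
        (hc.triangle_eq_zero hπ (by omega) hodd h2 hcard hsymm hmixed hm)
    · exact eq_zero_of_mixedDiff_eq_zero_of_neg h2 (by omega) hcard (hsymm m)
        (eq_zero_of_isCrossedHom_pointAction hπ (by omega) h2 hcard (isCrossedHom_rowSum hc) hm)
        (hmixed m hm)
  · push Not at hmixed
    obtain ⟨n, hn, s, hne⟩ := hmixed
    exact hc.eq_zero_of_quad_mem hπ (by omega) h2 hcard (by obtain rfl | rfl := hε <;> ring)
      hsymm (hc.quad_mem_kerValues hπ.surjective hα h2 hn (hsymm n) hne) hm

/-- Split the crossed homomorphism induced from `φ` into its symmetric and antisymmetric parts. -/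
lemma pair_character_eq_one [Finite H] (hπ : IsFrattiniCover π) (hα : 12 ≤ Fintype.card α)
    (hodd : Odd (Nat.card π.ker)) (h2 : (2 : ZMod p) ≠ 0)
    (hcard : (Fintype.card α : ZMod p) ≠ 0) {a b : α} (hab : a ≠ b)
    (φ : supportedOn π {a, b}ᶜ →* Multiplicative (ZMod p)) {m : supportedOn π {a, b}ᶜ}
    (hm : (m : H) ∈ π.ker) : φ m = 1 := by
  obtain ⟨c, hc, c_apply⟩ := exists_isCrossedHom_of_stabilizer_character (pairAction π)
    (fun _ => mem_supportedOn_compl_pair) φ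
  have part_eq_zero (ε : ZMod p) (hε : ε = 1 ∨ ε = -1) : c m (a, b) + ε * c m (b, a) = 0 := by
    have hεε : ε * ε = 1 := by obtain rfl | rfl := hε <;> ring
    let cε (h : H) (x : α × α) : ZMod p := if x.1 = x.2 then 0 else c h x + ε * c h (x.2, x.1)
    have hcε : IsCrossedHom (pairAction π) cε := fun g h x => by
      simp only [cε, pairAction_inv_apply, EmbeddingLike.apply_eq_iff_eq]
      split_ifs
      · simp
      · simp only [hc g h, pairAction_inv_apply]
        ring
    have hsymm (h : H) : cε h ∈ hollowSymm α ε := by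
      refine ⟨fun i j => ?_, fun i => by simp [cε]⟩
      simp only [cε, eq_comm (a := j)]
      split_ifs
      · simp
      · linear_combination (-c h (j, i)) * hεε
    simpa [cε, hab] using
      congrFun (hcε.eq_zero_of_mem_hollowSymm hπ hα hodd h2 hcard hε hsymm hm) (a, b)
  have hzero : 2 * c m (a, b) = 0 := by
    linear_combination part_eq_zero 1 (.inl rfl) + part_eq_zero (-1) (.inr rfl)
  exact Multiplicative.toAdd.injective
    ((c_apply m).symm.trans ((mul_eq_zero.1 hzero).resolve_left h2))

end AlternatingExtension

section FaithfulAction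

lemma exists_index_le_of_injective {G X : Type*} [Group G] [Finite X] {f : G →* Perm X}
    (hf : Function.Injective f) {N : Subgroup G} (hN : N ≠ ⊥) :
    ∃ S : Subgroup G, S.index ≤ Nat.card X ∧ ¬ N ≤ S := by
  obtain ⟨g, hgN, hg⟩ := N.bot_or_exists_ne_one.resolve_left hN
  obtain ⟨x, hx⟩ : ∃ x, f g x ≠ x := by
    by_contra! hfix
    exact hg (hf ((Perm.ext hfix).trans f.map_one.symm))
  let _ : MulAction G X := MulAction.compHom X f
  exact ⟨stabilizer G x, (index_stabilizer G x).trans_le (Set.ncard_le_card _),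
    fun hle => hx (hle hgN)⟩

end FaithfulAction

section FrattiniCover

variable {G Q : Type*} [Group G] [Group Q] {π : G →* Q}

lemma IsFrattiniCover.ker_le_frattini (hπ : IsFrattiniCover π) : π.ker ≤ frattini G := by
  refine le_iInf₂ fun K hK => ?_
  by_contra hle
  refine hK.1 (hπ.eq_top_of_map_eq_top K ?_)
  have hsup : K ⊔ π.ker = ⊤ := hK.2 _ (left_lt_sup.2 hle)
  calc K.map π = (K ⊔ π.ker).map π := by
        rw [Subgroup.map_sup, (Subgroup.map_eq_bot_iff _).2 le_rfl, sup_bot_eq]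
    _ = ⊤ := by rw [hsup, ← MonoidHom.range_eq_map, MonoidHom.range_eq_top.2 hπ.surjective]

lemma IsFrattiniCover.isNilpotent_ker [Finite G] (hπ : IsFrattiniCover π) :
    Group.IsNilpotent π.ker :=
  have : Group.IsNilpotent (frattini G) := frattini_nilpotent
  Group.nilpotent_of_mulEquiv (Subgroup.subgroupOfEquivOfLe hπ.ker_le_frattini)

lemma exists_isFrattiniCover_restrict [Finite G] (hπ : Function.Surjective π) :
    ∃ K : Subgroup G, IsFrattiniCover (π.comp K.subtype) := by
  obtain ⟨K, hK, hmin⟩ := (Set.toFinite {K : Subgroup G | K.map π = ⊤}).exists_minimal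
    ⟨⊤, (MonoidHom.range_eq_map π).symm.trans (MonoidHom.range_eq_top.2 hπ)⟩
  refine ⟨K, ?_, fun L hL => ?_⟩
  · exact MonoidHom.range_eq_top.1
      ((MonoidHom.range_comp _ _).trans ((congrArg _ K.range_subtype).trans hK))
  · have hle : K ≤ L.map K.subtype :=
      hmin ((Subgroup.map_map ..).trans hL : (L.map K.subtype).map π = ⊤)
        (Subgroup.map_subtype_le L)
    rwa [← Subgroup.comap_map_eq_self_of_injective K.subtype_injective L, ← Subgroup.subgroupOf,
      Subgroup.subgroupOf_eq_top]

lemma isComplement'_ker_of_surjective_restrict {K : Subgroup G}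
    (hK : Function.Surjective (π.comp K.subtype)) (hker : (π.comp K.subtype).ker = ⊥) :
    π.ker.IsComplement' K := by
  refine Subgroup.isComplement'_of_disjoint_and_mul_eq_univ (Subgroup.subgroupOf_eq_bot.1 hker)
    (Set.eq_univ_of_forall fun g => ?_)
  obtain ⟨h, hh⟩ := hK (π g)
  have hhg : π h = π g := hh
  exact ⟨g * (h : G)⁻¹, by simp [MonoidHom.mem_ker, hhg], h, h.2, by group⟩

lemma card_ker_restrict_dvd (K : Subgroup G) :
    Nat.card (π.comp K.subtype).ker ∣ Nat.card π.ker := by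
  rw [← Subgroup.card_map_of_injective K.subtype_injective]
  exact Subgroup.card_dvd_of_le (Subgroup.map_le_iff_le_comap.2 le_rfl)

end FrattiniCover

lemma natCast_ne_zero_of_coprime {m n p t : ℕ} (hmn : m.Coprime n) (hp : p.Prime) (hpn : p ∣ n)
    (ht : t ∣ m) : (t : ZMod p) ≠ 0 := fun h =>
  hp.one_lt.ne' (Nat.eq_one_of_dvd_coprimes hmn (((ZMod.natCast_eq_zero_iff t p).1 h).trans ht) hpn)

lemma IsFrattiniCover.le_two_mul_card {H α X : Type*} [Group H] [Finite H] [Fintype α]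
    [DecidableEq α] [Finite X] {π : H →* alternatingGroup α} (hπ : IsFrattiniCover π)
    (hα : 23 ≤ Fintype.card α) (hker : π.ker ≠ ⊥)
    (hcop : (2 * Fintype.card α).Coprime (Nat.card π.ker)) {f : H →* Perm X}
    (hf : Function.Injective f) :
    Fintype.card α * (Fintype.card α - 1) * (Fintype.card α - 2) ≤ 2 * Nat.card X := by
  by_contra! hlt
  have hodd : Odd (Nat.card π.ker) := Nat.coprime_two_left.1 hcop.coprime_mul_right
  have := hπ.isNilpotent_ker
  obtain ⟨S, hindex, hS⟩ := exists_index_le_of_injective hf hker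
  obtain ⟨a, b, hab, p, hp, hdvd, φ, m, hm, hφ⟩ :=
    exists_pair_character hπ hα hodd hS (by omega)
  have : Fact p.Prime := ⟨hp⟩
  exact hφ (pair_character_eq_one hπ (by omega) hodd
    (mod_cast natCast_ne_zero_of_coprime hcop hp hdvd (dvd_mul_right _ _))
    (natCast_ne_zero_of_coprime hcop hp hdvd (dvd_mul_left _ _)) hab φ hm)

/-- **Theorem (Guralnick–Liebeck, Theorem 2.2).**
Let `k > 22` and let `H` be a nonsplit extension `1 → M → H → A_k → 1` with `M ≠ 1` and
`gcd(2k, |M|) = 1`. Then any faithful permutation representation of `H` has degree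
`n ≥ k(k-1)(k-2)/2` (stated as `2 * n ≥ k(k-1)(k-2)`, noting `k(k-1)(k-2)` is even),
i.e. the minimal faithful permutation degree `P(H)` satisfies `P(H) ≥ k(k-1)(k-2)/2`. -/
theorem nonsplit_extension_odd_order_kernel_min_degree
    (k : ℕ) (hk : 22 < k)
    (H : Type*) [Group H] [Finite H]
    (M : Subgroup H) [M.Normal] (hM : M ≠ ⊥)
    (hgcd : Nat.gcd (2 * k) (Nat.card M) = 1)
    (iso : H ⧸ M ≃* alternatingGroup (Fin k))
    (nonsplit : ¬ ∃ K : Subgroup H, M.IsComplement' K)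
    (n : ℕ) (f : H →* Equiv.Perm (Fin n)) (hf : Function.Injective f) :
    k * (k - 1) * (k - 2) ≤ 2 * n := by
  let π : H →* alternatingGroup (Fin k) := iso.toMonoidHom.comp (QuotientGroup.mk' M)
  have hπ : Function.Surjective π := iso.surjective.comp (QuotientGroup.mk'_surjective M)
  have hπM : π.ker = M :=
    (MonoidHom.ker_comp_of_injective _ _ iso.injective).trans (QuotientGroup.ker_mk' M)
  rw [← hπM] at hgcd nonsplit
  obtain ⟨K, hK⟩ := exists_isFrattiniCover_restrict hπ
  have hker : (π.comp K.subtype).ker ≠ ⊥ := fun hbot =>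
    nonsplit ⟨K, isComplement'_ker_of_surjective_restrict hK.surjective hbot⟩
  have hcop : (2 * k).Coprime (Nat.card (π.comp K.subtype).ker) :=
    Nat.Coprime.coprime_dvd_right (card_ker_restrict_dvd K) hgcd
  simpa using hK.le_two_mul_card (f := f.comp K.subtype)
    (hk.trans_eq (Fintype.card_fin k).symm) hker (by simpa using hcop)
    (hf.comp K.subtype_injective)
end

section
/- Let p be an odd prime dividing k, with k ≥ 10, and let F = 𝔽_p. Then the Specht module S^(k-2,1,1) for S_k over F has dimension (k-1)(k-2)/2, is indecomposable with socle isomorphic to the irreducible module D^(k-1,1) (of dimension k-2) and head isomorphic to D^(k-2,1,1) (of dimension (k-2)(k-3)/2). -/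
/-!
We use the following concrete (James) models for `S_k`-modules over `F = 𝔽_p`.
The permutation module `M^(k-2,1,1)` has basis the (k-2,1,1)-tabloids, i.e. ordered pairs
of distinct points; the Specht module `S^(k-2,1,1)` is its submodule of antisymmetric
functions whose row sums vanish. `D^λ = S^λ/(S^λ ∩ (S^λ)^⊥)` where the bilinear form
makes the tabloid basis orthonormal; for `λ = (k-1,1)` and `p ∣ k` this is the quotient
of the zero-sum submodule of `F^k` by the constants.
-/

open Equiv

/-- Permutation representation of `G` on `X → F` from an action of `G` on `X`. -/
def permRep (F G X : Type*) [CommRing F] [Group G] [MulAction G X] :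
    Representation F G (X → F) where
  toFun g := LinearMap.funLeft F F (fun x => g⁻¹ • x)
  map_one' := by ext v x; simp
  map_mul' g h := by ext v x; simp [LinearMap.funLeft, mul_smul]

variable {F G V : Type*} [CommRing F] [Group G] [AddCommGroup V] [Module F V]

/-- A submodule invariant under a representation. -/
def InvSub (ρ : Representation F G V) (U : Submodule F V) : Prop :=
  ∀ g, ∀ v ∈ U, ρ g v ∈ U

/-- An irreducible (simple) invariant submodule. -/
def IsIrreducibleSub (ρ : Representation F G V) (U : Submodule F V) : Prop :=
  InvSub ρ U ∧ U ≠ ⊥ ∧ ∀ W ≤ U, InvSub ρ W → W = ⊥ ∨ W = U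

/-- The socle of the invariant submodule `S`: the sum of all irreducible invariant
submodules contained in `S`. -/
def socIn (ρ : Representation F G V) (S : Submodule F V) : Submodule F V :=
  sSup {U | U ≤ S ∧ IsIrreducibleSub ρ U}

/-- The radical of the invariant submodule `S`: the intersection of all maximal proper
invariant submodules of `S` (so `S/radIn ρ S` is the head of `S`). -/
def radIn (ρ : Representation F G V) (S : Submodule F V) : Submodule F V :=
  sInf {U | U ≤ S ∧ InvSub ρ U ∧ U ≠ S ∧
    ∀ W, U ≤ W → W ≤ S → InvSub ρ W → W = U ∨ W = S}

/-- `S` is an indecomposable invariant submodule. -/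
def IsIndecomposableSub (ρ : Representation F G V) (S : Submodule F V) : Prop :=
  ¬ ∃ U W : Submodule F V, InvSub ρ U ∧ InvSub ρ W ∧ U ≠ ⊥ ∧ W ≠ ⊥ ∧
      U ⊓ W = ⊥ ∧ U ⊔ W = S

/-- The subrepresentation on an invariant submodule. -/
def subRep (ρ : Representation F G V) (U : Submodule F V)
    (hU : InvSub ρ U) : Representation F G U where
  toFun g := (ρ g).restrict (hU g)
  map_one' := by ext v; simp [LinearMap.restrict_apply]
  map_mul' g h := by ext v; simp [LinearMap.restrict_apply]

/-- The quotient representation on `V ⧸ U` for an invariant submodule `U`. -/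
def quotRep (ρ : Representation F G V) (U : Submodule F V)
    (hU : InvSub ρ U) : Representation F G (V ⧸ U) where
  toFun g := U.mapQ U (ρ g) (fun v hv => hU g v hv)
  map_one' := by
    refine Submodule.linearMap_qext _ ?_
    ext v; simp
  map_mul' g h := by
    refine Submodule.linearMap_qext _ ?_
    ext v; simp [Submodule.mapQ_apply]

/-- Ordered pairs of distinct elements of `Fin k`, i.e. `(k-2,1,1)`-tabloids. -/
def OP (k : ℕ) := {q : Fin k × Fin k // q.1 ≠ q.2}

instance (k : ℕ) : Fintype (OP k) := Subtype.fintype _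
instance (k : ℕ) : DecidableEq (OP k) := Subtype.instDecidableEq

instance (k : ℕ) : MulAction (Equiv.Perm (Fin k)) (OP k) where
  smul g q := ⟨(g q.1.1, g q.1.2), fun hgq => q.2 (g.injective hgq)⟩
  one_smul q := by cases q; rfl
  mul_smul g h q := by cases q; rfl

/-- Transposing an ordered pair. -/
def swapOP {k : ℕ} (q : OP k) : OP k := ⟨(q.1.2, q.1.1), fun h => q.2 h.symm⟩

/-- Antisymmetric functions on ordered pairs. -/
noncomputable def antisymSub (k : ℕ) (F : Type*) [CommRing F] : Submodule F (OP k → F) :=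
  ⨅ q : OP k, LinearMap.ker
    ((LinearMap.proj q : (OP k → F) →ₗ[F] F) + LinearMap.proj (swapOP q))

/-- Functions on ordered pairs whose row sums vanish. -/
noncomputable def rowZeroSub (k : ℕ) (F : Type*) [CommRing F] : Submodule F (OP k → F) :=
  ⨅ i : Fin k, LinearMap.ker
    (∑ q ∈ Finset.univ.filter (fun q : OP k => q.1.1 = i),
      (LinearMap.proj q : (OP k → F) →ₗ[F] F))

/-- The Specht module `S^(k-2,1,1)` inside the tabloid permutation module. -/
noncomputable def spechtHook (k : ℕ) (F : Type*) [CommRing F] : Submodule F (OP k → F) :=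
  antisymSub k F ⊓ rowZeroSub k F

lemma antisym_inv (k : ℕ) (F : Type*) [CommRing F] :
    InvSub (permRep F (Equiv.Perm (Fin k)) (OP k)) (antisymSub k F) := by
  intro g v hv
  simp only [antisymSub, Submodule.mem_iInf, LinearMap.mem_ker, LinearMap.add_apply,
    LinearMap.proj_apply] at hv ⊢
  intro q
  exact hv (g⁻¹ • q)

lemma rowZero_inv (k : ℕ) (F : Type*) [CommRing F] :
    InvSub (permRep F (Equiv.Perm (Fin k)) (OP k)) (rowZeroSub k F) := by
  intro g v hv
  simp only [rowZeroSub, Submodule.mem_iInf, LinearMap.mem_ker, LinearMap.sum_apply,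
    LinearMap.proj_apply] at hv ⊢
  intro i
  rw [← hv (g⁻¹ i)]
  refine Finset.sum_nbij' (fun q => g⁻¹ • q) (fun q => g • q) ?_ ?_ ?_ ?_ ?_
  · intro q hq
    simp only [Finset.mem_filter, Finset.mem_univ, true_and] at hq ⊢
    show g⁻¹ q.1.1 = g⁻¹ i
    rw [hq]
  · intro q hq
    simp only [Finset.mem_filter, Finset.mem_univ, true_and] at hq ⊢
    show g q.1.1 = i
    rw [hq]; simp
  · intro q _; exact smul_inv_smul g q
  · intro q _; exact inv_smul_smul g q
  · intro q _; rfl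

lemma spechtHook_inv (k : ℕ) (F : Type*) [CommRing F] :
    InvSub (permRep F (Equiv.Perm (Fin k)) (OP k)) (spechtHook k F) :=
  fun g v hv => ⟨antisym_inv k F g v hv.1, rowZero_inv k F g v hv.2⟩

/-- The linear functional `v ↦ ∑_q w q * v q` (the standard bilinear form against `w`). -/
noncomputable def formMap {X : Type*} [Fintype X] [DecidableEq X] (F : Type*) [CommRing F]
    (w : X → F) : (X → F) →ₗ[F] F :=
  ∑ q : X, w q • (LinearMap.proj q : (X → F) →ₗ[F] F)

/-- The orthogonal complement of `U` with respect to the standard form. -/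
noncomputable def perpSub {X : Type*} [Fintype X] [DecidableEq X] (F : Type*) [CommRing F]
    (U : Submodule F (X → F)) : Submodule F (X → F) :=
  ⨅ w : U, LinearMap.ker (formMap F (w : X → F))

lemma spechtHook_perp_inv (k : ℕ) (F : Type*) [CommRing F] :
    InvSub (permRep F (Equiv.Perm (Fin k)) (OP k))
      (spechtHook k F ⊓ perpSub F (spechtHook k F)) := by
  intro g v hv
  refine ⟨spechtHook_inv k F g v hv.1, ?_⟩
  have hv2 : ∀ w : (spechtHook k F), ∑ q : OP k, (w : OP k → F) q * v q = 0 := by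
    intro w
    have h2 := hv.2
    rw [perpSub] at h2
    have := (Submodule.mem_iInf _).mp h2 w
    simpa only [LinearMap.mem_ker, formMap, LinearMap.sum_apply,
      LinearMap.smul_apply, LinearMap.proj_apply, smul_eq_mul] using this
  rw [perpSub]
  refine (Submodule.mem_iInf _).mpr fun w => ?_
  simp only [LinearMap.mem_ker, formMap, LinearMap.sum_apply,
    LinearMap.smul_apply, LinearMap.proj_apply, smul_eq_mul]
  have h1 : ∀ q : OP k,
      (w : OP k → F) q * permRep F (Equiv.Perm (Fin k)) (OP k) g v q
        = (w : OP k → F) q * v (g⁻¹ • q) := fun q => rfl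
  calc ∑ q : OP k, (w : OP k → F) q * permRep F (Equiv.Perm (Fin k)) (OP k) g v q
      = ∑ q : OP k, (w : OP k → F) (g • q) * v q := by
        simp only [h1]
        exact Fintype.sum_equiv (MulAction.toPerm g).symm _ _ (fun q => by
          simp [MulAction.toPerm])
    _ = 0 := by
        have hw : permRep F (Equiv.Perm (Fin k)) (OP k) g⁻¹ (w : OP k → F) ∈
            spechtHook k F := spechtHook_inv k F g⁻¹ w w.2
        have := hv2 ⟨_, hw⟩
        rw [← this]
        exact Finset.sum_congr rfl fun q _ => by
          simp [permRep, LinearMap.funLeft, mul_comm]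

/-- The sum-of-coordinates functional on `F^k`. -/
noncomputable def sumFunctional (k : ℕ) (F : Type*) [CommRing F] :
    (Fin k → F) →ₗ[F] F := ∑ i : Fin k, LinearMap.proj i

/-- The zero-sum submodule of `F^k`, i.e. the Specht module `S^(k-1,1)`. -/
noncomputable def zeroSum (k : ℕ) (F : Type*) [CommRing F] : Submodule F (Fin k → F) :=
  LinearMap.ker (sumFunctional k F)

/-- The line of constant functions in `F^k`. -/
def constLine (k : ℕ) (F : Type*) [CommRing F] : Submodule F (Fin k → F) :=
  Submodule.span F {fun _ => (1 : F)}

lemma zeroSum_inv (k : ℕ) (F : Type*) [CommRing F] :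
    InvSub (permRep F (Equiv.Perm (Fin k)) (Fin k)) (zeroSum k F) := by
  intro g v hv
  simp only [zeroSum, LinearMap.mem_ker, sumFunctional, LinearMap.sum_apply,
    LinearMap.proj_apply] at hv ⊢
  rw [← hv]
  exact Fintype.sum_equiv g⁻¹ _ _ (fun i => rfl)

lemma constLine_comap_inv (k : ℕ) (F : Type*) [CommRing F] :
    InvSub (subRep (permRep F (Equiv.Perm (Fin k)) (Fin k)) (zeroSum k F) (zeroSum_inv k F))
      ((constLine k F).comap (zeroSum k F).subtype) := by
  intro g v hv
  simp only [Submodule.mem_comap, Submodule.subtype_apply] at hv ⊢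
  rw [constLine, Submodule.mem_span_singleton] at hv ⊢
  obtain ⟨c, hc⟩ := hv
  refine ⟨c, ?_⟩
  show _ = permRep F (Equiv.Perm (Fin k)) (Fin k) g (v : Fin k → F)
  rw [← hc]
  rfl

section Model

variable (k p : ℕ) [Fact p.Prime]

/-- The irreducible module `D^(k-1,1)` (for `p ∣ k`): zero-sum vectors modulo constants. -/
noncomputable def Dk11 := (zeroSum k (ZMod p)) ⧸
  ((constLine k (ZMod p)).comap (zeroSum k (ZMod p)).subtype)

noncomputable instance : AddCommGroup (Dk11 k p) :=
  inferInstanceAs (AddCommGroup ((zeroSum k (ZMod p)) ⧸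
    ((constLine k (ZMod p)).comap (zeroSum k (ZMod p)).subtype)))

noncomputable instance : Module (ZMod p) (Dk11 k p) :=
  inferInstanceAs (Module (ZMod p) ((zeroSum k (ZMod p)) ⧸
    ((constLine k (ZMod p)).comap (zeroSum k (ZMod p)).subtype)))

/-- The representation of `S_k` on `D^(k-1,1)`. -/
noncomputable def Dk11Rep : Representation (ZMod p) (Equiv.Perm (Fin k)) (Dk11 k p) :=
  quotRep (subRep (permRep (ZMod p) (Equiv.Perm (Fin k)) (Fin k)) (zeroSum k (ZMod p))
      (zeroSum_inv k (ZMod p)))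
    ((constLine k (ZMod p)).comap (zeroSum k (ZMod p)).subtype)
    (constLine_comap_inv k (ZMod p))

/-- The irreducible module `D^(k-2,1,1) = S^(k-2,1,1)/(S ∩ S^⊥)`. -/
noncomputable def Dk211 := (spechtHook k (ZMod p)) ⧸
  ((spechtHook k (ZMod p) ⊓ perpSub (ZMod p) (spechtHook k (ZMod p))).comap
    (spechtHook k (ZMod p)).subtype)

noncomputable instance : AddCommGroup (Dk211 k p) :=
  inferInstanceAs (AddCommGroup ((spechtHook k (ZMod p)) ⧸
    ((spechtHook k (ZMod p) ⊓ perpSub (ZMod p) (spechtHook k (ZMod p))).comap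
      (spechtHook k (ZMod p)).subtype)))

noncomputable instance : Module (ZMod p) (Dk211 k p) :=
  inferInstanceAs (Module (ZMod p) ((spechtHook k (ZMod p)) ⧸
    ((spechtHook k (ZMod p) ⊓ perpSub (ZMod p) (spechtHook k (ZMod p))).comap
      (spechtHook k (ZMod p)).subtype)))

lemma spechtHook_perp_comap_inv :
    InvSub (subRep (permRep (ZMod p) (Equiv.Perm (Fin k)) (OP k)) (spechtHook k (ZMod p))
        (spechtHook_inv k (ZMod p)))
      ((spechtHook k (ZMod p) ⊓ perpSub (ZMod p) (spechtHook k (ZMod p))).comap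
        (spechtHook k (ZMod p)).subtype) := by
  intro g v hv
  simp only [Submodule.mem_comap, Submodule.subtype_apply] at hv ⊢
  exact spechtHook_perp_inv k (ZMod p) g (v : OP k → ZMod p) hv

/-- The representation of `S_k` on `D^(k-2,1,1)`. -/
noncomputable def Dk211Rep : Representation (ZMod p) (Equiv.Perm (Fin k)) (Dk211 k p) :=
  quotRep _ _ (spechtHook_perp_comap_inv k p)

end Model

/-!
The form pairs a polytabloid `e` of shape `(k-2,1,1)` with `v` so that `κ v = ⟪e, v⟫ • e`, where `κ`
is the signed sum over the column stabilizer of `e`. Hence (James' submodule theorem) an invariant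
submodule either contains the Specht module `S` or lies in `S^⊥`. An antisymmetric `v` is orthogonal
to all polytabloids iff `v (a, b) + v (b, c) + v (c, a) = 0` for all `a b c`, i.e. iff
`v (i, j) = w i - w j` for some `w`; so `S ∩ S^⊥` is the image of the zero-sum vectors, a copy of
`D^(k-1,1)`, and it contains every proper invariant submodule of `S`. The same argument for
`S^(k-1,1)`, with `w - (a b) w = (w a - w b) • (e_a - e_b)`, shows that `S ∩ S^⊥` is irreducible,
so `S` is uniserial of length two.
-/

open scoped Matrix

section InvariantSubmodules

variable {ρ : Representation F G V} {S T : Submodule F V}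

lemma isIndecomposableSub_of_forall_le (hT : T ≠ ⊥)
    (hmin : ∀ U ≤ S, InvSub ρ U → U ≠ ⊥ → T ≤ U) : IsIndecomposableSub ρ S := by
  rintro ⟨U, W, hU, hW, hU_ne, hW_ne, hinf, hsup⟩
  have hTU : T ≤ U := hmin U (hsup ▸ le_sup_left) hU hU_ne
  have hTW : T ≤ W := hmin W (hsup ▸ le_sup_right) hW hW_ne
  exact hT (le_bot_iff.mp (hinf ▸ le_inf hTU hTW))

lemma socIn_eq_of_forall_le (hTS : T ≤ S) (hTinv : InvSub ρ T) (hT : T ≠ ⊥)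
    (hmin : ∀ U ≤ S, InvSub ρ U → U ≠ ⊥ → T ≤ U) : socIn ρ S = T := by
  refine le_antisymm (sSup_le ?_) (le_sSup ⟨hTS, hTinv, hT, fun W hWT hW => ?_⟩)
  · rintro U ⟨hUS, hU, hU_ne, hU_simple⟩
    exact ((hU_simple T (hmin U hUS hU hU_ne) hTinv).resolve_left hT).ge
  · exact or_iff_not_imp_left.mpr fun hW_ne =>
      le_antisymm hWT (hmin W (hWT.trans hTS) hW hW_ne)

lemma radIn_eq_of_forall_le (hTS : T ≤ S) (hTinv : InvSub ρ T) (hT : T ≠ S)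
    (hmax : ∀ U ≤ S, InvSub ρ U → U ≠ S → U ≤ T) : radIn ρ S = T := by
  refine le_antisymm (sInf_le ⟨hTS, hTinv, hT, fun W hTW hWS hW => ?_⟩) (le_sInf ?_)
  · exact or_iff_not_imp_right.mpr fun hW_ne => le_antisymm (hmax W hWS hW hW_ne) hTW
  · rintro U ⟨hUS, hU, hU_ne, hU_max⟩
    exact ((hU_max T (hmax U hUS hU hU_ne) hTS hTinv).resolve_right hT).le

lemma exists_injective_range_eq_map {V' : Type*} [AddCommGroup V'] [Module F V']
    {σ : Representation F G V'} {f : V →ₗ[F] V'} (hf : ∀ g v, f (ρ g v) = σ g (f v))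
    (hS : InvSub ρ S) {Q : Submodule F S} (hQ : InvSub (subRep ρ S hS) Q)
    (hker : (LinearMap.ker f).comap S.subtype = Q) :
    ∃ ψ : (S ⧸ Q) →ₗ[F] V', Function.Injective ψ ∧ LinearMap.range ψ = S.map f ∧
      ∀ g x, ψ (quotRep (subRep ρ S hS) Q hQ g x) = σ g (ψ x) := by
  have hker' : Q = LinearMap.ker (f ∘ₗ S.subtype) := by rw [LinearMap.ker_comp, hker]
  refine ⟨Q.liftQ (f ∘ₗ S.subtype) hker'.le, ?_, ?_, fun g x => ?_⟩
  · exact LinearMap.ker_eq_bot.mp (Submodule.ker_liftQ_eq_bot' _ _ hker')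
  · rw [Submodule.range_liftQ, LinearMap.range_comp, Submodule.range_subtype]
  · obtain ⟨v, rfl⟩ := Submodule.Quotient.mk_surjective Q x
    exact hf g v

lemma exists_map_eq_top_ker_inf_eq {K V : Type*} [Field K] [AddCommGroup V] [Module K V]
    {ρ : Representation K G V} {S : Submodule K V} (hS : InvSub ρ S) {P : Submodule K V}
    (hP : InvSub (subRep ρ S hS) (P.comap S.subtype)) :
    ∃ φ : V →ₗ[K] S ⧸ P.comap S.subtype, S.map φ = ⊤ ∧ LinearMap.ker φ ⊓ S = P ⊓ S ∧
      ∀ g, ∀ v ∈ S, φ (ρ g v) = quotRep (subRep ρ S hS) (P.comap S.subtype) hP g (φ v) := by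
  obtain ⟨φ, hφ⟩ := LinearMap.exists_extend (P.comap S.subtype).mkQ
  have hφ_mk (v : V) (hv : v ∈ S) : φ v = (P.comap S.subtype).mkQ ⟨v, hv⟩ :=
    LinearMap.congr_fun hφ ⟨v, hv⟩
  refine ⟨φ, ?_, ?_, fun g v hv => ?_⟩
  · have hrange := congrArg LinearMap.range hφ
    rwa [LinearMap.range_comp, Submodule.range_subtype, Submodule.range_mkQ] at hrange
  · ext v
    refine and_congr_left fun hv => ?_
    rw [SetLike.mem_coe, LinearMap.mem_ker, hφ_mk v hv, Submodule.mkQ_apply,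
      Submodule.Quotient.mk_eq_zero]
    rfl
  · rw [hφ_mk v hv, hφ_mk _ (hS g v hv)]
    rfl

end InvariantSubmodules

lemma permRep_single {X : Type*} [MulAction G X] [DecidableEq X] (g : G) (x : X) (c : F) :
    permRep F G X g (Pi.single x c) = Pi.single (g • x) c := by
  ext y
  simp [permRep, Pi.single_apply, inv_smul_eq_iff]

lemma permRep_single_sub_single {X : Type*} [MulAction G X] [DecidableEq X] (g : G) (x y : X) :
    permRep F G X g (Pi.single x 1 - Pi.single y 1) =
      Pi.single (g • x) 1 - Pi.single (g • y) 1 := by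
  rw [map_sub, permRep_single, permRep_single]

lemma mem_perpSub {X : Type*} [Fintype X] [DecidableEq X] {U : Submodule F (X → F)} {v : X → F} :
    v ∈ perpSub F U ↔ ∀ w ∈ U, w ⬝ᵥ v = 0 := by
  simp [perpSub, formMap, dotProduct]

section ZeroSum

variable {k : ℕ} {K : Type*} [Field K]

lemma mem_zeroSum {w : Fin k → F} : w ∈ zeroSum k F ↔ ∑ i, w i = 0 := by
  simp [zeroSum, sumFunctional]

lemma mem_constLine {w : Fin k → F} : w ∈ constLine k F ↔ ∀ i j, w i = w j := by
  rw [constLine, Submodule.mem_span_singleton]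
  refine ⟨?_, fun h => ?_⟩
  · rintro ⟨c, rfl⟩
    exact fun _ _ => rfl
  · rcases isEmpty_or_nonempty (Fin k) with _ | ⟨⟨o⟩⟩
    · exact ⟨0, Subsingleton.elim _ _⟩
    · exact ⟨w o, funext fun i => by simp [h i o]⟩

lemma constLine_le_zeroSum (hk : (k : F) = 0) : constLine k F ≤ zeroSum k F := by
  rw [constLine, Submodule.span_singleton_le_iff_mem, mem_zeroSum]
  simp [hk]

lemma zeroSum_le_of_single_sub_single_mem {W : Submodule F (Fin k → F)} (o : Fin k)
    (h : ∀ i, i ≠ o → Pi.single i 1 - Pi.single o 1 ∈ W) : zeroSum k F ≤ W := by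
  intro w hw
  rw [mem_zeroSum] at hw
  have hexpand : w = ∑ i, w i • (Pi.single i 1 - Pi.single o 1 : Fin k → F) := by
    simp only [smul_sub, Finset.sum_sub_distrib, ← Finset.sum_smul, hw, zero_smul, sub_zero]
    exact pi_eq_sum_univ' w
  rw [hexpand]
  refine W.sum_mem fun i _ => W.smul_mem _ ?_
  by_cases hi : i = o
  · simp [hi]
  · exact h i hi

lemma sub_permRep_swap (w : Fin k → F) (a b : Fin k) :
    w - permRep F (Perm (Fin k)) (Fin k) (swap a b) w =
      (w a - w b) • (Pi.single a 1 - Pi.single b 1) := by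
  ext i
  have hi : permRep F (Perm (Fin k)) (Fin k) (swap a b) w i = w (swap a b i) := by
    simp [permRep]
  rw [Pi.sub_apply, hi, swap_apply_def]
  by_cases hia : i = a <;> by_cases hib : i = b <;> simp_all

/-- James' submodule theorem for the partition `(k-1,1)`. -/
lemma le_constLine_or_zeroSum_le {W : Submodule K (Fin k → K)}
    (hW : InvSub (permRep K (Perm (Fin k)) (Fin k)) W) : W ≤ constLine k K ∨ zeroSum k K ≤ W := by
  refine or_iff_not_imp_left.mpr fun hconst => ?_
  obtain ⟨w, hw, hw_const⟩ := SetLike.not_le_iff_exists.mp hconst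
  obtain ⟨a, b, hab⟩ : ∃ a b, w a ≠ w b := by simpa [mem_constLine] using hw_const
  have hdiff : Pi.single a 1 - Pi.single b 1 ∈ W := by
    rw [← W.smul_mem_iff (sub_ne_zero.mpr hab), ← sub_permRep_swap]
    exact W.sub_mem hw (hW _ _ hw)
  refine zeroSum_le_of_single_sub_single_mem b fun i hi => ?_
  have hmoved := hW (swap a i) _ hdiff
  rwa [permRep_single_sub_single, Perm.smul_def, Perm.smul_def, swap_apply_left,
    swap_apply_of_ne_of_ne (ne_of_apply_ne w hab).symm hi.symm] at hmoved

lemma finrank_zeroSum [NeZero k] : Module.finrank K (zeroSum k K) = k - 1 := by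
  have hne : sumFunctional k K ≠ 0 := fun h => by
    simpa [sumFunctional] using LinearMap.congr_fun h (Pi.single 0 1)
  have h := Module.Dual.finrank_ker_add_one_of_ne_zero hne
  rw [Module.finrank_fin_fun] at h
  exact Nat.eq_sub_of_add_eq h

lemma finrank_constLine [NeZero k] : Module.finrank K (constLine k K) = 1 :=
  finrank_span_singleton fun h => one_ne_zero (congrFun h 0)

lemma finrank_zeroSum_quotient [NeZero k] (hk : (k : K) = 0) :
    Module.finrank K (zeroSum k K ⧸ (constLine k K).comap (zeroSum k K).subtype) = k - 2 := by
  have h := Submodule.finrank_quotient_add_finrank ((constLine k K).comap (zeroSum k K).subtype)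
  rw [(Submodule.comapSubtypeEquivOfLe (constLine_le_zeroSum hk)).finrank_eq, finrank_constLine,
    finrank_zeroSum] at h
  lia

end ZeroSum

section Tabloids

variable {k : ℕ}

/-- A function on `(k-2,1,1)`-tabloids as a matrix with zero diagonal. -/
def toMatrix (k : ℕ) (F : Type*) [CommRing F] :
    (OP k → F) →ₗ[F] Matrix (Fin k) (Fin k) F where
  toFun v := .of fun i j => if h : i ≠ j then v ⟨(i, j), h⟩ else 0
  map_add' v w := by
    ext i j
    by_cases h : i = j
    · simp [h]
    · simp only [Matrix.of_apply, Matrix.add_apply, dif_pos h]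
      rfl
  map_smul' c v := by
    ext i j
    by_cases h : i = j
    · simp [h]
    · simp only [Matrix.of_apply, Matrix.smul_apply, dif_pos h]
      rfl

lemma toMatrix_apply_OP (v : OP k → F) (q : OP k) : toMatrix k F v q.1.1 q.1.2 = v q :=
  dif_pos q.2

lemma toMatrix_apply_self (v : OP k → F) (i : Fin k) : toMatrix k F v i i = 0 :=
  dif_neg (not_not.mpr rfl)

lemma toMatrix_eq_of_forall_eq {v : OP k → F} {M : Matrix (Fin k) (Fin k) F}
    (hM : ∀ i, M i i = 0) (h : ∀ q : OP k, v q = M q.1.1 q.1.2) : toMatrix k F v = M := by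
  ext i j
  by_cases hij : i = j
  · rw [hij, toMatrix_apply_self, hM]
  · exact (toMatrix_apply_OP v ⟨(i, j), hij⟩).trans (h _)

lemma toMatrix_injective : Function.Injective (toMatrix k F) := fun v w h =>
  funext fun q => by rw [← toMatrix_apply_OP v, h, toMatrix_apply_OP]

lemma toMatrix_permRep (g : Perm (Fin k)) (v : OP k → F) :
    toMatrix k F (permRep F (Perm (Fin k)) (OP k) g v) =
      (toMatrix k F v).submatrix ⇑g⁻¹ ⇑g⁻¹ :=
  toMatrix_eq_of_forall_eq (fun _ => toMatrix_apply_self _ _)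
    fun q => (toMatrix_apply_OP v (g⁻¹ • q)).symm

lemma sum_OP {f : Fin k → Fin k → F} (hf : ∀ i, f i i = 0) :
    ∑ q : OP k, f q.1.1 q.1.2 = ∑ i, ∑ j, f i j := by
  rw [← Fintype.sum_prod_type']
  refine Fintype.sum_of_injective Subtype.val Subtype.val_injective _ _ (fun z hz => ?_)
    fun _ => rfl
  have hdiag : z.1 = z.2 := by_contra fun hne => hz ⟨⟨z, hne⟩, rfl⟩
  rw [hdiag, hf]

lemma sum_filter_fst_eq (v : OP k → F) (i : Fin k) :
    ∑ q ∈ Finset.univ.filter (fun q : OP k => q.1.1 = i), v q = ∑ j, toMatrix k F v i j := by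
  calc ∑ q ∈ Finset.univ.filter (fun q : OP k => q.1.1 = i), v q
      = ∑ q : OP k, if q.1.1 = i then toMatrix k F v q.1.1 q.1.2 else 0 := by
        simp only [Finset.sum_filter, toMatrix_apply_OP]
    _ = ∑ a, ∑ j, if a = i then toMatrix k F v a j else 0 :=
        sum_OP (f := fun a j => if a = i then toMatrix k F v a j else 0)
          fun a => by simp [toMatrix_apply_self]
    _ = ∑ j, toMatrix k F v i j := by
        rw [Finset.sum_comm]
        simp

lemma mem_spechtHook {v : OP k → F} : v ∈ spechtHook k F ↔
    (∀ i j, toMatrix k F v i j = -toMatrix k F v j i) ∧ toMatrix k F v *ᵥ 1 = 0 := by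
  simp only [spechtHook, antisymSub, rowZeroSub, Submodule.mem_inf, Submodule.mem_iInf,
    LinearMap.mem_ker, LinearMap.add_apply, LinearMap.sum_apply, LinearMap.proj_apply,
    sum_filter_fst_eq, funext_iff, Matrix.mulVec, dotProduct_one, Pi.zero_apply,
    add_eq_zero_iff_eq_neg]
  refine and_congr_left fun _ => ⟨fun h i j => ?_, fun h q => ?_⟩
  · by_cases hij : i = j
    · simp [hij, toMatrix_apply_self]
    · exact ((toMatrix_apply_OP v ⟨(i, j), hij⟩).trans (h _)).trans
        (congrArg Neg.neg (toMatrix_apply_OP v (swapOP ⟨(i, j), hij⟩)).symm)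
  · rw [← toMatrix_apply_OP v q, h, ← toMatrix_apply_OP v (swapOP q)]
    rfl

/-- The tabloid function `u ∧ w : (i, j) ↦ u i * w j - w i * u j`. It embeds the exterior square
of `F^k` into `M^(k-2,1,1)`. -/
def wedge (k : ℕ) (F : Type*) [CommRing F] :
    (Fin k → F) →ₗ[F] (Fin k → F) →ₗ[F] (OP k → F) :=
  LinearMap.mk₂ F (fun u w q => u q.1.1 * w q.1.2 - w q.1.1 * u q.1.2)
    (fun _ _ _ => by ext; simp only [Pi.add_apply]; ring)
    (fun _ _ _ => by ext; simp only [Pi.smul_apply, smul_eq_mul]; ring)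
    (fun _ _ _ => by ext; simp only [Pi.add_apply]; ring)
    (fun _ _ _ => by ext; simp only [Pi.smul_apply, smul_eq_mul]; ring)

lemma toMatrix_wedge (u w : Fin k → F) :
    toMatrix k F (wedge k F u w) = Matrix.vecMulVec u w - Matrix.vecMulVec w u :=
  toMatrix_eq_of_forall_eq (fun i => by simp [Matrix.vecMulVec_apply, mul_comm]) fun _ => rfl

lemma permRep_wedge (g : Perm (Fin k)) (u w : Fin k → F) :
    permRep F (Perm (Fin k)) (OP k) g (wedge k F u w) =
      wedge k F (permRep F (Perm (Fin k)) (Fin k) g u) (permRep F (Perm (Fin k)) (Fin k) g w) :=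
  rfl

lemma wedge_mem_spechtHook {u w : Fin k → F} (h : (∑ i, w i) • u = (∑ i, u i) • w) :
    wedge k F u w ∈ spechtHook k F := by
  rw [mem_spechtHook, toMatrix_wedge]
  refine ⟨fun i j => ?_, ?_⟩
  · simp only [Matrix.sub_apply, Matrix.vecMulVec_apply]
    ring
  · ext i
    simpa [Matrix.mulVec, dotProduct, Matrix.vecMulVec_apply, Finset.sum_sub_distrib,
      ← Finset.mul_sum, ← Finset.sum_mul, sub_eq_zero, mul_comm] using congrFun h i

lemma wedge_dotProduct (u w : Fin k → F) (v : OP k → F) :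
    wedge k F u w ⬝ᵥ v = u ⬝ᵥ (toMatrix k F v - (toMatrix k F v)ᵀ) *ᵥ w := by
  have hsum : wedge k F u w ⬝ᵥ v =
      ∑ i, ∑ j, (u i * w j - w i * u j) * toMatrix k F v i j := by
    rw [← sum_OP fun i => by simp [toMatrix_apply_self]]
    simp only [toMatrix_apply_OP]
    rfl
  have hcomm : ∑ i, ∑ j, w i * u j * toMatrix k F v i j =
      ∑ i, ∑ j, w j * u i * toMatrix k F v j i := Finset.sum_comm
  simp only [hsum, sub_mul, Finset.sum_sub_distrib, hcomm]
  simp only [dotProduct, Matrix.mulVec, Matrix.sub_apply, Matrix.transpose_apply, Finset.mul_sum,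
    ← Finset.sum_sub_distrib]
  exact Finset.sum_congr rfl fun i _ => Finset.sum_congr rfl fun j _ => by ring

end Tabloids

section Polytabloids

variable {k : ℕ}

/-- The polytabloid of the tableau of shape `(k-2,1,1)` with first column `a, b, c`, namely
`e_a ∧ e_b + e_b ∧ e_c + e_c ∧ e_a`. -/
def polytabloid (F : Type*) [CommRing F] (a b c : Fin k) : OP k → F :=
  wedge k F (Pi.single a 1 - Pi.single b 1) (Pi.single b 1 - Pi.single c 1)

lemma polytabloid_mem_spechtHook (a b c : Fin k) : polytabloid F a b c ∈ spechtHook k F :=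
  wedge_mem_spechtHook (by simp)

lemma permRep_polytabloid (g : Perm (Fin k)) (a b c : Fin k) :
    permRep F (Perm (Fin k)) (OP k) g (polytabloid F a b c) =
      polytabloid F (g a) (g b) (g c) := by
  rw [polytabloid, permRep_wedge, permRep_single_sub_single, permRep_single_sub_single]
  rfl

lemma polytabloid_dotProduct (a b c : Fin k) (v : OP k → F) :
    polytabloid F a b c ⬝ᵥ v =
      toMatrix k F v a b - toMatrix k F v b a + (toMatrix k F v b c - toMatrix k F v c b) +
        (toMatrix k F v c a - toMatrix k F v a c) := by
  simp only [polytabloid, wedge_dotProduct, Matrix.mulVec_sub, Matrix.mulVec_single_one,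
    sub_dotProduct, dotProduct_sub, single_one_dotProduct, Matrix.col_apply, Matrix.sub_apply,
    Matrix.transpose_apply]
  ring

lemma polytabloid_dotProduct_of_mem {v : OP k → F} (hv : v ∈ spechtHook k F) (a b c : Fin k) :
    polytabloid F a b c ⬝ᵥ v =
      2 * (toMatrix k F v a b + toMatrix k F v b c + toMatrix k F v c a) := by
  have hanti := (mem_spechtHook.mp hv).1
  rw [polytabloid_dotProduct, hanti b a, hanti c b, hanti a c]
  ring

/-- James' `κ_t`, the signed sum over the column stabilizer, for the tableau `t` of shape
`(k-2,1,1)` with first column `a, b, c`. -/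
def columnSymmetrizer (F : Type*) [CommRing F] (a b c : Fin k) : Module.End F (OP k → F) :=
  let ρ := permRep F (Perm (Fin k)) (OP k)
  1 - ρ (swap a b) - ρ (swap b c) - ρ (swap a c) + ρ (swap a b * swap b c) +
    ρ (swap b c * swap a b)

lemma columnSymmetrizer_mem {U : Submodule F (OP k → F)}
    (hU : InvSub (permRep F (Perm (Fin k)) (OP k)) U) (a b c : Fin k) {v : OP k → F}
    (hv : v ∈ U) : columnSymmetrizer F a b c v ∈ U :=
  have hρ (g : Perm (Fin k)) := hU g v hv
  U.add_mem (U.add_mem (U.sub_mem (U.sub_mem (U.sub_mem hv (hρ _)) (hρ _)) (hρ _)) (hρ _)) (hρ _)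

lemma columnSymmetrizer_apply {a b c : Fin k} (hab : a ≠ b) (hbc : b ≠ c) (hac : a ≠ c)
    (v : OP k → F) :
    columnSymmetrizer F a b c v = (polytabloid F a b c ⬝ᵥ v) • polytabloid F a b c := by
  refine toMatrix_injective (Matrix.ext fun x y => ?_)
  rw [polytabloid_dotProduct]
  simp only [columnSymmetrizer, polytabloid, LinearMap.add_apply,
    LinearMap.sub_apply, Module.End.one_apply, map_add, map_sub, map_smul, toMatrix_permRep,
    toMatrix_wedge, Matrix.add_apply, Matrix.sub_apply, Matrix.smul_apply, Matrix.submatrix_apply,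
    Matrix.vecMulVec_apply, mul_inv_rev, swap_inv, Perm.mul_apply, smul_eq_mul,
    Pi.single_apply]
  have hcases (z : Fin k) : z = a ∨ z = b ∨ z = c ∨ (z ≠ a ∧ z ≠ b ∧ z ≠ c) := by tauto
  rcases hcases x with rfl | rfl | rfl | ⟨hxa, hxb, hxc⟩ <;>
  rcases hcases y with rfl | rfl | rfl | ⟨hya, hyb, hyc⟩ <;>
  simp only [swap_apply_def, toMatrix_apply_self, if_true, if_false, *, Ne.symm, ne_eq,
    not_false_eq_true] <;>
  ring

end Polytabloids

section StandardBasis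

variable {k : ℕ} [NeZero k]

/-- Standard tableaux of shape `(k-2,1,1)`: the first column is `0, i, j` with `0 < i < j`. -/
abbrev StdHook (k : ℕ) [NeZero k] := {q : Fin k × Fin k // 0 < q.1 ∧ q.1 < q.2}

lemma card_stdHook : Fintype.card (StdHook k) = (k - 1).choose 2 := by
  obtain ⟨m, rfl⟩ := Nat.exists_eq_succ_of_ne_zero (NeZero.ne k)
  have hcol (j : Fin (m + 1)) :
      (Finset.univ.filter fun i => 0 < i ∧ i < j).card = (j : ℕ) - 1 := by
    rw [show (Finset.univ.filter fun i => 0 < i ∧ i < j) = Finset.Ioo 0 j by ext; simp,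
      Fin.card_Ioo, Fin.val_zero, Nat.sub_zero]
  rw [Fintype.card_subtype, Finset.card_filter, Fintype.sum_prod_type_right]
  simp only [← Finset.card_filter, hcol]
  rw [Fin.sum_univ_eq_sum_range fun j => j - 1, Finset.sum_range_succ']
  simp [Finset.sum_range_id, Nat.choose_two_right]

lemma toMatrix_polytabloid_std (x y : StdHook k) :
    toMatrix k F (polytabloid F 0 x.1.1 x.1.2) y.1.1 y.1.2 = if x = y then 1 else 0 := by
  obtain ⟨⟨i, j⟩, hi, hij⟩ := x
  obtain ⟨⟨a, b⟩, ha, hab⟩ := y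
  have hb_ne := (ha.trans hab).ne'
  have hswap : ¬ (b = i ∧ a = j) := fun h => lt_asymm hij (h.1 ▸ h.2 ▸ hab)
  simp only [polytabloid, toMatrix_wedge, Matrix.sub_apply, Matrix.vecMulVec_apply, Pi.sub_apply,
    Pi.single_apply, Subtype.mk.injEq, Prod.mk.injEq, eq_comm (a := i), eq_comm (a := j)]
  split_ifs <;> simp_all

lemma spechtHook_ext {v w : OP k → F} (hv : v ∈ spechtHook k F) (hw : w ∈ spechtHook k F)
    (h : ∀ x : StdHook k, toMatrix k F v x.1.1 x.1.2 = toMatrix k F w x.1.1 x.1.2) : v = w := by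
  rw [← sub_eq_zero]
  obtain ⟨hanti, hrow⟩ := mem_spechtHook.mp (Submodule.sub_mem _ hv hw)
  set M := toMatrix k F (v - w) with hM
  have hdiag (i : Fin k) : M i i = 0 := toMatrix_apply_self _ _
  have hlt {i j : Fin k} (hi : i ≠ 0) (hij : i < j) : M i j = 0 := by
    rw [hM, map_sub, Matrix.sub_apply, sub_eq_zero]
    exact h ⟨(i, j), Fin.pos_iff_ne_zero.mpr hi, hij⟩
  have hne {i j : Fin k} (hi : i ≠ 0) (hj : j ≠ 0) : M i j = 0 := by
    rcases lt_trichotomy i j with hij | rfl | hji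
    · exact hlt hi hij
    · exact hdiag i
    · rw [hanti, hlt hj hji, neg_zero]
  have hcol (i : Fin k) : M i 0 = 0 := by
    by_cases hi : i = 0
    · rw [hi, hdiag]
    · have hsum : ∑ j, M i j = 0 := by
        simpa [Matrix.mulVec, dotProduct_one] using congrFun hrow i
      rwa [Finset.sum_eq_single 0 (fun j _ hj => hne hi hj) (by simp)] at hsum
  refine toMatrix_injective (Matrix.ext fun i j => ?_)
  rw [map_zero, Matrix.zero_apply, ← hM]
  by_cases hj : j = 0
  · rw [hj, hcol]
  by_cases hi : i = 0
  · rw [hi, hanti, hcol, neg_zero]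
  · exact hne hi hj

lemma toMatrix_sum_smul_polytabloid (c : StdHook k → F) (y : StdHook k) :
    toMatrix k F (∑ x : StdHook k, c x • polytabloid F 0 x.1.1 x.1.2) y.1.1 y.1.2 = c y := by
  simp [Matrix.sum_apply, toMatrix_polytabloid_std]

lemma eq_sum_smul_polytabloid {v : OP k → F} (hv : v ∈ spechtHook k F) :
    v = ∑ x : StdHook k, toMatrix k F v x.1.1 x.1.2 • polytabloid F 0 x.1.1 x.1.2 :=
  spechtHook_ext hv
    (Submodule.sum_mem _ fun _ _ => Submodule.smul_mem _ _ (polytabloid_mem_spechtHook _ _ _))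
    fun y => (toMatrix_sum_smul_polytabloid (fun x => toMatrix k F v x.1.1 x.1.2) y).symm

/-- The basis of `S^(k-2,1,1)` consisting of the standard polytabloids. -/
noncomputable def polytabloidBasis (k : ℕ) [NeZero k] (F : Type*) [CommRing F] :
    Module.Basis (StdHook k) F (spechtHook k F) :=
  .ofEquivFun
    { toFun v x := toMatrix k F v x.1.1 x.1.2
      map_add' v w := by ext; simp
      map_smul' c v := by ext; simp
      invFun c := ∑ x : StdHook k, c x • ⟨_, polytabloid_mem_spechtHook 0 x.1.1 x.1.2⟩
      left_inv v := Subtype.ext <| by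
        simpa using (eq_sum_smul_polytabloid v.2).symm
      right_inv c := funext fun y => by
        simpa using toMatrix_sum_smul_polytabloid c y }

lemma finrank_spechtHook [StrongRankCondition F] :
    Module.finrank F (spechtHook k F) = (k - 1).choose 2 := by
  rw [Module.finrank_eq_card_basis (polytabloidBasis k F), card_stdHook]

lemma spechtHook_le_of_polytabloid_mem {U : Submodule F (OP k → F)}
    (hU : ∀ x : StdHook k, polytabloid F 0 x.1.1 x.1.2 ∈ U) : spechtHook k F ≤ U := by
  intro v hv
  rw [eq_sum_smul_polytabloid hv]
  exact U.sum_mem fun x _ => U.smul_mem _ (hU x)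

lemma mem_perpSub_spechtHook {v : OP k → F} : v ∈ perpSub F (spechtHook k F) ↔
    ∀ x : StdHook k, polytabloid F 0 x.1.1 x.1.2 ⬝ᵥ v = 0 := by
  refine mem_perpSub.trans
    ⟨fun h x => h _ (polytabloid_mem_spechtHook _ _ _), fun h w hw => ?_⟩
  rw [eq_sum_smul_polytabloid hw, sum_dotProduct]
  exact Finset.sum_eq_zero fun x _ => by rw [smul_dotProduct, h x, smul_zero]

end StandardBasis

section SubmoduleTheorem

variable {k : ℕ} {K : Type*} [Field K]

lemma exists_perm_map_triple {α : Type*} {a b c x y z : α} (hab : a ≠ b) (hbc : b ≠ c)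
    (hac : a ≠ c) (hxy : x ≠ y) (hyz : y ≠ z) (hxz : x ≠ z) :
    ∃ g : Perm α, g a = x ∧ g b = y ∧ g c = z := by
  have hinj {a b c : α} (hab : a ≠ b) (hbc : b ≠ c) (hac : a ≠ c) :
      Function.Injective ![a, b, c] := by
    simp [Function.Injective, Fin.forall_fin_succ, *, Ne.symm]
  have := Perm.isMultiplyPretransitive α 3
  obtain ⟨g, hg⟩ := MulAction.exists_smul_eq (Perm α)
    (⟨_, hinj hab hbc hac⟩ : Fin 3 ↪ α) ⟨_, hinj hxy hyz hxz⟩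
  exact ⟨g, DFunLike.congr_fun hg 0, DFunLike.congr_fun hg 1, DFunLike.congr_fun hg 2⟩

/-- James' submodule theorem for the partition `(k-2,1,1)`. -/
lemma spechtHook_le_or_le_perpSub [NeZero k] {U : Submodule K (OP k → K)}
    (hU : InvSub (permRep K (Perm (Fin k)) (OP k)) U) :
    spechtHook k K ≤ U ∨ U ≤ perpSub K (spechtHook k K) := by
  refine or_iff_not_imp_right.mpr fun hperp => ?_
  obtain ⟨v, hv, hv_perp⟩ := SetLike.not_le_iff_exists.mp hperp
  obtain ⟨⟨⟨i, j⟩, hi, hij⟩, hpair⟩ :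
      ∃ x : StdHook k, polytabloid K 0 x.1.1 x.1.2 ⬝ᵥ v ≠ 0 := by
    simpa only [mem_perpSub_spechtHook, not_forall] using hv_perp
  have hmem : polytabloid K 0 i j ∈ U := by
    rw [← U.smul_mem_iff hpair, ← columnSymmetrizer_apply hi.ne hij.ne (hi.trans hij).ne]
    exact columnSymmetrizer_mem hU _ _ _ hv
  refine spechtHook_le_of_polytabloid_mem fun ⟨⟨a, b⟩, ha, hab⟩ => ?_
  obtain ⟨g, h₀, hia, hjb⟩ := exists_perm_map_triple hi.ne hij.ne (hi.trans hij).ne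
    ha.ne hab.ne (ha.trans hab).ne
  have hmoved := hU g _ hmem
  rwa [permRep_polytabloid, h₀, hia, hjb] at hmoved

end SubmoduleTheorem

section HookSocle

variable {k : ℕ} {K : Type*} [Field K]

/-- The map `w ↦ w ∧ 1`, that is `(i, j) ↦ w i - w j`, from `F^k` to `M^(k-2,1,1)`. -/
noncomputable def diffMap (k : ℕ) (F : Type*) [CommRing F] : (Fin k → F) →ₗ[F] (OP k → F) :=
  (wedge k F).flip 1

/-- The image of `S^(k-1,1)` under `diffMap`; for `k > 3` and odd characteristic dividing `k` it is
both the socle and the radical of `S^(k-2,1,1)`. -/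
noncomputable def hookSocle (k : ℕ) (F : Type*) [CommRing F] : Submodule F (OP k → F) :=
  (zeroSum k F).map (diffMap k F)

lemma diffMap_apply (w : Fin k → F) (q : OP k) : diffMap k F w q = w q.1.1 - w q.1.2 := by
  simp [diffMap, wedge]

lemma diffMap_permRep (g : Perm (Fin k)) (w : Fin k → F) :
    diffMap k F (permRep F (Perm (Fin k)) (Fin k) g w) =
      permRep F (Perm (Fin k)) (OP k) g (diffMap k F w) :=
  rfl

lemma ker_diffMap : LinearMap.ker (diffMap k F) = constLine k F := by
  ext w
  simp only [LinearMap.mem_ker, mem_constLine, funext_iff, diffMap_apply, Pi.zero_apply,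
    sub_eq_zero]
  refine ⟨fun h i j => ?_, fun h q => h _ _⟩
  by_cases hij : i = j
  · rw [hij]
  · exact h ⟨(i, j), hij⟩

lemma hookSocle_inv : InvSub (permRep F (Perm (Fin k)) (OP k)) (hookSocle k F) := by
  rintro g _ ⟨w, hw, rfl⟩
  exact ⟨_, zeroSum_inv k F g w hw, diffMap_permRep g w⟩

lemma hookSocle_le_spechtHook (hk : (k : F) = 0) : hookSocle k F ≤ spechtHook k F := by
  rintro _ ⟨w, hw, rfl⟩
  refine wedge_mem_spechtHook ?_
  rw [mem_zeroSum.mp hw]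
  simp [hk]

lemma hookSocle_le_perpSub : hookSocle k F ≤ perpSub F (spechtHook k F) := by
  rintro _ ⟨w, -, rfl⟩
  refine mem_perpSub.mpr fun v hv => ?_
  obtain ⟨hanti, hrow⟩ := mem_spechtHook.mp hv
  have htranspose : (toMatrix k F v)ᵀ = -toMatrix k F v := Matrix.ext fun i j => hanti j i
  rw [dotProduct_comm, diffMap, LinearMap.flip_apply, wedge_dotProduct, htranspose,
    Matrix.sub_mulVec, Matrix.neg_mulVec, hrow, neg_zero, sub_zero, dotProduct_zero]

lemma mem_hookSocle_of_cyclic_sum_eq_zero [NeZero k] {v : OP k → F} (hv : v ∈ spechtHook k F)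
    (h : ∀ a b c, toMatrix k F v a b + toMatrix k F v b c + toMatrix k F v c a = 0) :
    v ∈ hookSocle k F := by
  obtain ⟨hanti, hrow⟩ := mem_spechtHook.mp hv
  refine ⟨fun i => toMatrix k F v i 0, mem_zeroSum.mpr ?_, funext fun q => ?_⟩
  · simpa [hanti _ 0, Matrix.mulVec, dotProduct_one] using congrFun hrow 0
  · rw [diffMap_apply, ← toMatrix_apply_OP v q]
    linear_combination -h q.1.1 q.1.2 0 + hanti 0 q.1.1

lemma spechtHook_inf_perpSub [NeZero k] (hchar : (2 : K) ≠ 0) (hk : (k : K) = 0) :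
    spechtHook k K ⊓ perpSub K (spechtHook k K) = hookSocle k K := by
  refine le_antisymm ?_ (le_inf (hookSocle_le_spechtHook hk) hookSocle_le_perpSub)
  rintro v ⟨hv, hperp⟩
  refine mem_hookSocle_of_cyclic_sum_eq_zero hv fun a b c => ?_
  have hpair := mem_perpSub.mp hperp _ (polytabloid_mem_spechtHook a b c)
  rw [polytabloid_dotProduct_of_mem hv] at hpair
  exact (mul_eq_zero.mp hpair).resolve_left hchar

lemma le_hookSocle_of_ne_spechtHook [NeZero k] (hchar : (2 : K) ≠ 0) (hk : (k : K) = 0)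
    {U : Submodule K (OP k → K)} (hUS : U ≤ spechtHook k K)
    (hU : InvSub (permRep K (Perm (Fin k)) (OP k)) U) (hne : U ≠ spechtHook k K) :
    U ≤ hookSocle k K := by
  rw [← spechtHook_inf_perpSub hchar hk]
  exact le_inf hUS <| (spechtHook_le_or_le_perpSub hU).resolve_left
    fun hSU => hne (le_antisymm hUS hSU)

lemma hookSocle_le_of_ne_bot [NeZero k] (hchar : (2 : K) ≠ 0) (hk : (k : K) = 0)
    {U : Submodule K (OP k → K)} (hUS : U ≤ spechtHook k K)
    (hU : InvSub (permRep K (Perm (Fin k)) (OP k)) U) (hne : U ≠ ⊥) : hookSocle k K ≤ U := by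
  by_cases hUS_eq : U = spechtHook k K
  · exact hUS_eq ▸ hookSocle_le_spechtHook hk
  have hcomap : InvSub (permRep K (Perm (Fin k)) (Fin k)) (U.comap (diffMap k K)) :=
    fun g w hw => hU g _ hw
  rcases le_constLine_or_zeroSum_le hcomap with hconst | hzero
  · rw [← ker_diffMap] at hconst
    refine absurd ((Submodule.eq_bot_iff U).mpr fun u hu => ?_) hne
    obtain ⟨w, -, rfl⟩ := le_hookSocle_of_ne_spechtHook hchar hk hUS hU hUS_eq hu
    exact hconst hu
  · exact Submodule.map_le_iff_le_comap.mpr hzero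

lemma finrank_hookSocle [NeZero k] (hk : (k : K) = 0) :
    Module.finrank K (hookSocle k K) = k - 2 := by
  obtain ⟨ψ, hψ, hrange, -⟩ := exists_injective_range_eq_map diffMap_permRep (zeroSum_inv k K)
    (constLine_comap_inv k K) (by rw [ker_diffMap])
  rw [hookSocle, ← hrange, LinearMap.finrank_range_of_inj hψ, finrank_zeroSum_quotient hk]

lemma hookSocle_ne_bot [NeZero k] (hk : (k : K) = 0) (hk_lt : 2 < k) : hookSocle k K ≠ ⊥ := by
  rw [← Submodule.one_le_finrank_iff, finrank_hookSocle hk]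
  lia

lemma choose_two_pred (n : ℕ) : (n - 1).choose 2 = (n - 2) + (n - 2).choose 2 := by
  rcases n with _ | _ | m
  · rfl
  · rfl
  · rw [← Nat.choose_one_right m]
    simpa using Nat.choose_succ_succ' m 1

lemma finrank_spechtHook_quotient [NeZero k] (hchar : (2 : K) ≠ 0) (hk : (k : K) = 0) :
    Module.finrank K (spechtHook k K ⧸
      (spechtHook k K ⊓ perpSub K (spechtHook k K)).comap (spechtHook k K).subtype) =
        (k - 2).choose 2 := by
  rw [spechtHook_inf_perpSub hchar hk]
  have h := Submodule.finrank_quotient_add_finrank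
    ((hookSocle k K).comap (spechtHook k K).subtype)
  rw [(Submodule.comapSubtypeEquivOfLe (hookSocle_le_spechtHook hk)).finrank_eq,
    finrank_spechtHook, finrank_hookSocle hk, choose_two_pred] at h
  lia

lemma hookSocle_ne_spechtHook [NeZero k] (hk : (k : K) = 0) (hk_lt : 3 < k) :
    hookSocle k K ≠ spechtHook k K := by
  intro heq
  have h := finrank_spechtHook (k := k) (F := K)
  rw [← heq, finrank_hookSocle hk, choose_two_pred] at h
  have hpos : 0 < (k - 2).choose 2 := Nat.choose_pos (by lia)
  lia

lemma spechtHook_inf_perpSub_comap_inv (k : ℕ) (F : Type*) [CommRing F] :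
    InvSub (subRep (permRep F (Perm (Fin k)) (OP k)) (spechtHook k F) (spechtHook_inv k F))
      ((spechtHook k F ⊓ perpSub F (spechtHook k F)).comap (spechtHook k F).subtype) :=
  fun g v hv => spechtHook_perp_inv k F g v hv

end HookSocle

theorem spechtHook_structure_general {k : ℕ} {K : Type*} [Field K] (hk : 3 < k)
    (hchar : (2 : K) ≠ 0) (hk0 : (k : K) = 0) :
    Module.finrank K (spechtHook k K) = (k - 1) * (k - 2) / 2 ∧
    Module.finrank K (zeroSum k K ⧸ (constLine k K).comap (zeroSum k K).subtype) = k - 2 ∧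
    Module.finrank K (spechtHook k K ⧸
      (spechtHook k K ⊓ perpSub K (spechtHook k K)).comap (spechtHook k K).subtype) =
        (k - 2) * (k - 3) / 2 ∧
    IsIndecomposableSub (permRep K (Perm (Fin k)) (OP k)) (spechtHook k K) ∧
    (∃ ψ : (zeroSum k K ⧸ (constLine k K).comap (zeroSum k K).subtype) →ₗ[K] (OP k → K),
      Function.Injective ψ ∧
      LinearMap.range ψ = socIn (permRep K (Perm (Fin k)) (OP k)) (spechtHook k K) ∧
      ∀ g x, ψ (quotRep _ _ (constLine_comap_inv k K) g x) =
        permRep K (Perm (Fin k)) (OP k) g (ψ x)) ∧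
    (∃ φ : (OP k → K) →ₗ[K] spechtHook k K ⧸
        (spechtHook k K ⊓ perpSub K (spechtHook k K)).comap (spechtHook k K).subtype,
      (spechtHook k K).map φ = ⊤ ∧
      LinearMap.ker φ ⊓ spechtHook k K =
        radIn (permRep K (Perm (Fin k)) (OP k)) (spechtHook k K) ∧
      ∀ g, ∀ v ∈ spechtHook k K, φ (permRep K (Perm (Fin k)) (OP k) g v) =
        quotRep _ _ (spechtHook_inf_perpSub_comap_inv k K) g (φ v)) := by
  have : NeZero k := ⟨by lia⟩
  have hle := hookSocle_le_spechtHook hk0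
  have hbot := hookSocle_ne_bot hk0 (by lia)
  have htop := hookSocle_ne_spechtHook hk0 hk
  have hmin := fun U => hookSocle_le_of_ne_bot (U := U) hchar hk0
  have hmax := fun U => le_hookSocle_of_ne_spechtHook (U := U) hchar hk0
  refine ⟨?_, finrank_zeroSum_quotient hk0, ?_, isIndecomposableSub_of_forall_le hbot hmin, ?_, ?_⟩
  · rw [finrank_spechtHook, Nat.choose_two_right, Nat.sub_sub]
  · rw [finrank_spechtHook_quotient hchar hk0, Nat.choose_two_right, Nat.sub_sub]
  · rw [socIn_eq_of_forall_le hle hookSocle_inv hbot hmin]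
    exact exists_injective_range_eq_map diffMap_permRep (zeroSum_inv k K)
      (constLine_comap_inv k K) (by rw [ker_diffMap])
  · rw [radIn_eq_of_forall_le hle hookSocle_inv htop hmax, ← spechtHook_inf_perpSub hchar hk0]
    simpa only [inf_right_comm _ _ (spechtHook k K), inf_idem] using
      exists_map_eq_top_ker_inf_eq (spechtHook_inv k K) (spechtHook_inf_perpSub_comap_inv k K)

/-- **(Guralnick–Liebeck, Lemma 3.1; cf. Peel.)** Let `p` be an odd prime dividing `k`,
`k ≥ 10`, and `F = 𝔽_p`. The Specht module `S = S^(k-2,1,1)` for `S_k` over `F` has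
dimension `(k-1)(k-2)/2`; it is indecomposable, its socle is isomorphic (as an
`S_k`-module) to the irreducible module `L = D^(k-1,1)` of dimension `k-2`, and its head
is isomorphic to the irreducible module `D = D^(k-2,1,1)` of dimension `(k-2)(k-3)/2`. -/
theorem spechtHook_structure
    (k p : ℕ) (hk : 10 ≤ k) (hp : p.Prime) [Fact p.Prime] (hodd : Odd p) (hdvd : p ∣ k) :
    -- dimensions
    Module.finrank (ZMod p) (spechtHook k (ZMod p)) = (k - 1) * (k - 2) / 2 ∧
    Module.finrank (ZMod p) (Dk11 k p) = k - 2 ∧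
    Module.finrank (ZMod p) (Dk211 k p) = (k - 2) * (k - 3) / 2 ∧
    -- `S` is indecomposable
    IsIndecomposableSub (permRep (ZMod p) (Equiv.Perm (Fin k)) (OP k))
      (spechtHook k (ZMod p)) ∧
    -- the socle of `S` is isomorphic to `L = D^(k-1,1)`:
    -- an injective equivariant map `L → M^(k-2,1,1)` with image the socle of `S`
    (∃ ψ : Dk11 k p →ₗ[ZMod p] (OP k → ZMod p),
      Function.Injective ψ ∧
      LinearMap.range ψ =
        socIn (permRep (ZMod p) (Equiv.Perm (Fin k)) (OP k)) (spechtHook k (ZMod p)) ∧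
      ∀ (g : Equiv.Perm (Fin k)) (x : Dk11 k p),
        ψ (Dk11Rep k p g x) = permRep (ZMod p) (Equiv.Perm (Fin k)) (OP k) g (ψ x)) ∧
    -- the head of `S` is isomorphic to `D = D^(k-2,1,1)`:
    -- an equivariant map defined on `S`, surjective from `S`, with kernel the radical
    (∃ φ : (OP k → ZMod p) →ₗ[ZMod p] Dk211 k p,
      (spechtHook k (ZMod p)).map φ = ⊤ ∧
      LinearMap.ker φ ⊓ spechtHook k (ZMod p) =
        radIn (permRep (ZMod p) (Equiv.Perm (Fin k)) (OP k)) (spechtHook k (ZMod p)) ∧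
      ∀ (g : Equiv.Perm (Fin k)) (v : OP k → ZMod p), v ∈ spechtHook k (ZMod p) →
        φ (permRep (ZMod p) (Equiv.Perm (Fin k)) (OP k) g v) = Dk211Rep k p g (φ v)) := by
  have hchar : ringChar (ZMod p) ≠ 2 := by
    rw [ZMod.ringChar_zmod_n]
    exact hodd.ne_two_of_dvd_nat dvd_rfl
  exact spechtHook_structure_general (by lia) (Ring.two_ne_zero hchar)
    ((ZMod.natCast_eq_zero_iff k p).mpr hdvd)
end
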